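/- Let 1 → K → G →^π Q → 1 be an exact sequence of infinite hyperbolic groups, let Q₁ < Q be a qi embedded subgroup, and let G₁ = π⁻¹(Q₁) (which is hyperbolic). Suppose H is a qi embedded subgroup of G₁ with [G₁ : H] = ∞, and suppose H is not qi embedded in G. Then there is a finitely generated, infinite subgroup K₁ of K ∩ H such that Λ_K(K₁) ≠ ∂K, [K : K₁] = ∞, and K₁ is distorted in G. -/

import Mathlib

/-! ### Core coarse-geometric definitions
Gromov products, hyperbolicity, Gromov boundaries, Cannon–Thurston maps,
word metrics, quasi-isometric embeddings, laminations. -/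

/-- The Gromov product of `x` and `y` with respect to the basepoint `o`,
for a distance function `d`. -/
noncomputable def gprod {X : Type*} (d : X → X → ℝ) (o x y : X) : ℝ :=
  (d x o + d y o - d x y) / 2

/-- A distance function is (Gromov) hyperbolic: the four point condition. -/
def IsHypD {X : Type*} (d : X → X → ℝ) : Prop :=
  ∃ δ : ℝ, 0 ≤ δ ∧ ∀ o x y z : X,
    min (gprod d o x y) (gprod d o y z) ≤ gprod d o x z + δ

/-- A sequence tends to infinity if its Gromov products tend to infinity. -/
def SeqToInf {X : Type*} (d : X → X → ℝ) (s : ℕ → X) : Prop :=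
  ∀ (o : X) (M : ℝ), ∃ N : ℕ, ∀ m n : ℕ, N ≤ m → N ≤ n → M ≤ gprod d o (s m) (s n)

/-- Two sequences tending to infinity determine the same boundary point. -/
def SeqFellow {X : Type*} (d : X → X → ℝ) (s t : ℕ → X) : Prop :=
  ∀ (o : X) (M : ℝ), ∃ N : ℕ, ∀ m n : ℕ, N ≤ m → N ≤ n → M ≤ gprod d o (s m) (t n)

/-- Sequences in `X` tending to infinity. -/
def BdryPre {X : Type*} (d : X → X → ℝ) : Type _ := { s : ℕ → X // SeqToInf d s }

/-- The (sequential model of the) Gromov boundary of `(X, d)`. -/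
def Bdry {X : Type*} (d : X → X → ℝ) : Type _ :=
  Quot fun s t : BdryPre d => SeqFellow d s.1 t.1

/-- The boundary point represented by a sequence tending to infinity. -/
def Bdry.mk {X : Type*} {d : X → X → ℝ} (s : BdryPre d) : Bdry d := Quot.mk _ s

/-- A sequence in `X` converges to the boundary point `ξ`. -/
def ConvTo {X : Type*} (d : X → X → ℝ) (s : ℕ → X) (ξ : Bdry d) : Prop :=
  ∃ h : SeqToInf d s, Bdry.mk ⟨s, h⟩ = ξ

/-- The visual topology on the Gromov boundary. -/
noncomputable instance bdryTopology {X : Type*} (d : X → X → ℝ) :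
    TopologicalSpace (Bdry d) :=
  TopologicalSpace.generateFrom
    { U | ∃ (o : X) (M : ℝ) (s : BdryPre d),
        U = { η | ∃ t : BdryPre d, Bdry.mk t = η ∧
          ∀ m n : ℕ, M ≤ gprod d o (s.1 m) (t.1 n) } }

/-- `g` is a Cannon–Thurston map for `f : (Y,dY) → (X,dX)`: it is continuous and,
whenever a sequence in `Y` converges to a boundary point `ξ`, the image sequence
converges to `g ξ`. -/
def IsCTMapD {Y X : Type*} (dY : Y → Y → ℝ) (dX : X → X → ℝ)
    (f : Y → X) (g : Bdry dY → Bdry dX) : Prop :=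
  Continuous g ∧
    ∀ (s : ℕ → Y) (ξ : Bdry dY), ConvTo dY s ξ → ConvTo dX (fun n => f (s n)) (g ξ)

/-- `f : (Y,dY) → (X,dX)` admits a Cannon–Thurston map. -/
def AdmitsCT {Y X : Type*} (dY : Y → Y → ℝ) (dX : X → X → ℝ) (f : Y → X) : Prop :=
  ∃ g, IsCTMapD dY dX f g

/-- The limit set of `A ⊆ X` in the Gromov boundary of `(X,d)`. -/
def limitSetD {X : Type*} (d : X → X → ℝ) (A : Set X) : Set (Bdry d) :=
  { ξ | ∃ s : ℕ → X, (∀ n, s n ∈ A) ∧ ConvTo d s ξ }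

/-- Quasi-isometric embedding with multiplicative/additive constant `k`. -/
def IsQIEmbWith {Y X : Type*} (dY : Y → Y → ℝ) (dX : X → X → ℝ) (k : ℝ) (f : Y → X) : Prop :=
  ∀ y y' : Y, dY y y' / k - k ≤ dX (f y) (f y') ∧ dX (f y) (f y') ≤ k * dY y y' + k

/-- Quasi-isometric embedding. -/
def IsQIEmbD {Y X : Type*} (dY : Y → Y → ℝ) (dX : X → X → ℝ) (f : Y → X) : Prop :=
  ∃ k : ℝ, 1 ≤ k ∧ IsQIEmbWith dY dX k f

/-- `A` is contained in a finite (`d`-)neighborhood of `B`. -/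
def InFiniteNbhd {X : Type*} (d : X → X → ℝ) (A B : Set X) : Prop :=
  ∃ D : ℝ, ∀ a ∈ A, ∃ b ∈ B, d a b ≤ D

/-- The word length of `g` with respect to `S` (inverses of generators allowed). -/
noncomputable def wordLength {G : Type*} [Group G] (S : Set G) (g : G) : ℕ :=
  sInf { n : ℕ | ∃ l : List G, (∀ x ∈ l, x ∈ S ∨ x⁻¹ ∈ S) ∧ l.length = n ∧ l.prod = g }

/-- The word metric on `G` with respect to `S`. -/
noncomputable def wordDist {G : Type*} [Group G] (S : Set G) (g h : G) : ℝ :=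
  wordLength S (g⁻¹ * h)

/-- `S` is a finite generating set of `G`. -/
def GenSet {G : Type*} [Group G] (S : Set G) : Prop :=
  S.Finite ∧ Subgroup.closure S = ⊤

/-- A finitely generated group is hyperbolic if some (equivalently, any) of its
word metrics with respect to a finite generating set is Gromov hyperbolic. -/
def IsHypGroup (G : Type*) [Group G] : Prop :=
  ∃ S : Set G, GenSet S ∧ IsHypD (wordDist S)

/-- The standard distance on `ℤ` (to parametrize (quasi)geodesic lines). -/
noncomputable def zdist : ℤ → ℤ → ℝ := fun m n => |(m : ℝ) - (n : ℝ)|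

/-- A quasigeodesic line in `(Y,dY)`. -/
def IsQGLine {Y : Type*} (dY : Y → Y → ℝ) (α : ℤ → Y) : Prop :=
  IsQIEmbD zdist dY α

/-- `α` is a leaf of the Cannon–Thurston lamination of `f`, whose CT map is `g`:
a quasigeodesic line whose two distinct endpoints at infinity are identified by `g`. -/
def IsLeafD {Y X : Type*} (dY : Y → Y → ℝ) (dX : X → X → ℝ)
    (f : Y → X) (g : Bdry dY → Bdry dX) (α : ℤ → Y) : Prop :=
  IsQGLine dY α ∧
  ∃ ξp ξm : Bdry dY,
    ConvTo dY (fun n : ℕ => α (n : ℤ)) ξp ∧ ConvTo dY (fun n : ℕ => α (-(n : ℤ))) ξm ∧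
    ξp ≠ ξm ∧ g ξp = g ξm

/-- A finitely generated subgroup `H ≤ G` is qi embedded (= quasiconvex when `G` is
hyperbolic, = undistorted): the inclusion is a quasi-isometric embedding for word
metrics coming from finite generating sets (this does not depend on the choices). -/
def QIEmbSubgroup {G : Type*} [Group G] (H : Subgroup G) : Prop :=
  ∃ (S : Set G) (T : Set ↥H), GenSet S ∧ GenSet T ∧
    IsQIEmbD (wordDist T) (wordDist S) (Subtype.val : ↥H → G)

/-- A group is virtually cyclic (elementary). -/
def VirtCyclic (G : Type*) [Group G] : Prop :=
  ∃ H : Subgroup G, (∃ g : G, H = Subgroup.zpowers g) ∧ H.index ≠ 0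

/-- A geodesic metric space. -/
def IsGeodesicMS (X : Type*) [MetricSpace X] : Prop :=
  ∀ x y : X, ∃ γ : ℝ → X, γ 0 = x ∧ γ (dist x y) = y ∧
    ∀ s ∈ Set.Icc (0:ℝ) (dist x y), ∀ t ∈ Set.Icc (0:ℝ) (dist x y),
      dist (γ s) (γ t) = |s - t|


/-! ### Part A: generic coarse geometry -/

namespace CG

/-- `d` is a pseudometric. -/
structure Met {X : Type*} (d : X → X → ℝ) : Prop where
  self : ∀ x, d x x = 0
  symm : ∀ x y, d x y = d y x
  tri : ∀ x y z, d x z ≤ d x y + d y z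

/-- Discrete geodesic (pseudo)metric. -/
structure Geo {X : Type*} (d : X → X → ℝ) : Prop extends Met d where
  geo : ∀ x y, ∃ (n : ℕ) (p : ℕ → X), p 0 = x ∧ p n = y ∧
    ∀ i j, i ≤ j → j ≤ n → d (p i) (p j) = (j : ℝ) - i

/-- Four point condition in linear form. -/
structure Hyp {X : Type*} (d : X → X → ℝ) (δ : ℝ) : Prop where
  nn : 0 ≤ δ
  four : ∀ o x y z, d x z + d y o ≤ d x y + d z o + 2 * δ ∨ d x z + d y o ≤ d y z + d x o + 2 * δ

/-- `m` is `c`-between `x` and `y`. -/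
def Btw {X : Type*} (d : X → X → ℝ) (c : ℝ) (x m y : X) : Prop :=
  d x m + d m y ≤ d x y + 2 * c

theorem Met.nonneg {X : Type*} {d : X → X → ℝ} (h : Met d) (x y : X) : 0 ≤ d x y := by
  have h1 := h.tri x y x
  rw [h.self, h.symm y x] at h1; linarith

theorem Btw.nonneg {X : Type*} {d : X → X → ℝ} {c : ℝ} {x m y : X} (hd : Met d)
    (h : Btw d c x m y) : 0 ≤ c := by
  unfold Btw at h; linarith [hd.tri x m y]

theorem Btw.mono {X : Type*} {d : X → X → ℝ} {c c' : ℝ} {x m y : X}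
    (h : Btw d c x m y) (hc : c ≤ c') : Btw d c' x m y := by
  unfold Btw at *; linarith

theorem Btw.symm {X : Type*} {d : X → X → ℝ} {c : ℝ} {x m y : X} (hd : Met d)
    (h : Btw d c x m y) : Btw d c y m x := by
  unfold Btw at *; rw [hd.symm y m, hd.symm m x, hd.symm y x]; linarith

theorem Btw.left {X : Type*} {d : X → X → ℝ} {c : ℝ} {x y : X} (hd : Met d) (hc : 0 ≤ c) :
    Btw d c x x y := by
  unfold Btw; rw [hd.self]; linarith

theorem Btw.right {X : Type*} {d : X → X → ℝ} {c : ℝ} {x y : X} (hd : Met d) (hc : 0 ≤ c) :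
    Btw d c x y y := by
  unfold Btw; rw [hd.self]; linarith

/-- moving the middle point -/
theorem Btw.mid {X : Type*} {d : X → X → ℝ} {c e : ℝ} {x m m' y : X} (hd : Met d)
    (h : Btw d c x m y) (he : d m m' ≤ e) : Btw d (c + e) x m' y := by
  unfold Btw at *
  linarith [hd.tri x m m', hd.tri m' m y, hd.symm m m']

theorem Btw.end_left {X : Type*} {d : X → X → ℝ} {c e : ℝ} {x x' m y : X} (hd : Met d)
    (h : Btw d c x m y) (he : d x x' ≤ e) : Btw d (c + e) x' m y := by
  unfold Btw at *
  linarith [hd.tri x' x m, hd.tri x x' y, hd.symm x x']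

theorem Btw.end_right {X : Type*} {d : X → X → ℝ} {c e : ℝ} {x m y y' : X} (hd : Met d)
    (h : Btw d c x m y) (he : d y y' ≤ e) : Btw d (c + e) x m y' := by
  unfold Btw at *
  linarith [hd.tri m y y', hd.tri x y' y, hd.symm y y']

theorem gprod_min {X : Type*} {d : X → X → ℝ} {δ : ℝ} (h : Hyp d δ) (o x y z : X) (B : ℝ)
    (h1 : B ≤ gprod d o x y) (h2 : B ≤ gprod d o y z) : B - δ ≤ gprod d o x z := by
  unfold gprod at *
  rcases h.four o x y z with h | h <;> linarith

theorem gprod_symm {X : Type*} {d : X → X → ℝ} (h : Met d) (o x y : X) :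
    gprod d o x y = gprod d o y x := by
  unfold gprod; rw [h.symm x y]; ring

/-- chain lemma -/
theorem log_chain {X : Type*} {d : X → X → ℝ} {δ : ℝ} (h : Hyp d δ) (f : ℕ → X) (o : X) (B : ℝ)
    (m : ℕ) : ∀ i j : ℕ, i < j → j ≤ i + 2 ^ m →
      (∀ l, i ≤ l → l < j → B ≤ gprod d o (f l) (f (l + 1))) →
      B - m * δ ≤ gprod d o (f i) (f j) := by
  induction m with
  | zero =>
    intro i j hij hj hs
    have : j = i + 1 := by simp at hj; omega
    subst this
    simpa using hs i le_rfl (by omega)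
  | succ m ih =>
    intro i j hij hj hs
    have hδ := h.nn
    by_cases hc : j ≤ i + 2 ^ m
    · have := ih i j hij hc hs
      push_cast; linarith
    · have hp : 0 < 2 ^ m := by positivity
      have e : 2 ^ (m + 1) = 2 ^ m + 2 ^ m := by ring
      have h1 := ih i (i + 2 ^ m) (by omega) le_rfl (fun l hl hl' => hs l hl (by omega))
      have h2 := ih (i + 2 ^ m) j (by omega) (by omega) (fun l hl hl' => hs l (by omega) hl')
      have := gprod_min h o _ _ _ _ h1 h2
      push_cast; linarith

theorem log_any {X : Type*} {d : X → X → ℝ} {δ : ℝ} (hd : Met d) (h : Hyp d δ) (f : ℕ → X) (o : X)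
    (B : ℝ) (m n : ℕ) (hs : ∀ l, l < n → B ≤ gprod d o (f l) (f (l + 1)))
    (hb : ∀ l, l ≤ n → B ≤ d (f l) o) (i j : ℕ) (hi : i ≤ n) (hj : j ≤ n)
    (hij : j ≤ i + 2 ^ m) (hji : i ≤ j + 2 ^ m) :
    B - m * δ ≤ gprod d o (f i) (f j) := by
  have hδ : (0:ℝ) ≤ m * δ := mul_nonneg (Nat.cast_nonneg _) h.nn
  rcases lt_trichotomy i j with hl | hl | hl
  · exact log_chain h f o B m i j hl hij (fun l _ h2 => hs l (by omega))
  · subst hl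
    have := hb i hi
    unfold gprod; rw [hd.self]; linarith
  · rw [gprod_symm hd]
    exact log_chain h f o B m j i hl hji (fun l _ h2 => hs l (by omega))

/-- polynomial versus exponential -/
theorem exp_lemma (δ B : ℝ) (hδ : 0 ≤ δ) (hB : 0 ≤ B) :
    ∃ h0 : ℝ, 0 ≤ h0 ∧ ∀ h, h0 ≤ h → ∃ m : ℕ, B * (h + 1) ^ 3 ≤ 2 ^ m ∧ δ * m + B ≤ h := by
  have key : ∃ M : ℕ, ∀ m : ℕ, M ≤ m → B * ((2 * (δ + 1) + 1) * (m + 1)) ^ 3 ≤ 2 ^ m := by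
    have ht := tendsto_pow_const_div_const_pow_of_one_lt 3 (r := (2:ℝ)) (by norm_num)
    set c := B * (2 * (2 * (δ + 1) + 1)) ^ 3 + 1 with hc
    have hcpos : 0 < c := by positivity
    have := (ht.eventually (gt_mem_nhds (show (0:ℝ) < 1 / c by positivity)))
    rw [Filter.eventually_atTop] at this
    obtain ⟨M, hM⟩ := this
    refine ⟨M + 1, fun m hm => ?_⟩
    have h1 := hM m (by omega)
    have hm1 : (1:ℝ) ≤ m := by exact_mod_cast (by omega : 1 ≤ m)
    rw [div_lt_div_iff₀ (by positivity) hcpos] at h1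
    have h2 : B * ((2 * (δ + 1) + 1) * (m + 1)) ^ 3 ≤ B * ((2 * (δ + 1) + 1) * (2 * m)) ^ 3 := by
      gcongr; linarith
    have h3 : B * ((2 * (δ + 1) + 1) * (2 * (m:ℝ))) ^ 3 = (c - 1) * m ^ 3 := by rw [hc]; ring
    have h4 : (0:ℝ) ≤ (m:ℝ) ^ 3 := by positivity
    nlinarith
  obtain ⟨M, hM⟩ := key
  refine ⟨2 * B + 2 * (δ + 1) * M, by positivity, fun h hh => ?_⟩
  have hpos : 0 < 2 * (δ + 1) := by linarith
  have hh0 : 0 ≤ h := le_trans (by positivity) hh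
  set m := ⌊h / (2 * (δ + 1))⌋₊ with hm
  have e1 : (m : ℝ) ≤ h / (2 * (δ + 1)) := Nat.floor_le (by positivity)
  have e2 : h / (2 * (δ + 1)) < m + 1 := Nat.lt_floor_add_one _
  rw [le_div_iff₀ hpos] at e1
  rw [div_lt_iff₀ hpos] at e2
  have e3 : M ≤ m := by
    apply Nat.le_floor
    rw [le_div_iff₀ hpos]; nlinarith
  refine ⟨m, le_trans ?_ (hM m e3), ?_⟩
  · have : h + 1 ≤ (2 * (δ + 1) + 1) * (m + 1) := by
      have : (0:ℝ) ≤ m := Nat.cast_nonneg _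
      nlinarith
    gcongr
  · have : (0:ℝ) ≤ m := Nat.cast_nonneg _
    have : (0:ℝ) ≤ 2 * (δ + 1) * M := by positivity
    nlinarith

theorem descend (P : ℝ → Prop) (h0 : ℝ) (mono : ∀ a b, a ≤ b → P a → P b)
    (step : ∀ h, h0 ≤ h → P (h + 1) → P h) (ex : ∃ h, P h) : P h0 := by
  obtain ⟨h, hh⟩ := ex
  have key : ∀ n : ℕ, P (h0 + n) → P h0 := by
    intro n
    induction n with
    | zero => simp
    | succ n ih =>
      intro h1
      apply ih
      apply step _ (by linarith [Nat.cast_nonneg (α := ℝ) n])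
      push_cast at h1
      rwa [add_assoc]
  apply key ⌈h - h0⌉₊
  refine mono _ _ ?_ hh
  linarith [Nat.le_ceil (h - h0)]

theorem near_geod {X : Type*} {d : X → X → ℝ} {δ : ℝ} (hd : Met d) (h : Hyp d δ)
    {N : ℕ} {g : ℕ → X} (hg : ∀ i j, i ≤ j → j ≤ N → d (g i) (g j) = (j : ℝ) - i)
    {c : ℝ} {p : X} (hp : Btw d c (g 0) p (g N)) :
    ∃ s, s ≤ N ∧ d p (g s) ≤ 2 * c + 2 * δ + 1 := by
  have hc := hp.nonneg hd
  have hδ := h.nn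
  unfold Btw at hp
  have hN := hg 0 N (by omega) le_rfl
  simp only [Nat.cast_zero, sub_zero] at hN
  by_cases hx : d (g 0) p ≤ N
  · set s := ⌊d (g 0) p⌋₊ with hs
    have e1 : (s : ℝ) ≤ d (g 0) p := Nat.floor_le (hd.nonneg _ _)
    have e2 : d (g 0) p < s + 1 := Nat.lt_floor_add_one _
    have hsN : s ≤ N := by exact_mod_cast (e1.trans hx)
    refine ⟨s, hsN, ?_⟩
    have h1 := hg 0 s (by omega) hsN
    have h2 := hg s N hsN le_rfl
    simp only [Nat.cast_zero, sub_zero] at h1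
    have := h.four (g s) (g 0) p (g N)
    rw [hd.symm (g N) (g s)] at this
    rcases this with h | h <;> linarith
  · refine ⟨N, le_rfl, ?_⟩
    linarith [hd.nonneg p (g N)]

/-- discrete quasigeodesic with cubic control -/
structure QG {X : Type*} (d : X → X → ℝ) (k A : ℝ) (γ : ℕ → X) (n : ℕ) : Prop where
  step : ∀ i, i < n → d (γ i) (γ (i + 1)) ≤ k
  ctrl : ∀ i j, i ≤ j → j ≤ n → (j : ℝ) - i ≤ A * (d (γ i) (γ j) + 1) ^ 3

theorem steps_le {X : Type*} {d : X → X → ℝ} (hd : Met d) {k : ℝ} {γ : ℕ → X} {n : ℕ}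
    (hs : ∀ i, i < n → d (γ i) (γ (i + 1)) ≤ k) (i j : ℕ) (hij : i ≤ j) (hj : j ≤ n) :
    d (γ i) (γ j) ≤ k * ((j : ℝ) - i) := by
  induction j, hij using Nat.le_induction with
  | base => simp [hd.self]
  | succ j hij ih =>
    have := ih (by omega)
    have h2 := hs j (by omega)
    have := hd.tri (γ i) (γ j) (γ (j + 1))
    push_cast; linarith

theorem cube_mono {A x y : ℝ} (hA : 0 ≤ A) (hx : 0 ≤ x) (hxy : x ≤ y) :
    A * (x + 1) ^ 3 ≤ A * (y + 1) ^ 3 := by gcongr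

/-- the geodesic is close to the quasigeodesic -/
theorem morse_close {δ k A : ℝ} (hδ : 0 ≤ δ) (hk : 0 ≤ k) (hA : 0 ≤ A) :
    ∃ D : ℝ, 0 ≤ D ∧ ∀ {X : Type*} (d : X → X → ℝ) (_ : Met d) (_ : Hyp d δ)
      (γ : ℕ → X) (n : ℕ) (_ : QG d k A γ n) (N : ℕ) (g : ℕ → X)
      (_ : ∀ i j, i ≤ j → j ≤ N → d (g i) (g j) = (j : ℝ) - i) (_ : g 0 = γ 0) (_ : g N = γ n),
      ∀ s, s ≤ N → ∃ i, i ≤ n ∧ d (g s) (γ i) ≤ D := by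
  obtain ⟨h0, hh0, hE⟩ := exp_lemma δ (1331 * (A + 2) + k + 2 * δ + 1) hδ (by positivity)
  refine ⟨h0, hh0, ?_⟩
  intro X d hd hy γ n hq N g hg hg0 hgN
  refine descend (fun h => ∀ s, s ≤ N → ∃ i, i ≤ n ∧ d (g s) (γ i) ≤ h) h0 ?_ ?_ ?_
  · intro a b hab ha s hs
    obtain ⟨i, hi, h⟩ := ha s hs
    exact ⟨i, hi, h.trans hab⟩
  · intro h hh hP s hs
    by_contra! hcon
    have hhn : 0 ≤ h := hh0.trans hh
    obtain ⟨m, hm1, hm2⟩ := hE h hh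
    set W := ⌈3 * (h + 1)⌉₊ with hW
    have hW1 : 3 * (h + 1) ≤ W := Nat.le_ceil _
    have hW2 : (W : ℝ) < 3 * (h + 1) + 1 := Nat.ceil_lt_add_one (by positivity)
    have hfar : ∀ i, i ≤ n → h ≤ d (γ i) (g s) := fun i hi => by
      rw [hd.symm]; exact (hcon i hi).le
    -- left end
    have left : ∃ s1 i1, s1 ≤ s ∧ i1 ≤ n ∧ s ≤ s1 + W ∧ d (g s1) (γ i1) ≤ h + 1 ∧
        h ≤ gprod d (g s) (g s1) (γ i1) := by
      by_cases hc : s ≤ W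
      · refine ⟨0, 0, by omega, by omega, by omega, ?_, ?_⟩
        · rw [hg0, hd.self]; linarith
        · unfold gprod; rw [hg0, hd.self]; linarith [hfar 0 (by omega)]
      · obtain ⟨i1, hi1, hd1⟩ := hP (s - W) (by omega)
        refine ⟨s - W, i1, by omega, hi1, by omega, hd1, ?_⟩
        have e := hg (s - W) s (by omega) hs
        rw [Nat.cast_sub (by omega)] at e
        have := hfar i1 hi1
        have := hd.tri (g (s - W)) (γ i1) (g s)
        unfold gprod; linarith
    have right : ∃ s2 i2, s ≤ s2 ∧ s2 ≤ N ∧ i2 ≤ n ∧ s2 ≤ s + W ∧ d (g s2) (γ i2) ≤ h + 1 ∧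
        h ≤ gprod d (g s) (γ i2) (g s2) := by
      by_cases hc : N ≤ s + W
      · refine ⟨N, n, by omega, by omega, by omega, by omega, ?_, ?_⟩
        · rw [hgN, hd.self]; linarith
        · unfold gprod; rw [hgN, hd.self]; linarith [hfar n (by omega)]
      · obtain ⟨i1, hi1, hd1⟩ := hP (s + W) (by omega)
        refine ⟨s + W, i1, by omega, by omega, hi1, by omega, hd1, ?_⟩
        have e := hg s (s + W) (by omega) (by omega)
        push_cast at e
        have := hfar i1 hi1
        have := hd.tri (g (s + W)) (γ i1) (g s)
        have := hd.symm (g (s + W)) (γ i1)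
        have := hd.symm (g (s + W)) (g s)
        unfold gprod; linarith
    obtain ⟨s1, i1, hs1, hi1, hs1W, hd1, hp1⟩ := left
    obtain ⟨s2, i2, hs2, hs2N, hi2, hs2W, hd2, hp2⟩ := right
    have hs1W' : (s : ℝ) ≤ s1 + W := by exact_mod_cast hs1W
    have hs2W' : (s2 : ℝ) ≤ s + W := by exact_mod_cast hs2W
    have e12 := hg s1 s2 (by omega) hs2N
    have hdd : d (γ i1) (γ i2) ≤ 8 * h + 10 := by
      have := hd.tri (γ i1) (g s1) (γ i2)
      have := hd.tri (g s1) (g s2) (γ i2)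
      rw [hd.symm (γ i1) (g s1)] at *
      linarith
    have hcub : A * ((8 * h + 10) + 1) ^ 3 ≤ 2 ^ m := by
      refine le_trans ?_ hm1
      have : A * ((8 * h + 10) + 1) ^ 3 ≤ A * (11 * (h + 1)) ^ 3 := by gcongr; linarith
      have e : A * (11 * (h + 1)) ^ 3 = 1331 * A * (h + 1) ^ 3 := by ring
      rw [e] at this
      refine this.trans ?_
      gcongr
      nlinarith
    have h12 : i2 ≤ i1 + 2 ^ m := by
      rcases le_total i1 i2 with hl | hl
      · have := hq.ctrl i1 i2 hl hi2
        have h3 := cube_mono hA (hd.nonneg _ _) hdd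
        have : (i2 : ℝ) ≤ i1 + 2 ^ m := by linarith
        exact_mod_cast this
      · exact le_trans hl (Nat.le_add_right _ _)
    have h21 : i1 ≤ i2 + 2 ^ m := by
      rcases le_total i2 i1 with hl | hl
      · have := hq.ctrl i2 i1 hl hi1
        rw [hd.symm] at this
        have h3 := cube_mono hA (hd.nonneg _ _) hdd
        have : (i1 : ℝ) ≤ i2 + 2 ^ m := by linarith
        exact_mod_cast this
      · exact le_trans hl (Nat.le_add_right _ _)
    have hmid := log_any hd hy γ (g s) (h - k) m n (fun l hl => by
      have := hq.step l hl
      have := hfar l (by omega)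
      have := hfar (l + 1) (by omega)
      unfold gprod; linarith) (fun l hl => by linarith [hfar l hl]) i1 i2 hi1 hi2 h12 h21
    have hmδ : (0:ℝ) ≤ m * δ := by positivity
    have q1 := gprod_min hy _ _ _ _ (h - k - m * δ) (by linarith) hmid
    have q2 := gprod_min hy _ _ _ _ (h - k - m * δ - δ) q1 (by linarith)
    have z : gprod d (g s) (g s1) (g s2) = 0 := by
      unfold gprod
      rw [e12, hg s1 s hs1 hs, hd.symm, hg s s2 hs2 hs2N]; ring
    rw [z] at q2
    linarith
  · refine ⟨N, fun s hs => ⟨0, by omega, ?_⟩⟩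
    rw [← hg0, hd.symm, hg 0 s (by omega) hs]
    have : (s:ℝ) ≤ N := by exact_mod_cast hs
    simpa using this

end CG


namespace CG

/-- Morse lemma with cubic control -/
theorem morse {δ k A : ℝ} (hδ : 0 ≤ δ) (hk : 0 ≤ k) (hA : 0 ≤ A) :
    ∃ D : ℝ, 0 ≤ D ∧ ∀ {X : Type*} (d : X → X → ℝ) (_ : Geo d) (_ : Hyp d δ)
      (γ : ℕ → X) (n : ℕ) (_ : QG d k A γ n),
      (∀ i, i ≤ n → Btw d D (γ 0) (γ i) (γ n)) ∧
      (∀ c p, Btw d c (γ 0) p (γ n) → ∃ i, i ≤ n ∧ d p (γ i) ≤ D + 2 * c) ∧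
      (n : ℝ) ≤ D * (d (γ 0) (γ n) + 1) := by
  obtain ⟨D0, hD0, hM⟩ := morse_close hδ hk hA
  set F := A * ((2 * D0 + 1) + 1) ^ 3 with hF
  have hF0 : 0 ≤ F := by positivity
  set D := D0 + k * F + 2 * δ + 1 + F with hD
  have hkF : 0 ≤ k * F := by positivity
  refine ⟨D, by positivity, ?_⟩
  intro X d hd hy γ n hq
  obtain ⟨N, g, hg0, hgN, hg⟩ := hd.geo (γ 0) (γ n)
  have hcl := hM d hd.toMet hy γ n hq N g hg hg0 hgN
  have hdN : d (γ 0) (γ n) = N := by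
    have := hg 0 N (by omega) le_rfl
    rw [hg0, hgN] at this; simpa using this
  -- choice of parameters
  have hch : ∃ t : ℕ → ℕ, t 0 = 0 ∧ (N ≠ 0 → t N = n) ∧ (∀ s, s ≤ N → t s ≤ n ∧ d (g s) (γ (t s)) ≤ D0) := by
    choose! t ht using hcl
    refine ⟨fun s => if s = 0 then 0 else if s = N then n else t s, by simp, fun h => by simp [h], ?_⟩
    intro s hs
    dsimp only
    split_ifs with h1 h2
    · subst h1; rw [hg0, hd.self]; exact ⟨by omega, hD0⟩
    · subst h2; rw [hgN, hd.self]; exact ⟨by omega, hD0⟩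
    · exact ht s hs
  obtain ⟨t, ht0, htN, ht⟩ := hch
  have gap : ∀ s, s < N → (t (s + 1) : ℝ) - t s ≤ F := by
    intro s hs
    rcases le_total (t s) (t (s + 1)) with hl | hl
    · refine (hq.ctrl _ _ hl (ht (s + 1) (by omega)).1).trans ?_
      refine cube_mono hA (hd.nonneg _ _) ?_
      have e := hg s (s + 1) (by omega) (by omega)
      push_cast at e
      have := hd.tri (γ (t s)) (g s) (γ (t (s + 1)))
      have := hd.tri (g s) (g (s + 1)) (γ (t (s + 1)))
      have := (ht s (by omega)).2
      have := (ht (s + 1) (by omega)).2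
      rw [hd.symm (γ (t s)) (g s)] at *
      linarith
    · have : (t (s + 1) : ℝ) ≤ t s := by exact_mod_cast hl
      linarith
  have hAF : A ≤ F := by
    have : A * 1 ≤ A * ((2 * D0 + 1) + 1) ^ 3 := by
      gcongr
      have : 1 ≤ (2 * D0 + 1) + 1 := by linarith
      exact one_le_pow₀ this
    linarith
  have hn0 : N = 0 → (n : ℝ) ≤ F := by
    intro h0
    have := hq.ctrl 0 n (by omega) le_rfl
    rw [hdN, h0] at this
    norm_num at this
    linarith
  have key : ∀ i, i ≤ n → ∃ s, s ≤ N ∧ d (γ i) (g s) ≤ D0 + k * F := by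
    intro i hi
    by_cases hN : N = 0
    · refine ⟨0, by omega, ?_⟩
      rw [hg0, hd.symm]
      have := steps_le hd.toMet hq.step 0 i (by omega) hi
      have hin : (i : ℝ) ≤ n := by exact_mod_cast hi
      have := hn0 hN
      have : k * ((i:ℝ) - (0:ℕ)) ≤ k * F := by gcongr; push_cast; linarith
      linarith
    · by_cases hin : i = n
      · refine ⟨N, le_rfl, ?_⟩
        rw [hgN, hin, hd.self]; positivity
      · have hex : ∃ s, i < t s ∧ s ≤ N := ⟨N, by rw [htN hN]; omega, le_rfl⟩
        classical
        obtain ⟨h1, h2⟩ := Nat.find_spec hex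
        set s := Nat.find hex
        have hs0 : s ≠ 0 := by intro h; rw [h, ht0] at h1; omega
        obtain ⟨s', hs'⟩ := Nat.exists_eq_succ_of_ne_zero hs0
        have hlt : t s' ≤ i := by
          by_contra hc
          exact Nat.find_min hex (m := s') (by omega) ⟨by omega, by omega⟩
        refine ⟨s', by omega, ?_⟩
        have hg1 := gap s' (by omega)
        rw [show s' + 1 = s from hs'.symm] at hg1
        have := steps_le hd.toMet hq.step (t s') i hlt hi
        have h3 : (i : ℝ) ≤ t s := by exact_mod_cast h1.le
        have : k * ((i:ℝ) - t s') ≤ k * F := by gcongr; linarith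
        have := hd.tri (γ i) (γ (t s')) (g s')
        have := (ht s' (by omega)).2
        linarith [hd.symm (γ i) (γ (t s')), hd.symm (γ (t s')) (g s')]
  refine ⟨?_, ?_, ?_⟩
  · intro i hi
    obtain ⟨s, hs, h⟩ := key i hi
    have h0 : Btw d 0 (γ 0) (g s) (γ n) := by
      unfold Btw
      rw [hdN, ← hg0, ← hgN, hg 0 s (by omega) hs, hg s N hs le_rfl]; push_cast; linarith
    rw [hd.symm] at h
    exact (h0.mid hd.toMet h).mono (by rw [hD]; linarith)
  · intro c p hp
    rw [← hg0, ← hgN] at hp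
    obtain ⟨s, hs, h⟩ := near_geod hd.toMet hy hg hp
    refine ⟨t s, (ht s hs).1, ?_⟩
    have := hd.tri p (g s) (γ (t s))
    have := (ht s hs).2
    linarith
  · rw [hdN]
    by_cases hN : N = 0
    · have := hn0 hN
      rw [hN]; push_cast; rw [zero_add, mul_one]; linarith
    · have : ∀ s, s ≤ N → (t s : ℝ) ≤ F * s := by
        intro s
        induction s with
        | zero => simp [ht0]
        | succ s ih =>
          intro hs
          have := ih (by omega)
          have := gap s (by omega)
          push_cast; linarith
      have h1 := this N le_rfl
      rw [htN hN] at h1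
      have hNn : (0:ℝ) ≤ N := Nat.cast_nonneg _
      have : F * (N:ℝ) ≤ D * (N + 1) := by
        have : F ≤ D := by linarith
        nlinarith
      linarith

/-- concatenation of two geodesics -/
theorem concat {X : Type*} {d : X → X → ℝ} (hd : Geo d) {c : ℝ} {x m y : X} (h : Btw d c x m y) :
    ∃ (n a : ℕ) (γ : ℕ → X), a ≤ n ∧ γ 0 = x ∧ γ a = m ∧ γ n = y ∧
      ∀ i j, i ≤ j → j ≤ n → d (γ i) (γ j) ≤ (j:ℝ) - i ∧ (j:ℝ) - i ≤ d (γ i) (γ j) + 2 * c := by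
  have hc := h.nonneg hd.toMet
  obtain ⟨a, p, hp0, hpa, hp⟩ := hd.geo x m
  obtain ⟨b, q, hq0, hqb, hq⟩ := hd.geo m y
  have da : d x m = a := by
    have := hp 0 a (by omega) le_rfl
    rw [hp0, hpa] at this; simpa using this
  have db : d m y = b := by
    have := hq 0 b (by omega) le_rfl
    rw [hq0, hqb] at this; simpa using this
  unfold Btw at h
  refine ⟨a + b, a, fun i => if i ≤ a then p i else q (i - a), by omega, by simp [hp0], by simp [hpa],
    ?_, ?_⟩
  · by_cases hb : b = 0
    · subst hb; simp [hpa]; rw [← hqb, hq0]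
    · have : ¬ (a + b ≤ a) := by omega
      simp [hqb, hb]
  · intro i j hij hj
    dsimp only
    by_cases hja : j ≤ a
    · have hia : i ≤ a := by omega
      rw [if_pos hja, if_pos hia, hp i j hij hja]
      constructor <;> linarith
    · by_cases hia : i ≤ a
      · rw [if_pos hia, if_neg hja]
        have e1 := hp i a hia le_rfl
        have e2 := hq 0 (j - a) (by omega) (by omega)
        have e3 := hp 0 i (by omega) hia
        have e4 := hq (j - a) b (by omega) le_rfl
        rw [Nat.cast_sub (by omega)] at e2 e4
        rw [hpa] at e1; rw [hq0] at e2; rw [hp0] at e3; rw [hqb] at e4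
        push_cast at e2 e3
        have := hd.tri (p i) m (q (j - a))
        have := hd.tri x (p i) y
        have := hd.tri (p i) (q (j - a)) y
        constructor <;> linarith
      · rw [if_neg hia, if_neg hja, hq _ _ (by omega) (by omega)]
        rw [Nat.cast_sub (by omega), Nat.cast_sub (by omega)]
        constructor <;> linarith

/-- Bilipschitz maps preserve betweenness -/
theorem bilip_btw {δ l c : ℝ} (hδ : 0 ≤ δ) (hl : 0 ≤ l) (hc : 0 ≤ c) :
    ∃ D : ℝ, 0 ≤ D ∧ ∀ {X : Type*} {Y : Type*} (d : X → X → ℝ) (_ : Geo d) (d' : Y → Y → ℝ) (_ : Geo d')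
      (_ : Hyp d' δ) (f : X → Y) (_ : ∀ x y, d' (f x) (f y) ≤ l * (d x y + 1))
      (_ : ∀ x y, d x y ≤ l * (d' (f x) (f y) + 1)) (x m y : X),
      Btw d c x m y → Btw d' D (f x) (f m) (f y) := by
  obtain ⟨D, hD, hM⟩ := morse (δ := δ) (k := 2 * l) (A := l + 2 * c) hδ (by positivity) (by positivity)
  refine ⟨D, hD, ?_⟩
  intro X Y d hd d' hd' hy f h1 h2 x m y hb
  obtain ⟨n, a, γ, han, e0, ea, en, hγ⟩ := concat hd hb
  have := (hM d' hd' hy (fun i => f (γ i)) n ⟨?_, ?_⟩).1 a han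
  · simpa [e0, ea, en] using this
  · intro i hi
    refine (h1 _ _).trans ?_
    have := (hγ i (i + 1) (by omega) (by omega)).1
    push_cast at this
    nlinarith
  · intro i j hij hj
    have h3 := (hγ i j hij hj).2
    have h4 := h2 (γ i) (γ j)
    have h5 := hd'.nonneg (f (γ i)) (f (γ j))
    have h6 : d' (f (γ i)) (f (γ j)) + 1 ≤ (d' (f (γ i)) (f (γ j)) + 1) ^ 3 := by
      nlinarith [sq_nonneg (d' (f (γ i)) (f (γ j))), mul_nonneg h5 (sq_nonneg (d' (f (γ i)) (f (γ j))))]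
    nlinarith

/-- images of coarse Lipschitz retractions are quasiconvex -/
theorem quasi_retract {δ C c : ℝ} (hδ : 0 ≤ δ) (hC : 0 ≤ C) (hc : 0 ≤ c) :
    ∃ D : ℝ, 0 ≤ D ∧ ∀ {X : Type*} (d : X → X → ℝ) (_ : Geo d) (_ : Hyp d δ) (P : X → X)
      (_ : ∀ z w, d (P z) (P w) ≤ C * (d z w + 1)) (_ : ∀ z, d (P (P z)) (P z) ≤ C)
      (x y : X) (_ : d x (P x) ≤ C) (_ : d y (P y) ≤ C) (p : X) (_ : Btw d c x p y), d p (P p) ≤ D := by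
  obtain ⟨h0, hh0, hE⟩ := exp_lemma δ (100 * (C + 1) + 2 * δ + 2) hδ (by positivity)
  set e := 2 * c + 2 * δ + 1 + h0 with he
  refine ⟨e + C * (e + 1) + C, by positivity, ?_⟩
  intro X d hd hy P hL hPP x y hx hyP p hp
  have near : ∀ h p z, d p (P z) ≤ h → d p (P p) ≤ h + C * (h + 1) + C := by
    intro h p z hz
    have h1 := hL p (P z)
    have h2 := hPP z
    have h3 := hd.tri p (P z) (P p)
    have h4 := hd.tri (P z) (P (P z)) (P p)
    rw [hd.symm (P z) (P (P z)), hd.symm (P (P z)) (P p)] at h4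
    have : C * (d p (P z) + 1) ≤ C * (h + 1) := by gcongr
    linarith
  obtain ⟨N, g, hg0, hgN, hg⟩ := hd.geo x y
  have hdN : d x y = N := by
    have := hg 0 N (by omega) le_rfl
    rw [hg0, hgN] at this; simpa using this
  have main : ∀ s, s ≤ N → ∃ z, d (g s) (P z) ≤ h0 := by
    refine descend (fun h => ∀ s, s ≤ N → ∃ z, d (g s) (P z) ≤ h) h0 ?_ ?_ ?_
    · intro a b hab ha s hs
      obtain ⟨i, h⟩ := ha s hs
      exact ⟨i, h.trans hab⟩
    · intro h hh hP s hs
      by_contra! hcon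
      have hhn : 0 ≤ h := hh0.trans hh
      obtain ⟨m, hm1, hm2⟩ := hE h hh
      set W := ⌈(2 * C + 2) * (h + 2)⌉₊ with hW
      have hW1 : (2 * C + 2) * (h + 2) ≤ W := Nat.le_ceil _
      have hW2 : (W : ℝ) < (2 * C + 2) * (h + 2) + 1 := Nat.ceil_lt_add_one (by positivity)
      have hfar : ∀ z, h ≤ d (P z) (g s) := fun i => by
        rw [hd.symm]; exact (hcon i).le
      have left : ∃ s1, s1 ≤ s ∧ s ≤ s1 + W ∧ h - C ≤ gprod d (g s) (g s1) (P (g s1)) := by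
        by_cases hcs : s ≤ W
        · refine ⟨0, by omega, by omega, ?_⟩
          unfold gprod; rw [hg0]
          linarith [hfar x, hd.tri (P x) x (g s), hd.symm x (P x)]
        · refine ⟨s - W, by omega, by omega, ?_⟩
          obtain ⟨z, hz⟩ := hP (s - W) (by omega)
          have := near _ _ _ hz
          have e := hg (s - W) s (by omega) hs
          rw [Nat.cast_sub (by omega)] at e
          have := hfar (g (s - W))
          unfold gprod; nlinarith
      have right : ∃ s1, s ≤ s1 ∧ s1 ≤ N ∧ s1 ≤ s + W ∧ h - C ≤ gprod d (g s) (P (g s1)) (g s1) := by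
        by_cases hcs : N ≤ s + W
        · refine ⟨N, by omega, by omega, by omega, ?_⟩
          unfold gprod; rw [hgN]
          linarith [hfar y, hd.tri (P y) y (g s), hd.symm y (P y)]
        · refine ⟨s + W, by omega, by omega, by omega, ?_⟩
          obtain ⟨z, hz⟩ := hP (s + W) (by omega)
          have := near _ _ _ hz
          have e := hg s (s + W) (by omega) (by omega)
          push_cast at e
          rw [hd.symm] at e
          have := hfar (g (s + W))
          unfold gprod
          rw [hd.symm (P _) (g (s + W))]
          nlinarith
      obtain ⟨s1, hs1, hs1W, hp1⟩ := left
      obtain ⟨s2, hs2, hs2N, hs2W, hp2⟩ := right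
      have hlen : s2 ≤ s1 + 2 ^ m := by
        have hs1W' : (s : ℝ) ≤ s1 + W := by exact_mod_cast hs1W
        have hs2W' : (s2 : ℝ) ≤ s + W := by exact_mod_cast hs2W
        have : (s2 : ℝ) ≤ s1 + 2 ^ m := by
          have h3 : 100 * (C + 1) * (h + 1) ≤ (100 * (C + 1) + 2 * δ + 2) * (h + 1) ^ 3 := by
            have : h + 1 ≤ (h + 1) ^ 3 := by
              nlinarith [sq_nonneg h, mul_nonneg hhn (sq_nonneg h)]
            have h6 : 0 ≤ (h+1)^3 := by positivity
            have h5 : 100 * (C + 1) * (h + 1) ≤ 100 * (C + 1) * (h + 1) ^ 3 := by gcongr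
            nlinarith
          have h4 : 2 * ((2 * C + 2) * (h + 2) + 1) ≤ 100 * (C + 1) * (h + 1) := by
            nlinarith [mul_nonneg hC hhn]
          linarith
        exact_mod_cast this
      have hmid := log_any hd.toMet hy (fun i => P (g i)) (g s) (h - C) m N (fun l hl => by
        have h1 := hL (g l) (g (l + 1))
        rw [hg l (l + 1) (by omega) (by omega)] at h1
        push_cast at h1
        have := hfar (g l)
        have := hfar (g (l + 1))
        unfold gprod; linarith) (fun l hl => by linarith [hfar (g l)]) s1 s2 (by omega) hs2N hlen
          (by have := Nat.zero_le (2 ^ m); omega)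
      have hmδ : (0:ℝ) ≤ m * δ := by positivity
      have q1 := gprod_min hy _ _ _ _ (h - C - m * δ) (by linarith) hmid
      have q2 := gprod_min hy _ _ _ _ (h - C - m * δ - δ) q1 (by linarith)
      have z : gprod d (g s) (g s1) (g s2) = 0 := by
        unfold gprod
        rw [hg s1 s2 (by omega) hs2N, hg s1 s hs1 hs, hd.symm, hg s s2 hs2 hs2N]; ring
      rw [z] at q2
      linarith
    · refine ⟨N + C, fun s hs => ⟨x, ?_⟩⟩
      have := hd.tri (g s) x (P x)
      have h2 := hg 0 s (by omega) hs
      rw [hg0, hd.symm] at h2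
      have : (s:ℝ) ≤ N := by exact_mod_cast hs
      push_cast at h2
      linarith
  rw [← hg0, ← hgN] at hp
  obtain ⟨s, hs, hps⟩ := near_geod hd.toMet hy hg hp
  obtain ⟨z, hz⟩ := main s hs
  apply near _ _ z
  linarith [hd.tri p (g s) (P z)]

/-- nearest points in quasiconvex sets -/
theorem nearest_btw {X : Type*} {d : X → X → ℝ} {δ D : ℝ} (hd : Geo d) (hy : Hyp d δ) (A : Set X)
    (hA : ∀ a ∈ A, ∀ a' ∈ A, ∀ m, Btw d 0 a m a' → ∃ a'' ∈ A, d m a'' ≤ D) (v q : X) (hq : q ∈ A)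
    (hn : ∀ a ∈ A, d v q ≤ d v a) (a : X) (ha : a ∈ A) : Btw d (2 * δ + D + 1) v q a := by
  obtain ⟨N, g, hg0, hgN, hg⟩ := hd.geo q a
  have hdN : d q a = N := by
    have := hg 0 N (by omega) le_rfl
    rw [hg0, hgN] at this; simpa using this
  set t := (d v q + d q a - d v a) / 2 with ht
  have ht0 : 0 ≤ t := by linarith [hd.tri v q a]
  have htN : t ≤ N := by
    have := hd.tri v a q
    rw [hd.symm a q] at this; linarith
  set s := ⌊t⌋₊ with hs
  have e1 : (s : ℝ) ≤ t := Nat.floor_le ht0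
  have e2 : t < s + 1 := Nat.lt_floor_add_one _
  have hsN : s ≤ N := by exact_mod_cast (e1.trans htN)
  have h1 := hg 0 s (by omega) hsN
  have h2 := hg s N hsN le_rfl
  rw [hg0] at h1; rw [hgN] at h2
  push_cast at h1
  obtain ⟨a'', ha'', hm⟩ := hA q hq a ha (g s) (by unfold Btw; linarith)
  have h3 := hn a'' ha''
  have h4 := hd.tri v (g s) a''
  have h5 := hy.four v q (g s) a
  rw [hd.symm (g s) v, hd.symm a v, hd.symm q v] at h5
  unfold Btw
  rcases h5 with h5 | h5 <;> linarith

end CG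


namespace CG

/-- An abstract guessing lemma: a thin family of sets, small for nearby points, stays close
to quasigeodesics. -/
theorem guess {D r k : ℝ} (hD : 0 ≤ D) (hk : 0 ≤ k) :
    ∃ D' : ℝ, 0 ≤ D' ∧ ∀ {X : Type*} (d : X → X → ℝ) (_ : Met d) (L : X → X → X → Prop)
      (_ : ∀ x y z p, L x y p → ∃ p', d p p' ≤ D ∧ (L x z p' ∨ L z y p'))
      (_ : ∀ x y p, d x y ≤ r → L x y p → d p x ≤ D)
      (γ : ℕ → X) (n : ℕ) (_ : ∀ i, i ≤ n → d (γ i) (γ i) ≤ r)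
      (_ : ∀ i, i < n → d (γ i) (γ (i + 1)) ≤ r)
      (_ : ∀ i j, i ≤ j → j ≤ n → (j : ℝ) - i ≤ k * (d (γ i) (γ j) + 1)) (p : X),
      L (γ 0) (γ n) p → ∃ i, i ≤ n ∧ d p (γ i) ≤ D' := by
  obtain ⟨h0, hh0, hE⟩ := exp_lemma D (100 * (k + 1) * (D + 1) + 3 * D) hD (by positivity)
  refine ⟨h0, hh0, ?_⟩
  intro X d hd L hthin hsmall γ n hr0 hr hq
  have logb : ∀ m i j : ℕ, i ≤ j → j ≤ n → j ≤ i + 2 ^ m → ∀ p, L (γ i) (γ j) p →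
      ∃ l, i ≤ l ∧ l ≤ j ∧ d p (γ l) ≤ D * m + D := by
    intro m
    induction m with
    | zero =>
      intro i j hij hj hjm p hp
      refine ⟨i, le_rfl, hij, ?_⟩
      simp only [pow_zero] at hjm
      have : d (γ i) (γ j) ≤ r := by
        rcases Nat.lt_or_ge i j with h | h
        · have : j = i + 1 := by omega
          subst this
          exact hr i (by omega)
        · have : j = i := by omega
          subst this
          exact hr0 j hj
      simpa using hsmall _ _ _ this hp
    | succ m ih =>
      intro i j hij hj hjm p hp
      by_cases hc : j ≤ i + 2 ^ m
      · obtain ⟨l, h1, h2, h3⟩ := ih i j hij hj hc p hp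
        exact ⟨l, h1, h2, by push_cast; linarith⟩
      · have hpos : 0 < 2 ^ m := by positivity
        have e : 2 ^ (m + 1) = 2 ^ m + 2 ^ m := by ring
        obtain ⟨p', hpp, h | h⟩ := hthin _ _ (γ (i + 2 ^ m)) p hp
        · obtain ⟨l, h1, h2, h3⟩ := ih i (i + 2 ^ m) (by omega) (by omega) (by omega) p' h
          exact ⟨l, h1, by omega, by push_cast; linarith [hd.tri p p' (γ l)]⟩
        · obtain ⟨l, h1, h2, h3⟩ := ih (i + 2 ^ m) j (by omega) (by omega) (by omega) p' h
          exact ⟨l, by omega, by omega, by push_cast; linarith [hd.tri p p' (γ l)]⟩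
  have main : ∀ i j, i ≤ j → j ≤ n → ∀ p, L (γ i) (γ j) p → ∃ l, i ≤ l ∧ l ≤ j ∧ d p (γ l) ≤ h0 := by
    refine descend (fun M => ∀ i j, i ≤ j → j ≤ n → ∀ p, L (γ i) (γ j) p →
      ∃ l, i ≤ l ∧ l ≤ j ∧ d p (γ l) ≤ M) h0 ?_ ?_ ?_
    · intro a b hab ha i j hij hj p hp
      obtain ⟨l, h1, h2, h3⟩ := ha i j hij hj p hp
      exact ⟨l, h1, h2, h3.trans hab⟩
    · intro h hh hP i j hij hj p hp
      have hhn : 0 ≤ h := hh0.trans hh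
      obtain ⟨m, hm1, hm2⟩ := hE h hh
      set W := ⌈k * (2 * (h + 1) + 2 * D + 1)⌉₊ + 1 with hW
      have hW1 : k * (2 * (h + 1) + 2 * D + 1) < W := by
        rw [hW]; push_cast; linarith [Nat.le_ceil (k * (2 * (h + 1) + 2 * D + 1))]
      have hW2 : (W : ℝ) < k * (2 * (h + 1) + 2 * D + 1) + 2 := by
        rw [hW]; push_cast
        linarith [Nat.ceil_lt_add_one (show 0 ≤ k * (2 * (h + 1) + 2 * D + 1) by positivity)]
      obtain ⟨l0, hl1, hl2, hl3⟩ := hP i j hij hj p hp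
      have far : ∀ l l' : ℕ, l ≤ l' → l' ≤ n → d (γ l) (γ l') ≤ 2 * (h + 1) + 2 * D → l' < l + W := by
        intro l l' hll hl' hdl
        have h1 := hq l l' hll hl'
        have h2 : k * (d (γ l) (γ l') + 1) ≤ k * (2 * (h + 1) + 2 * D + 1) := by gcongr
        have : (l' : ℝ) < l + W := by linarith
        exact_mod_cast this
      have step1 : ∃ i' p', i ≤ i' ∧ i' ≤ l0 ∧ l0 ≤ i' + W ∧ d p p' ≤ D ∧ L (γ i') (γ j) p' := by
        by_cases hc : l0 ≤ i + W
        · exact ⟨i, p, le_rfl, hl1, hc, by rw [hd.self]; exact hD, hp⟩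
        · obtain ⟨p', hpp, h' | h'⟩ := hthin _ _ (γ (l0 - W)) p hp
          · exfalso
            obtain ⟨l, q1, q2, q3⟩ := hP i (l0 - W) (by omega) (by omega) p' h'
            have := far l l0 (by omega) (by omega) (by
              linarith [hd.tri (γ l) p' (γ l0), hd.tri p' p (γ l0), hd.symm p p', hd.symm p' (γ l)])
            omega
          · exact ⟨l0 - W, p', by omega, by omega, by omega, hpp, h'⟩
      obtain ⟨i', p', hi1, hi2, hi3, hpp', hL'⟩ := step1
      have step2 : ∃ j' p'', l0 ≤ j' ∧ j' ≤ j ∧ j' ≤ l0 + W ∧ d p p'' ≤ 2 * D ∧ L (γ i') (γ j') p'' := by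
        by_cases hc : j ≤ l0 + W
        · exact ⟨j, p', by omega, by omega, hc, by linarith, hL'⟩
        · obtain ⟨p'', hpp, h' | h'⟩ := hthin _ _ (γ (l0 + W)) p' hL'
          · exact ⟨l0 + W, p'', by omega, by omega, by omega, by linarith [hd.tri p p' p''], h'⟩
          · exfalso
            obtain ⟨l, q1, q2, q3⟩ := hP (l0 + W) j (by omega) (by omega) p'' h'
            have := far l0 l (by omega) (by omega) (by
              linarith [hd.tri (γ l0) p (γ l), hd.tri p p' (γ l), hd.tri p' p'' (γ l), hd.symm p (γ l0)])
            omega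
      obtain ⟨j', p'', hj1, hj2, hj3, hpp'', hL''⟩ := step2
      have hlen : j' ≤ i' + 2 ^ m := by
        have : (j' : ℝ) ≤ i' + 2 ^ m := by
          have a1 : (j' : ℝ) ≤ l0 + W := by exact_mod_cast hj3
          have a2 : (l0 : ℝ) ≤ i' + W := by exact_mod_cast hi3
          have a3 : 2 * (k * (2 * (h + 1) + 2 * D + 1) + 2) ≤ 100 * (k + 1) * (D + 1) * (h + 1) := by
            nlinarith [mul_nonneg hk hhn, mul_nonneg hk hD, mul_nonneg hhn hD,
              mul_nonneg (mul_nonneg hk hhn) hD]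
          have a4 : 100 * (k + 1) * (D + 1) * (h + 1) ≤
              (100 * (k + 1) * (D + 1) + 3 * D) * (h + 1) ^ 3 := by
            have a5 : h + 1 ≤ (h + 1) ^ 3 := by
              nlinarith [sq_nonneg h, mul_nonneg hhn (sq_nonneg h)]
            gcongr
            linarith
          linarith
        exact_mod_cast this
      obtain ⟨l, q1, q2, q3⟩ := logb m i' j' (by omega) (by omega) hlen p'' hL''
      refine ⟨l, by omega, by omega, ?_⟩
      have : 0 ≤ 100 * (k + 1) * (D + 1) := by positivity
      linarith [hd.tri p p'' (γ l)]
    · have : ∃ m : ℕ, n ≤ 2 ^ m := ⟨n, Nat.lt_two_pow_self.le⟩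
      obtain ⟨m, hm⟩ := this
      exact ⟨D * m + D, fun i j hij hj p hp => logb m i j hij hj (by omega) p hp⟩
  intro p hp
  obtain ⟨l, _, h2, h3⟩ := main 0 n (by omega) le_rfl p hp
  exact ⟨l, h2, h3⟩

/-- Products of perturbed far points. -/
theorem pert {X : Type*} {d : X → X → ℝ} {δ : ℝ} (hd : Met d) (hy : Hyp d δ) {o y y' z z' : X}
    {e M : ℝ} (hz : d y z ≤ e) (hz' : d y' z' ≤ e) (hp : gprod d o y y' ≤ M)
    (h1 : M + e + 2 * δ < d o y) (h2 : M + e + 2 * δ < d o y') : gprod d o z z' ≤ M + 2 * δ := by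
  have hδ := hy.nn
  by_contra! hc
  have a1 : M + 2 * δ < gprod d o y z := by
    unfold gprod
    linarith [hd.symm o y, hd.tri o z y, hd.symm z y, hd.symm z o]
  have a2 : M + 2 * δ < gprod d o z' y' := by
    unfold gprod
    linarith [hd.symm o y', hd.tri o z' y', hd.symm z' y', hd.symm z' o]
  unfold gprod at *
  rcases hy.four o y z z' with h | h
  · rcases hy.four o y z' y' with h' | h' <;> linarith
  · rcases hy.four o y z' y' with h' | h' <;> linarith

end CG


namespace CG

/-! ### Word metrics -/

section Word
variable {Γ : Type*} [Group Γ] {S : Set Γ}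

theorem wl_le_of_list (l : List Γ) (hl : ∀ x ∈ l, x ∈ S ∨ x⁻¹ ∈ S) :
    wordLength S l.prod ≤ l.length :=
  Nat.sInf_le ⟨l, hl, rfl, rfl⟩

theorem wl_exists (hS : GenSet S) (g : Γ) :
    ∃ l : List Γ, (∀ x ∈ l, x ∈ S ∨ x⁻¹ ∈ S) ∧ l.length = wordLength S g ∧ l.prod = g := by
  have hg : g ∈ Subgroup.closure S := by rw [hS.2]; trivial
  rw [← Subgroup.mem_toSubmonoid, Subgroup.closure_toSubmonoid] at hg
  obtain ⟨l, hl, hp⟩ := Submonoid.exists_list_of_mem_closure hg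
  replace hl : ∀ x ∈ l, x ∈ S ∨ x⁻¹ ∈ S := fun x hx => by simpa using hl x hx
  have hne : { n : ℕ | ∃ l : List Γ, (∀ x ∈ l, x ∈ S ∨ x⁻¹ ∈ S) ∧ l.length = n ∧ l.prod = g }.Nonempty :=
    ⟨l.length, l, hl, rfl, hp⟩
  exact Nat.sInf_mem hne

theorem wl_one : wordLength S (1 : Γ) = 0 := by
  have := wl_le_of_list (S := S) ([] : List Γ) (by simp)
  simpa using this

theorem wl_mul (hS : GenSet S) (g h : Γ) : wordLength S (g * h) ≤ wordLength S g + wordLength S h := by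
  obtain ⟨l, hl, e, hp⟩ := wl_exists hS g
  obtain ⟨l', hl', e', hp'⟩ := wl_exists hS h
  have := wl_le_of_list (S := S) (l ++ l') (by
    intro x hx
    rcases List.mem_append.1 hx with h | h
    · exact hl x h
    · exact hl' x h)
  rw [List.prod_append, List.length_append, hp, hp', e, e'] at this
  exact this

theorem wl_inv_le (hS : GenSet S) (g : Γ) : wordLength S g⁻¹ ≤ wordLength S g := by
  obtain ⟨l, hl, e, hp⟩ := wl_exists hS g
  have := wl_le_of_list (S := S) (l.map (fun x => x⁻¹)).reverse (by
    intro x hx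
    simp only [List.mem_reverse, List.mem_map] at hx
    obtain ⟨y, hy, rfl⟩ := hx
    rw [inv_inv]
    exact (hl y hy).symm)
  rw [← List.prod_inv_reverse, hp] at this
  simpa [e] using this

theorem wl_inv (hS : GenSet S) (g : Γ) : wordLength S g⁻¹ = wordLength S g :=
  le_antisymm (wl_inv_le hS g) (by simpa using wl_inv_le hS g⁻¹)

theorem wd_left (x y z : Γ) : wordDist S (x * y) (x * z) = wordDist S y z := by
  unfold wordDist; congr 2; group

theorem wd_one (g : Γ) : wordDist S 1 g = wordLength S g := by
  unfold wordDist; simp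

theorem wd_met (hS : GenSet S) : Met (wordDist S) where
  self x := by unfold wordDist; simp [wl_one]
  symm x y := by
    unfold wordDist
    rw [← wl_inv hS]; congr 2; group
  tri x y z := by
    unfold wordDist
    have := wl_mul hS (x⁻¹ * y) (y⁻¹ * z)
    rw [show x⁻¹ * y * (y⁻¹ * z) = x⁻¹ * z by group] at this
    exact_mod_cast this

theorem wd_geo (hS : GenSet S) : Geo (wordDist S) where
  toMet := wd_met hS
  geo x y := by
    have hd := wd_met hS
    obtain ⟨l, hl, e, hp⟩ := wl_exists hS (x⁻¹ * y)
    have hlen : wordDist S x y = l.length := by unfold wordDist; rw [e]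
    refine ⟨l.length, fun i => x * (l.take i).prod, by simp, by simp [hp], ?_⟩
    have up : ∀ i j, i ≤ j → j ≤ l.length →
        wordDist S (x * (l.take i).prod) (x * (l.take j).prod) ≤ (j : ℝ) - i := by
      intro i j hij hj
      rw [wd_left]
      unfold wordDist
      have e1 : (l.take j) = l.take i ++ (l.take j).drop i := by
        have := List.take_append_drop i (l.take j)
        rw [List.take_take, min_eq_left hij] at this
        exact this.symm
      have e2 : (l.take i).prod⁻¹ * (l.take j).prod = ((l.take j).drop i).prod := by
        conv_lhs => rw [e1]
        rw [List.prod_append]; group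
      rw [e2]
      have := wl_le_of_list (S := S) ((l.take j).drop i)
        (fun x hx => hl x (List.mem_of_mem_take (List.mem_of_mem_drop hx)))
      have e3 : ((l.take j).drop i).length = j - i := by simp [hj]
      rw [e3] at this
      have h4 : (wordLength S ((l.take j).drop i).prod : ℝ) ≤ ((j - i : ℕ) : ℝ) := by exact_mod_cast this
      rwa [Nat.cast_sub hij] at h4
    intro i j hij hj
    apply le_antisymm (up i j hij hj)
    have h1 := up 0 i (by omega) (by omega)
    have h2 := up j l.length hj le_rfl
    simp only [List.take_zero, List.prod_nil, mul_one, List.take_length, hp] at h1 h2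
    rw [show x * (x⁻¹ * y) = y by group] at h2
    have := hd.tri x (x * (l.take i).prod) y
    have := hd.tri (x * (l.take i).prod) (x * (l.take j).prod) y
    rw [hlen] at *
    push_cast at h1
    linarith

theorem wl_ball_finite (hS : GenSet S) (n : ℕ) : {g : Γ | wordLength S g ≤ n}.Finite := by
  induction n with
  | zero =>
    refine (Set.finite_singleton (1 : Γ)).subset ?_
    intro g hg
    obtain ⟨l, _, e, hp⟩ := wl_exists hS g
    have : l = [] := by
      apply List.eq_nil_of_length_eq_zero; rw [e]; simpa using hg
    rw [this] at hp; simpa using hp.symm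
  | succ n ih =>
    have hSS : (S ∪ S⁻¹ ∪ {1}).Finite := (hS.1.union (hS.1.inv)).union (Set.finite_singleton 1)
    refine (hSS.mul ih).subset ?_
    intro g hg
    obtain ⟨l, hl, e, hp⟩ := wl_exists hS g
    cases l with
    | nil =>
      refine Set.mem_mul.2 ⟨1, by simp, 1, by simp [wl_one], ?_⟩
      simpa using hp
    | cons a t =>
      refine Set.mem_mul.2 ⟨a, ?_, t.prod, ?_, by simpa using hp⟩
      · have := hl a (by simp)
        simp [Set.mem_inv]; tauto
      · have h1 := wl_le_of_list (S := S) t (fun x hx => hl x (by simp [hx]))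
        have : t.length + 1 ≤ n + 1 := by
          rw [← List.length_cons (a := a), e]; exact hg
        exact h1.trans (by omega)

theorem wd_ball_finite (hS : GenSet S) (r : ℝ) : {g : Γ | (wordLength S g : ℝ) ≤ r}.Finite := by
  refine (wl_ball_finite hS ⌊r⌋₊).subset ?_
  intro g hg
  exact Nat.le_floor hg

/-- homomorphisms are Lipschitz -/
theorem hom_lip {Γ' : Type*} [Group Γ'] {S' : Set Γ'} (hS : GenSet S) (hS' : GenSet S') (f : Γ →* Γ') :
    ∃ C : ℝ, 0 ≤ C ∧ ∀ g, (wordLength S' (f g) : ℝ) ≤ C * wordLength S g := by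
  obtain ⟨C, hC⟩ : ∃ C : ℕ, ∀ s ∈ S, wordLength S' (f s) ≤ C := by
    obtain ⟨C, hC⟩ := (hS.1.image (fun s => wordLength S' (f s))).bddAbove
    exact ⟨C, fun s hs => hC ⟨s, hs, rfl⟩⟩
  refine ⟨C, by positivity, fun g => ?_⟩
  obtain ⟨l, hl, e, hp⟩ := wl_exists hS g
  rw [← e, ← hp]
  have : wordLength S' (f l.prod) ≤ C * l.length := by
    clear e hp
    induction l with
    | nil => simp [wl_one]
    | cons a t ih =>
      rw [List.prod_cons, map_mul, List.length_cons]
      have h1 := wl_mul hS' (f a) (f t.prod)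
      have h2 := ih (fun x hx => hl x (by simp [hx]))
      have h3 : wordLength S' (f a) ≤ C := by
        rcases hl a (by simp) with h | h
        · exact hC a h
        · rw [← wl_inv hS', ← map_inv]; exact hC _ h
      rw [mul_add, mul_one]
      omega
  exact_mod_cast this

theorem wd_hom {Γ' : Type*} [Group Γ'] {S' : Set Γ'} (f : Γ →* Γ') (x y : Γ) :
    wordDist S' (f x) (f y) = wordLength S' (f (x⁻¹ * y)) := by
  unfold wordDist; simp

theorem hyp_of {δ : ℝ} {X : Type*} {d : X → X → ℝ} (h0 : 0 ≤ δ) (h : ∀ o x y z : X,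
    min (gprod d o x y) (gprod d o y z) ≤ gprod d o x z + δ) : Hyp d δ where
  nn := h0
  four o x y z := by
    have := h o x y z
    unfold gprod at this
    rcases min_le_iff.1 this with h | h
    · left; linarith
    · right; linarith

theorem Hyp.mono {δ δ' : ℝ} {X : Type*} {d : X → X → ℝ} (h : Hyp d δ) (hle : δ ≤ δ') : Hyp d δ' where
  nn := h.nn.trans hle
  four o x y z := by
    rcases h.four o x y z with h | h
    · left; linarith
    · right; linarith

/-! ### Loxodromic elements -/

theorem lox_of_short {δ : ℝ} (hS : GenSet S) (hy : Hyp (wordDist S) δ) (k : Γ)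
    (hk : 2 * (gprod (wordDist S) 1 k k⁻¹ + δ) + 1 ≤ wordLength S k) (n : ℕ) :
    (n : ℝ) ≤ wordLength S (k ^ n) := by
  have hd := wd_met hS
  set c := gprod (wordDist S) 1 k k⁻¹ with hc
  have hδ := hy.nn
  have key : ∀ n : ℕ, (wordLength S (k ^ n) : ℝ) + wordLength S k - 2 * (c + δ) ≤ wordLength S (k ^ (n + 1)) := by
    intro n
    induction n with
    | zero =>
      have : 0 ≤ c := by
        rw [hc]; unfold gprod
        have := hd.tri k 1 k⁻¹
        rw [hd.symm 1 k⁻¹] at this; linarith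
      simp [wl_one]; linarith
    | succ n ih =>
      have h4 := hy.four (k ^ (n + 1)) (k ^ n) 1 (k ^ (n + 2))
      have e1 : wordDist S (k ^ n) (k ^ (n + 2)) = wordDist S k⁻¹ k := by
        rw [show k ^ n = k ^ (n + 1) * k⁻¹ by rw [pow_succ]; group,
          show k ^ (n + 2) = k ^ (n + 1) * k by rw [pow_succ k (n + 1)], wd_left]
      have e2 : wordDist S (k ^ n) (k ^ (n + 1)) = wordLength S k := by
        rw [pow_succ]
        have := wd_left (S := S) (k ^ n) 1 k
        rw [mul_one] at this; rw [this, wd_one]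
      have e3 : wordDist S (k ^ (n + 2)) (k ^ (n + 1)) = wordLength S k := by
        rw [hd.symm, pow_succ k (n + 1)]
        have := wd_left (S := S) (k ^ (n + 1)) 1 k
        rw [mul_one] at this; rw [this, wd_one]
      have ec : c = (wordLength S k + wordLength S k - wordDist S k⁻¹ k) / 2 := by
        rw [hc]; unfold gprod
        rw [hd.symm k 1, hd.symm k⁻¹ 1, wd_one, wd_one, wl_inv hS, hd.symm k k⁻¹]
      rw [e1, e2, e3, wd_one, wd_one, hd.symm (k ^ n) 1, wd_one] at h4
      rcases h4 with h | h
      · linarith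
      · linarith
  induction n with
  | zero => simp
  | succ n ih =>
    have := key n
    push_cast; linarith

theorem lox {δ : ℝ} (hS : GenSet S) (hy : Hyp (wordDist S) δ) (K0 : Subgroup Γ)
    (hinf : (K0 : Set Γ).Infinite) : ∃ k ∈ K0, ∀ n : ℕ, (n : ℝ) ≤ wordLength S (k ^ n) := by
  by_contra! hno
  have hd := wd_met hS
  have hδ := hy.nn
  set d := wordDist S with hdd
  have hs1 : ∀ g, d g 1 = wordLength S g := fun g => by rw [hd.symm, hdd, wd_one]
  have hi : ∀ g, (wordLength S g⁻¹ : ℝ) = wordLength S g := fun g => by rw [wl_inv hS]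
  have hsq : ∀ k ∈ K0, (wordLength S k : ℝ) < 2 * (gprod d 1 k k⁻¹ + δ) + 1 := by
    intro k hk
    by_contra! hc
    obtain ⟨n, hn⟩ := hno k hk
    have := lox_of_short hS hy k hc n
    linarith
  set C := 5 * δ + 1 with hC
  have hprod : ∀ k ∈ K0, ∀ k' ∈ K0, ∀ m : ℝ, 2 * m ≤ wordLength S k → 2 * m ≤ wordLength S k' →
      m - C ≤ gprod d 1 k k' := by
    intro k hk k' hk' m hm hm'
    by_contra! hlt
    have g1 := hsq k hk
    have g2 := hsq k' hk'
    have g3 := hsq (k * k') (K0.mul_mem hk hk')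
    have x1 : d k⁻¹ k' = wordLength S (k * k') := by rw [hdd]; unfold wordDist; rw [inv_inv]
    have x2 : d (k * k') k = wordLength S k' := by
      rw [hd.symm, hdd]; unfold wordDist; rw [inv_mul_cancel_left]
    have x3 : d (k * k')⁻¹ k'⁻¹ = wordLength S k := by
      rw [hdd]; unfold wordDist
      rw [show (k * k')⁻¹⁻¹ * k'⁻¹ = k by group]
    -- contrapositive of hyperbolicity
    have a1 : gprod d 1 k⁻¹ k' ≤ gprod d 1 k k' + δ := by
      by_contra! hh
      have := gprod_min hy 1 k k⁻¹ k' (min (gprod d 1 k k⁻¹) (gprod d 1 k⁻¹ k')) (min_le_left _ _) (min_le_right _ _)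
      rcases min_choice (gprod d 1 k k⁻¹) (gprod d 1 k⁻¹ k') with h | h <;> rw [h] at this <;> linarith
    have a2 : gprod d 1 k k'⁻¹ ≤ gprod d 1 k k' + δ := by
      by_contra! hh
      have := gprod_min hy 1 k k'⁻¹ k' (min (gprod d 1 k k'⁻¹) (gprod d 1 k'⁻¹ k')) (min_le_left _ _) (min_le_right _ _)
      rw [gprod_symm hd 1 k'⁻¹ k'] at this
      rcases min_choice (gprod d 1 k k'⁻¹) (gprod d 1 k' k'⁻¹) with h | h <;> rw [h] at this <;> linarith
    have b0 : gprod d 1 k⁻¹ k' = ((wordLength S k : ℝ) + wordLength S k' - wordLength S (k * k')) / 2 := by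
      unfold gprod; rw [hs1, hs1, hi, x1]
    have b1 : gprod d 1 k (k * k') = ((wordLength S k : ℝ) + wordLength S (k * k') - wordLength S k') / 2 := by
      unfold gprod; rw [hs1, hs1, hd.symm k, x2]
    have b3 : gprod d 1 (k * k')⁻¹ k'⁻¹ = ((wordLength S (k * k') : ℝ) + wordLength S k' - wordLength S k) / 2 := by
      unfold gprod; rw [hs1, hs1, x3, hi, hi]
    have c1 := gprod_min hy 1 k (k * k') (k * k')⁻¹ (m + 4 * δ - δ) (by linarith) (by linarith)
    have c2 := gprod_min hy 1 k (k * k')⁻¹ k'⁻¹ (m + 4 * δ - δ - δ) c1 (by linarith)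
    linarith
  -- counting
  have hfin := wd_ball_finite hS (6 * C + 6 * δ)
  obtain ⟨F, hFK, hFc⟩ := hinf.exists_subset_card_eq (hfin.toFinset.card + 1)
  obtain ⟨T, hT⟩ : ∃ T : ℕ, ∀ f ∈ F, wordLength S f ≤ T := ⟨F.sup (fun f => wordLength S f), fun f hf => Finset.le_sup (f := fun f => wordLength S f) hf⟩
  obtain ⟨k, hkK, hkbig⟩ : ∃ k ∈ K0, (2 * T + T + 6 * C + 2 : ℝ) < wordLength S k := by
    by_contra! hc
    exact hinf ((wd_ball_finite hS _).subset (fun k hk => hc k hk))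
  obtain ⟨N, g, hg0, hgN, hg⟩ := (wd_geo hS).geo (1 : Γ) k
  rw [← hdd] at hg
  have hN : (N : ℝ) = wordLength S k := by
    have := hg 0 N (by omega) le_rfl
    rw [hg0, hgN, hdd, wd_one] at this; simpa using this.symm
  have hC0 : 0 ≤ C := by linarith
  have hTN : T ≤ N := by
    have : (T : ℝ) ≤ N := by linarith [Nat.cast_nonneg (α := ℝ) T]
    exact_mod_cast this
  have hm1 := hg 0 T (by omega) hTN
  have hm2 := hg T N hTN le_rfl
  rw [hg0] at hm1; rw [hgN] at hm2
  set m := g T with hm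
  push_cast at hm1
  have hT0 : (0:ℝ) ≤ T := Nat.cast_nonneg _
  have claim : ∀ f ∈ F, (wordLength S (m⁻¹ * f * m) : ℝ) ≤ 6 * C + 6 * δ := by
    intro f hf
    have hfK : f ∈ K0 := hFK hf
    have hfT : (wordLength S f : ℝ) ≤ T := by exact_mod_cast hT f hf
    have hkf := K0.mul_mem hfK hkK
    have t1 : (wordLength S k : ℝ) ≤ wordLength S f + wordLength S (f * k) := by
      have := wl_mul hS f⁻¹ (f * k)
      rw [inv_mul_cancel_left, wl_inv hS] at this
      exact_mod_cast this
    -- f⁻¹ and k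
    have p1 := hprod f⁻¹ (K0.inv_mem hfK) k hkK (wordLength S f / 2) (by rw [hi]; linarith) (by linarith)
    have p2 := hprod f hfK (f * k) hkf (wordLength S f / 2) (by linarith) (by linarith)
    have x1 : d f⁻¹ k = wordLength S (f * k) := by rw [hdd]; unfold wordDist; rw [inv_inv]
    have x2 : d f (f * k) = wordLength S k := by rw [hdd]; unfold wordDist; rw [inv_mul_cancel_left]
    have q2 : (wordLength S k : ℝ) ≤ wordLength S (f * k) + 2 * C := by
      unfold gprod at p2; rw [hs1, hs1, x2] at p2; linarith
    have p3 := hprod k hkK (f * k) hkf (T + C) (by linarith) (by linarith)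
    -- m
    have r1 : T ≤ gprod d 1 k m := by
      unfold gprod; rw [hs1 k, hd.symm m 1, hm1, hd.symm k m, hm2]; linarith
    have r2 : d f⁻¹ m ≤ T + 2 * C + 2 * δ := by
      have := gprod_min hy 1 f⁻¹ k m (wordLength S f / 2 - C) p1 (by linarith)
      unfold gprod at this; rw [hs1, hi, hd.symm m 1, hm1] at this; linarith
    have r3 : d 1 (f * m) = d f⁻¹ m := by
      rw [hdd]; unfold wordDist; congr 2; group
    have r4 : d (f * m) (f * k) = N - T := by rw [hdd, wd_left]; exact hm2
    have r5 : T - 2 * C ≤ gprod d 1 (f * k) (f * m) := by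
      have := hd.tri 1 (f * m) (f * k)
      have e := hs1 (f * k)
      rw [hd.symm] at e
      unfold gprod
      rw [hs1, hd.symm (f * k) (f * m), r4, hd.symm (f * m) 1]
      linarith
    have r6 := gprod_min hy 1 k (f * k) (f * m) (T - 2 * C) (by linarith) r5
    have r7 := gprod_min hy 1 m k (f * m) (T - 2 * C - δ) (by rw [gprod_symm hd]; linarith) r6
    have r8 : d m (f * m) = wordLength S (m⁻¹ * f * m) := by
      rw [hdd]; unfold wordDist; rw [mul_assoc]
    unfold gprod at r7
    rw [r8, hd.symm m 1, hm1, hd.symm (f * m) 1, r3] at r7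
    linarith
  have hle := Finset.card_le_card_of_injOn (s := F) (t := hfin.toFinset) (fun f => m⁻¹ * f * m)
    (fun f hf => by simpa using claim f hf) (fun a _ b _ h => by simpa using h)
  omega

end Word

end CG


namespace CG

theorem wd_geo' {Γ : Type*} [Group Γ] {S : Set Γ} (hS : GenSet S) : Geo (wordDist S) := wd_geo hS

theorem axis {Γ : Type*} [Group Γ] {S : Set Γ} {δ C : ℝ} (hS : GenSet S) (hy : Hyp (wordDist S) δ)
    (k : Γ) (hC : 0 ≤ C) (hk : ∀ n : ℕ, (n : ℝ) ≤ C * wordLength S (k ^ n)) :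
    ∃ D : ℝ, 0 ≤ D ∧ (∀ i l j : ℤ, i ≤ l → l ≤ j → Btw (wordDist S) D (k ^ i) (k ^ l) (k ^ j)) ∧
      (∀ (i j : ℤ) (c : ℝ) (p : Γ), Btw (wordDist S) c (k ^ i) p (k ^ j) →
        ∃ l : ℤ, wordDist S p (k ^ l) ≤ D + 2 * c) := by
  have hd := wd_geo hS
  obtain ⟨D, hD, hM⟩ := morse (δ := δ) (k := wordLength S k) (A := C) hy.nn (by positivity) hC
  have hq : ∀ (i : ℤ) (n : ℕ), QG (wordDist S) (wordLength S k) C (fun t => k ^ (i + (t : ℤ))) n := by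
    intro i n
    constructor
    · intro t _
      unfold wordDist
      rw [← zpow_neg, ← zpow_add]
      rw [show -(i + (t : ℤ)) + (i + ((t + 1 : ℕ) : ℤ)) = 1 by push_cast; ring, zpow_one]
    · intro a b hab _
      have e : wordDist S (k ^ (i + (a : ℤ))) (k ^ (i + (b : ℤ))) = wordLength S (k ^ (b - a)) := by
        unfold wordDist
        rw [← zpow_neg, ← zpow_add, ← zpow_natCast k (b - a), Nat.cast_sub hab]
        congr 3; ring
      rw [e]
      have h1 := hk (b - a)
      rw [Nat.cast_sub hab] at h1
      refine h1.trans ?_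
      gcongr
      have h5 : (0:ℝ) ≤ wordLength S (k ^ (b - a)) := Nat.cast_nonneg _
      nlinarith [sq_nonneg (wordLength S (k ^ (b - a)) : ℝ), mul_nonneg h5 (sq_nonneg (wordLength S (k ^ (b - a)) : ℝ))]
  refine ⟨D, hD, ?_, ?_⟩
  · intro i l j hil hlj
    have := (hM _ hd hy _ (j - i).toNat (hq i _)).1 (l - i).toNat (by omega)
    simp only [Nat.cast_zero, add_zero] at this
    rw [Int.toNat_of_nonneg (by omega), Int.toNat_of_nonneg (by omega)] at this
    simpa using this
  · have key : ∀ (i j : ℤ) (c : ℝ) (p : Γ), i ≤ j → Btw (wordDist S) c (k ^ i) p (k ^ j) →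
        ∃ l : ℤ, wordDist S p (k ^ l) ≤ D + 2 * c := by
      intro i j c p hij hb
      have := (hM _ hd hy _ (j - i).toNat (hq i _)).2.1 c p (by
        simp only [Nat.cast_zero, add_zero]
        rw [Int.toNat_of_nonneg (by omega)]
        simpa using hb)
      obtain ⟨t, _, ht⟩ := this
      exact ⟨_, ht⟩
    intro i j c p hb
    rcases le_total i j with h | h
    · exact key i j c p h hb
    · exact key j i c p h (hb.symm hd.toMet)

/-- all the data -/
structure Setup (K G Q : Type*) [Group K] [Group G] [Group Q] where
  SK : Set K
  SG : Set G
  SQ : Set Q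
  hSK : GenSet SK
  hSG : GenSet SG
  hSQ : GenSet SQ
  δ : ℝ
  hyK : Hyp (wordDist SK) δ
  hyG : Hyp (wordDist SG) δ
  hyQ : Hyp (wordDist SQ) δ
  ι : K →* G
  π : G →* Q
  hι : Function.Injective ι
  hπ : Function.Surjective π
  hex : ι.range = π.ker
  infK : Infinite K
  infQ : Infinite Q

namespace Setup
variable {K G Q : Type*} [Group K] [Group G] [Group Q] (s : Setup K G Q)

noncomputable abbrev dK : K → K → ℝ := wordDist s.SK
noncomputable abbrev dG : G → G → ℝ := wordDist s.SG
noncomputable abbrev dQ : Q → Q → ℝ := wordDist s.SQ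
noncomputable abbrev lK (k : K) : ℝ := (wordLength s.SK k : ℝ)
noncomputable abbrev lG (k : G) : ℝ := (wordLength s.SG k : ℝ)
noncomputable abbrev lQ (k : Q) : ℝ := (wordLength s.SQ k : ℝ)

theorem gK : Geo s.dK := wd_geo s.hSK
theorem gG : Geo s.dG := wd_geo s.hSG
theorem gQ : Geo s.dQ := wd_geo s.hSQ
theorem mK : Met s.dK := s.gK.toMet
theorem mG : Met s.dG := s.gG.toMet
theorem mQ : Met s.dQ := s.gQ.toMet

theorem πι (k : K) : s.π (s.ι k) = 1 := by
  have : s.ι k ∈ s.π.ker := by rw [← s.hex]; exact ⟨k, rfl⟩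
  exact this

theorem ex_ι {g : G} (h : s.π g = 1) : ∃ k, s.ι k = g := by
  have : g ∈ s.ι.range := by rw [s.hex]; exact h
  exact this

theorem ex_fib {g h : G} (e : s.π g = s.π h) : ∃ k, h = g * s.ι k := by
  obtain ⟨k, hk⟩ := s.ex_ι (g := g⁻¹ * h) (by simp [e])
  exact ⟨k, by rw [hk]; group⟩

/-- a loxodromic element of `K`, loxodromic in `G` as well. -/
theorem ex_lox : ∃ (k : K) (C : ℝ), 0 ≤ C ∧ (∀ n : ℕ, (n : ℝ) ≤ s.lG (s.ι k ^ n)) ∧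
    ∀ n : ℕ, (n : ℝ) ≤ C * s.lK (k ^ n) := by
  have := s.infK
  have hinf : (s.ι.range : Set G).Infinite := by
    rw [MonoidHom.coe_range]; exact Set.infinite_range_of_injective s.hι
  obtain ⟨g, ⟨k, rfl⟩, hg⟩ := lox s.hSG s.hyG s.ι.range hinf
  obtain ⟨C, hC, hl⟩ := hom_lip s.hSK s.hSG s.ι
  refine ⟨k, C, hC, hg, fun n => ?_⟩
  have h1 := hg n
  have h2 := hl (k ^ n)
  rw [map_pow] at h2
  linarith

theorem triples : ∃ c : ℝ, 0 ≤ c ∧ ∀ n : ℕ, ∃ a b e : K, (n : ℝ) ≤ s.lK a ∧ (n : ℝ) ≤ s.lK b ∧ (n : ℝ) ≤ s.lK e ∧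
    gprod s.dK 1 a b ≤ c ∧ gprod s.dK 1 a e ≤ c ∧ gprod s.dK 1 b e ≤ c := by
  obtain ⟨k, C, hC, hkG, hkK⟩ := s.ex_lox
  obtain ⟨D, hD, hD1, hD2⟩ := axis s.hSK s.hyK k hC hkK
  obtain ⟨E, hE, hE1, hE2⟩ := axis (C := 1) s.hSG s.hyG (s.ι k) zero_le_one (by simpa using hkG)
  have hδ := s.hyK.nn
  -- nearest point
  have near : ∀ y : K, ∃ z : ℤ, ∀ j : ℤ, s.dK y (k ^ z) ≤ s.dK y (k ^ j) := by
    intro y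
    classical
    have hne : ∃ n : ℕ, ∃ z : ℤ, wordLength s.SK (y⁻¹ * k ^ z) = n := ⟨_, 0, rfl⟩
    obtain ⟨z, hz⟩ := Nat.find_spec hne
    refine ⟨z, fun j => ?_⟩
    have h1 := Nat.find_min' hne ⟨j, rfl⟩
    unfold dK wordDist
    rw [hz]; exact_mod_cast h1
  have nearb : ∀ (y : K) (z : ℤ), (∀ j : ℤ, s.dK y (k ^ z) ≤ s.dK y (k ^ j)) →
      ∀ j : ℤ, Btw s.dK (2 * s.δ + D + 1) y (k ^ z) (k ^ j) := by
    intro y z hz j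
    refine nearest_btw s.gK s.hyK (Set.range (fun l : ℤ => k ^ l)) ?_ y (k ^ z) ⟨z, rfl⟩ ?_ _ ⟨j, rfl⟩
    · rintro _ ⟨a, rfl⟩ _ ⟨b, rfl⟩ m hm
      obtain ⟨l, hl⟩ := hD2 a b 0 m hm
      exact ⟨_, ⟨l, rfl⟩, by simpa using hl⟩
    · rintro _ ⟨b, rfl⟩; exact hz b
  have far : ∀ n : ℕ, ∃ y : K, ∀ z : ℤ, (n : ℝ) ≤ s.dK y (k ^ z) := by
    by_contra! hno
    obtain ⟨n, hn⟩ := hno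
    obtain ⟨L, hL, hLip⟩ := hom_lip s.hSK s.hSG s.ι
    have hcov : ∀ g : G, ∃ l : ℤ, s.dG g (s.ι k ^ l) ≤ E + 2 * (E + 2 * s.δ) := by
      intro g
      set e := s.lG g + L * n with he
      have hnear : ∀ j : ℤ, ∃ z : ℤ, s.dG (g * s.ι k ^ j) (s.ι k ^ z) ≤ e := by
        intro j
        obtain ⟨y, hy⟩ := s.ex_ι (g := g * s.ι k ^ j * g⁻¹) (by simp [s.πι])
        obtain ⟨z, hz⟩ := hn y
        refine ⟨z, ?_⟩
        have h1 := hLip (y⁻¹ * k ^ z)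
        have e1 : g * s.ι k ^ j = s.ι y * g := by rw [hy]; group
        have e2 : s.dG (s.ι y) (s.ι k ^ z) = s.lG (s.ι (y⁻¹ * k ^ z)) := by
          unfold dG lG wordDist; simp
        have e3 : s.dG (s.ι y * g) (s.ι y) = s.lG g := by
          rw [s.mG.symm]; unfold dG lG wordDist; simp
        have h2 := s.mG.tri (s.ι y * g) (s.ι y) (s.ι k ^ z)
        rw [e1]
        have h3 : L * (wordLength s.SK (y⁻¹ * k ^ z) : ℝ) ≤ L * n := by
          exact mul_le_mul_of_nonneg_left hz.le hL
        linarith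
      obtain ⟨N, hN⟩ := exists_nat_gt (E + e + 2 * s.δ)
      obtain ⟨z1, h1⟩ := hnear (-(N : ℤ))
      obtain ⟨z2, h2⟩ := hnear (N : ℤ)
      have hb := hE1 (-(N : ℤ)) 0 N (by omega) (by omega)
      have hd1 : s.dG g (g * s.ι k ^ (-(N : ℤ))) = s.lG (s.ι k ^ N) := by
        unfold dG lG wordDist; rw [inv_mul_cancel_left, zpow_neg, wl_inv s.hSG, zpow_natCast]
      have hd2 : s.dG g (g * s.ι k ^ (N : ℤ)) = s.lG (s.ι k ^ N) := by
        unfold dG lG wordDist; rw [inv_mul_cancel_left, zpow_natCast]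
      have hp : gprod s.dG g (g * s.ι k ^ (-(N : ℤ))) (g * s.ι k ^ (N : ℤ)) ≤ E := by
        unfold Btw at hb
        have t0 := wd_left (S := s.SG) g (s.ι k ^ (-(N : ℤ))) (s.ι k ^ (N : ℤ))
        have t1 := wd_left (S := s.SG) g (s.ι k ^ (-(N : ℤ))) 1
        have t2 := wd_left (S := s.SG) g 1 (s.ι k ^ (N : ℤ))
        rw [mul_one] at t1 t2
        rw [zpow_zero] at hb
        unfold gprod
        have := s.mG.symm g (g * s.ι k ^ (N : ℤ))
        unfold dG at *
        linarith
      have hpp := pert s.mG s.hyG h1 h2 hp (by rw [hd1]; linarith [hkG N]) (by rw [hd2]; linarith [hkG N])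
      apply hE2 z1 z2 (E + 2 * s.δ) g
      unfold gprod at hpp
      unfold Btw
      have := s.mG.symm g (s.ι k ^ z2)
      unfold dG at *
      linarith
    have hfin : (Set.univ : Set Q).Finite := by
      refine ((wd_ball_finite s.hSG (E + 2 * (E + 2 * s.δ))).image s.π).subset ?_
      intro q _
      obtain ⟨g, rfl⟩ := s.hπ q
      obtain ⟨l, hl⟩ := hcov g⁻¹⁻¹
      rw [inv_inv] at hl
      refine ⟨(s.ι k ^ l)⁻¹ * g, ?_, by simp [s.πι]⟩
      rw [s.mG.symm] at hl
      exact hl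
    exact (Set.infinite_univ_iff.2 s.infQ) hfin
  refine ⟨2 * s.δ + D + 1, by positivity, fun n => ?_⟩
  obtain ⟨y, hy⟩ := far n
  obtain ⟨z, hz⟩ := near y
  obtain ⟨N, hN⟩ := exists_nat_gt (C * n)
  have hlen : (n : ℝ) ≤ s.lK (k ^ N) := by
    have h1 := hkK N
    by_contra! h
    have : C * s.lK (k ^ N) ≤ C * n := by gcongr
    linarith
  have hlen' : s.lK (k ^ (-(N : ℤ))) = s.lK (k ^ N) := by
    unfold lK; rw [zpow_neg, wl_inv s.hSK, zpow_natCast]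
  have hprod : ∀ j : ℤ, gprod s.dK 1 (k ^ (-z) * y) (k ^ j) ≤ 2 * s.δ + D + 1 := by
    intro j
    have hb := nearb y z hz (z + j)
    unfold Btw at hb
    have t1 := wd_left (S := s.SK) (k ^ (-z)) y (k ^ z)
    have t2 := wd_left (S := s.SK) (k ^ (-z)) (k ^ z) (k ^ (z + j))
    have t3 := wd_left (S := s.SK) (k ^ (-z)) y (k ^ (z + j))
    rw [← zpow_add, ← zpow_add] at t2
    rw [← zpow_add] at t1 t3
    rw [show -z + z = 0 by ring, zpow_zero] at t1 t2
    rw [show -z + (z + j) = j by ring] at t2 t3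
    unfold gprod
    have := s.mK.symm 1 (k ^ j)
    unfold dK at *
    linarith
  refine ⟨k ^ (-z) * y, k ^ (N : ℤ), k ^ (-(N : ℤ)), ?_, ?_, ?_, hprod _, hprod _, ?_⟩
  · have h1 := hy z
    rw [s.mK.symm] at h1
    unfold dK wordDist at h1
    rwa [← zpow_neg] at h1
  · rw [zpow_natCast]; exact hlen
  · rw [hlen']; exact hlen
  · have hb := hD1 (-(N : ℤ)) 0 N (by omega) (by omega)
    unfold Btw at hb
    rw [zpow_zero] at hb
    unfold gprod
    have := s.mK.symm (k ^ (N : ℤ)) 1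
    have := s.mK.symm (k ^ (N : ℤ)) (k ^ (-(N : ℤ)))
    unfold dK at *
    linarith

end Setup
end CG


namespace CG

/-- Coarse centers. -/
def Cen {X : Type*} (d : X → X → ℝ) (c : ℝ) (x y z m : X) : Prop :=
  Btw d c x m y ∧ Btw d c x m z ∧ Btw d c y m z

theorem Cen.mono {X : Type*} {d : X → X → ℝ} {c c' : ℝ} {x y z m : X} (h : Cen d c x y z m) (hc : c ≤ c') :
    Cen d c' x y z m := ⟨h.1.mono hc, h.2.1.mono hc, h.2.2.mono hc⟩

theorem cen_exists {X : Type*} {d : X → X → ℝ} {δ : ℝ} (hd : Geo d) (hy : Hyp d δ) (a b e : X) :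
    ∃ m, Cen d (δ + 1) a b e m := by
  obtain ⟨N, g, hg0, hgN, hg⟩ := hd.geo a b
  have hδ := hy.nn
  have hdN : d a b = N := by
    have := hg 0 N (by omega) le_rfl
    rw [hg0, hgN] at this; simpa using this
  set t := (d a b + d a e - d b e) / 2 with ht
  have ht0 : 0 ≤ t := by linarith [hd.tri b a e, hd.symm a b]
  have htN : t ≤ N := by linarith [hd.tri a b e]
  set s := ⌊t⌋₊ with hs
  have e1 : (s : ℝ) ≤ t := Nat.floor_le ht0
  have e2 : t < s + 1 := Nat.lt_floor_add_one _
  have hsN : s ≤ N := by exact_mod_cast (e1.trans htN)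
  have h1 := hg 0 s (by omega) hsN
  have h2 := hg s N hsN le_rfl
  rw [hg0] at h1; rw [hgN] at h2
  push_cast at h1
  have h5 := hy.four e a (g s) b
  have key : d (g s) e ≤ d a e - s + 2 * δ := by
    rcases h5 with h5 | h5 <;> linarith [hd.symm b e]
  refine ⟨g s, ?_, ?_, ?_⟩ <;> unfold Btw
  · linarith
  · linarith
  · linarith [hd.symm b (g s)]

theorem btw_dist {X : Type*} {d : X → X → ℝ} {δ c : ℝ} (hd : Met d) (hy : Hyp d δ) {a b m m' : X}
    (h : Btw d c a m b) (h' : Btw d c a m' b) : d m m' ≤ |d a m - d a m'| + 2 * c + 2 * δ := by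
  have h4 := hy.four m' a m b
  unfold Btw at *
  have l1 := le_abs_self (d a m - d a m')
  have l2 := neg_abs_le (d a m - d a m')
  rcases h4 with h | h <;> linarith [hd.symm m' b]

theorem cen_unique {X : Type*} {d : X → X → ℝ} {δ c : ℝ} (hd : Met d) (hy : Hyp d δ) {a b e m m' : X}
    (h : Cen d c a b e m) (h' : Cen d c a b e m') : d m m' ≤ 5 * c + 2 * δ := by
  have h1 := btw_dist hd hy h.1 h'.1
  have est : ∀ m, Cen d c a b e m → d a b + d a e - d b e - 2 * c ≤ 2 * d a m ∧
      2 * d a m ≤ d a b + d a e - d b e + 4 * c := by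
    intro m hm
    obtain ⟨q1, q2, q3⟩ := hm
    unfold Btw at *
    have := hd.tri a m b
    have := hd.tri a m e
    have := hd.tri b m e
    have := hd.symm m b
    constructor <;> linarith
  obtain ⟨a1, a2⟩ := est m h
  obtain ⟨b1, b2⟩ := est m' h'
  have : |d a m - d a m'| ≤ 3 * c := abs_le.2 ⟨by linarith, by linarith⟩
  linarith

theorem lip_of_step {X Y : Type*} {d : X → X → ℝ} {d' : Y → Y → ℝ} (hd : Geo d) (hd' : Met d') (f : X → Y)
    {C : ℝ} (h : ∀ x y, d x y ≤ 1 → d' (f x) (f y) ≤ C) (x y : X) : d' (f x) (f y) ≤ C * d x y := by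
  obtain ⟨N, g, hg0, hgN, hg⟩ := hd.geo x y
  have hdN := hg 0 N (by omega) le_rfl
  have := steps_le hd' (γ := fun i => f (g i)) (n := N) (k := C) (fun i hi => by
    apply h
    rw [hg i (i + 1) (by omega) (by omega)]; push_cast; linarith) 0 N (by omega) le_rfl
  rw [← hdN] at this
  rwa [hg0, hgN] at this

namespace Setup
variable {K G Q : Type*} [Group K] [Group G] [Group Q] (s : Setup K G Q)

noncomputable def κ : G → K := Function.invFun s.ι

theorem κι (k : K) : s.κ (s.ι k) = k := Function.leftInverse_invFun s.hι k

theorem ικ {g : G} (h : s.π g = 1) : s.ι (s.κ g) = g := by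
  obtain ⟨k, rfl⟩ := s.ex_ι h
  rw [κι]

/-- fibre metric over `q` (as a pullback, so defined everywhere). -/
noncomputable def fd (q : Q) (x y : G) : ℝ :=
  s.dK (s.κ ((Function.surjInv s.hπ q)⁻¹ * x)) (s.κ ((Function.surjInv s.hπ q)⁻¹ * y))

theorem fm (q : Q) : Met (s.fd q) where
  self _ := s.mK.self _
  symm _ _ := s.mK.symm _ _
  tri _ _ _ := s.mK.tri _ _ _

theorem fh (q : Q) : Hyp (s.fd q) s.δ where
  nn := s.hyK.nn
  four _ _ _ _ := s.hyK.four _ _ _ _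

theorem fd_coord {x : G} {q : Q} (h : s.π x = q) (a b : K) : s.fd q (x * s.ι a) (x * s.ι b) = s.dK a b := by
  obtain ⟨k, hk⟩ := s.ex_fib (g := Function.surjInv s.hπ q) (h := x) ((Function.surjInv_eq s.hπ q).trans h.symm)
  unfold fd
  have : ∀ a, s.κ ((Function.surjInv s.hπ q)⁻¹ * (x * s.ι a)) = k * a := by
    intro a
    rw [hk, mul_assoc, inv_mul_cancel_left, ← map_mul, κι]
  rw [this, this, dK, wd_left]

theorem fd_eq {x y : G} {q : Q} (h : s.π x = q) (h' : s.π y = q) : s.fd q x y = s.lK (s.κ (x⁻¹ * y)) := by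
  obtain ⟨k, rfl⟩ := s.ex_fib (h.trans h'.symm)
  have := s.fd_coord h 1 k
  rw [map_one, mul_one] at this
  rw [this, inv_mul_cancel_left, κι, dK, wd_one]

theorem fd_left {y z : G} {q : Q} (x : G) (h : s.π y = q) (h' : s.π z = q) :
    s.fd (s.π x * q) (x * y) (x * z) = s.fd q y z := by
  rw [s.fd_eq h h', s.fd_eq (by simp [h]) (by simp [h'])]
  rw [show (x * y)⁻¹ * (x * z) = y⁻¹ * z by group]

/-- geodesics in fibres -/
theorem f_geo {x y : G} {q : Q} (h : s.π x = q) (h' : s.π y = q) : ∃ (n : ℕ) (p : ℕ → G), p 0 = x ∧ p n = y ∧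
    (∀ i, s.π (p i) = q) ∧ ∀ i j, i ≤ j → j ≤ n → s.fd q (p i) (p j) = (j : ℝ) - i := by
  obtain ⟨k, rfl⟩ := s.ex_fib (h.trans h'.symm)
  obtain ⟨n, p, h0, hn, hp⟩ := s.gK.geo 1 k
  refine ⟨n, fun i => x * s.ι (p i), by simp [h0], by simp [hn], fun i => by simp [s.πι, h], ?_⟩
  intro i j hij hj
  rw [s.fd_coord h]; exact hp i j hij hj

theorem f_cen {x y z : G} {q : Q} (hx : s.π x = q) (hy : s.π y = q) (hz : s.π z = q) :
    ∃ m, s.π m = q ∧ Cen (s.fd q) (s.δ + 1) x y z m := by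
  obtain ⟨a, rfl⟩ := s.ex_fib (hx.trans hy.symm)
  obtain ⟨b, rfl⟩ := s.ex_fib (hx.trans hz.symm)
  obtain ⟨m, hm⟩ := cen_exists s.gK s.hyK 1 a b
  refine ⟨x * s.ι m, by simp [s.πι, hx], ?_⟩
  have e : x = x * s.ι 1 := by simp
  unfold Cen Btw at *
  rw [show s.fd q x (x * s.ι a) = s.dK 1 a by rw [← s.fd_coord hx]; simp,
    show s.fd q x (x * s.ι b) = s.dK 1 b by rw [← s.fd_coord hx]; simp,
    show s.fd q x (x * s.ι m) = s.dK 1 m by rw [← s.fd_coord hx]; simp, s.fd_coord hx, s.fd_coord hx,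
    s.fd_coord hx, s.fd_coord hx]
  exact hm

theorem ex_dG_le : ∃ C : ℝ, 0 ≤ C ∧ ∀ (q : Q) (x y : G), s.π x = q → s.π y = q → s.dG x y ≤ C * s.fd q x y := by
  obtain ⟨C, hC, h⟩ := hom_lip s.hSK s.hSG s.ι
  refine ⟨C, hC, fun q x y hx hy => ?_⟩
  rw [s.fd_eq hx hy]
  have := h (s.κ (x⁻¹ * y))
  rw [s.ικ (by simp [hx, hy])] at this
  exact this

theorem ex_proper (r : ℝ) : ∃ w : ℝ, 0 ≤ w ∧ ∀ (q : Q) (x y : G), s.π x = q → s.π y = q → s.dG x y ≤ r →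
    s.fd q x y ≤ w := by
  obtain ⟨w, hw⟩ := ((wd_ball_finite s.hSG r).image (fun g => s.lK (s.κ g))).bddAbove
  refine ⟨max w 0, le_max_right _ _, fun q x y hx hy h => ?_⟩
  rw [s.fd_eq hx hy]
  exact (hw ⟨x⁻¹ * y, h, rfl⟩).trans (le_max_left _ _)

theorem ex_lip : ∃ C : ℝ, 0 ≤ C ∧ ∀ x y : G, s.dQ (s.π x) (s.π y) ≤ C * s.dG x y := by
  obtain ⟨C, hC, h⟩ := hom_lip s.hSG s.hSQ s.π
  refine ⟨C, hC, fun x y => ?_⟩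
  unfold dQ; rw [wd_hom]; exact h _

/-- conjugation on `K` -/
noncomputable def conj (g : G) : K →* K :=
  MonoidHom.mk' (fun k => s.κ (g⁻¹ * s.ι k * g)) (by
    intro a b
    apply s.hι
    rw [map_mul s.ι (s.κ _) (s.κ _), s.ικ (by simp [s.πι]), s.ικ (by simp [s.πι]), s.ικ (by simp [s.πι]), map_mul]
    group)

theorem ι_conj (g : G) (k : K) : s.ι (s.conj g k) = g⁻¹ * s.ι k * g :=
  s.ικ (by simp [s.πι])

theorem conj_mul (g h : G) (k : K) : s.conj (g * h) k = s.conj h (s.conj g k) := by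
  apply s.hι
  simp only [ι_conj]; group

theorem conj_inv (g : G) (k : K) : s.conj g⁻¹ (s.conj g k) = k := by
  apply s.hι
  simp only [ι_conj]; group

theorem conj_ι (k a : K) : s.conj (s.ι k) a = k⁻¹ * a * k := by
  apply s.hι
  simp only [ι_conj, map_mul, map_inv]

theorem ex_conj (r : ℝ) : ∃ l : ℝ, 0 ≤ l ∧ ∀ g, s.lG g ≤ r → ∀ k, s.lK (s.conj g k) ≤ l * s.lK k := by
  choose C hC h using fun g => hom_lip s.hSK s.hSK (s.conj g)
  obtain ⟨w, hw⟩ := ((wd_ball_finite s.hSG r).image C).bddAbove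
  refine ⟨max w 0, le_max_right _ _, fun g hg k => (h g k).trans ?_⟩
  have : C g ≤ max w 0 := (hw ⟨g, hg, rfl⟩).trans (le_max_left _ _)
  gcongr

theorem dK_hom (f : K →* K) (a b : K) : s.dK (f a) (f b) = s.lK (f (a⁻¹ * b)) := wd_hom f a b

/-- conjugations by bounded elements preserve betweenness -/
theorem ex_conj_btw (c r : ℝ) (hc : 0 ≤ c) : ∃ c', 0 ≤ c' ∧ ∀ g, s.lG g ≤ r → ∀ a m b, Btw s.dK c a m b →
    Btw s.dK c' (s.conj g a) (s.conj g m) (s.conj g b) := by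
  obtain ⟨l, hl, hh⟩ := s.ex_conj r
  obtain ⟨D, hD, hB⟩ := bilip_btw (δ := s.δ) (l := l) (c := c) s.hyK.nn hl hc
  refine ⟨D, hD, fun g hg a m b hb => hB s.dK s.gK s.dK s.gK s.hyK (s.conj g) ?_ ?_ a m b hb⟩
  · intro x y
    rw [dK_hom]
    have := hh g hg (x⁻¹ * y)
    have e : s.dK x y = s.lK (x⁻¹ * y) := rfl
    rw [e]; linarith
  · intro x y
    rw [dK_hom]
    have := hh g⁻¹ (by unfold lG; rw [wl_inv s.hSG]; exact hg) (s.conj g (x⁻¹ * y))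
    rw [conj_inv] at this
    have e : s.dK x y = s.lK (x⁻¹ * y) := rfl
    rw [e]; linarith

/-- betweenness in fibres -/
def VB (q : Q) (c : ℝ) (u m v : G) : Prop :=
  s.π u = q ∧ s.π m = q ∧ s.π v = q ∧ Btw (s.fd q) c u m v

theorem VB.mono {s : Setup K G Q} {q : Q} {c c' : ℝ} {u m v : G} (h : s.VB q c u m v) (hc : c ≤ c') : s.VB q c' u m v :=
  ⟨h.1, h.2.1, h.2.2.1, h.2.2.2.mono hc⟩

theorem VB.symm {s : Setup K G Q} {q : Q} {c : ℝ} {u m v : G} (h : s.VB q c u m v) : s.VB q c v m u :=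
  ⟨h.2.2.1, h.2.1, h.1, h.2.2.2.symm (s.fm q)⟩

/-- transport of betweenness between fibres -/
theorem transp (c r : ℝ) (hc : 0 ≤ c) : ∃ c', 0 ≤ c' ∧ ∀ q q' u m v u' m' v', s.VB q c u m v → s.π u' = q' →
    s.π m' = q' → s.π v' = q' → s.dG u u' ≤ r → s.dG m m' ≤ r → s.dG v v' ≤ r → s.VB q' c' u' m' v' := by
  obtain ⟨c1, hc1, h1⟩ := s.ex_conj_btw c r hc
  obtain ⟨w, hw, hpr⟩ := s.ex_proper (r + r)
  refine ⟨c1 + w + w + w, by positivity, ?_⟩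
  rintro q q' u m v u' m' v' ⟨hu, hm, hv, hb⟩ hu' hm' hv' du dm dv
  obtain ⟨a, rfl⟩ := s.ex_fib (hu.trans hm.symm)
  obtain ⟨b, rfl⟩ := s.ex_fib (hu.trans hv.symm)
  set g := u⁻¹ * u' with hg
  have hgr : s.lG g ≤ r := du
  have hb' : Btw s.dK c 1 a b := by
    unfold Btw at *
    rw [← s.fd_coord hu, ← s.fd_coord hu, ← s.fd_coord hu]
    simpa using hb
  have hb2 := h1 g hgr 1 a b hb'
  have hug : s.π (u * g) = q' := by rw [hg, mul_inv_cancel_left, hu']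
  have e : ∀ a, u * g * s.ι (s.conj g a) = u * s.ι a * g := by
    intro a; rw [ι_conj]; group
  have hb3 : Btw (s.fd q') c1 u' (u * s.ι a * g) (u * s.ι b * g) := by
    unfold Btw at *
    rw [← s.fd_coord hug, ← s.fd_coord hug, ← s.fd_coord hug, e, e, e] at hb2
    have e0 : u * s.ι 1 * g = u' := by rw [map_one, mul_one, hg, mul_inv_cancel_left]
    rwa [e0] at hb2
  have near : ∀ x x', s.π (x * g) = q' → s.π x' = q' → s.dG x x' ≤ r → s.fd q' (x * g) x' ≤ w := by
    intro x x' hx hx' hxx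
    apply hpr _ _ _ hx hx'
    have : s.dG (x * g) x = s.lG g := by
      rw [s.mG.symm]; unfold dG lG wordDist; rw [inv_mul_cancel_left]
    linarith [s.mG.tri (x * g) x x']
  have hk : ∀ a, s.π (u * s.ι a * g) = q' := by
    intro a; rw [← e, map_mul, s.πι, mul_one, hug]
  refine ⟨hu', hm', hv', ?_⟩
  exact ((hb3.mid (s.fm q') (near _ m' (hk a) hm' dm)).end_right (s.fm q') (near _ v' (hk b) hv' dv)).mono
    (by linarith)

/-- sections -/
structure Sec (C : ℝ) (τ : Q → G) : Prop where
  sec : ∀ q, s.π (τ q) = q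
  lip : ∀ q q', s.dG (τ q) (τ q') ≤ C * s.dQ q q'

theorem Sec.mono {s : Setup K G Q} {C C' : ℝ} {τ : Q → G} (h : s.Sec C τ) (hC : C ≤ C') : s.Sec C' τ :=
  ⟨h.sec, fun q q' => (h.lip q q').trans (mul_le_mul_of_nonneg_right hC (s.mQ.nonneg _ _))⟩

theorem Sec.one {s : Setup K G Q} {C : ℝ} {τ : Q → G} (h : s.Sec C τ) (hC : 0 ≤ C) {q q' : Q} (hq : s.dQ q q' ≤ 1) :
    s.dG (τ q) (τ q') ≤ C := by
  have := h.lip q q'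
  nlinarith

/-- centers of sections are sections -/
theorem cen_sec (C c : ℝ) (hC : 0 ≤ C) (hc : 0 ≤ c) : ∃ C', 0 ≤ C' ∧ ∀ τ1 τ2 τ3 τ : Q → G, s.Sec C τ1 → s.Sec C τ2 → s.Sec C τ3 →
    (∀ q, s.π (τ q) = q) → (∀ q, Cen (s.fd q) c (τ1 q) (τ2 q) (τ3 q) (τ q)) → s.Sec C' τ := by
  obtain ⟨c1, hc1, htr⟩ := s.transp c C hc
  obtain ⟨L, hL, hLip⟩ := s.ex_dG_le
  set u := 5 * max c c1 + 2 * s.δ with hu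
  have hu0 : 0 ≤ u := by have := s.hyK.nn; have := le_max_left c c1; linarith
  refine ⟨C + L * u, by positivity, ?_⟩
  intro τ1 τ2 τ3 τ h1 h2 h3 hτ hcen
  refine ⟨hτ, lip_of_step s.gQ s.mG τ ?_⟩
  intro q q' hq
  set g := (τ1 q)⁻¹ * τ1 q' with hg
  have hgC : s.lG g ≤ C := h1.one hC hq
  have hd0 : s.dG (τ q) (τ q * g) = s.lG g := by unfold dG lG wordDist; rw [inv_mul_cancel_left]
  have hpg : s.π (τ q * g) = q' := by rw [hg]; simp [hτ, h1.sec]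
  obtain ⟨k1, k2, k3⟩ := hcen q
  have t1 := htr q q' _ _ _ (τ1 q') (τ q * g) (τ2 q') ⟨h1.sec q, hτ q, h2.sec q, k1⟩ (h1.sec _) hpg (h2.sec _)
    (h1.one hC hq) (by rw [hd0]; exact hgC) (h2.one hC hq)
  have t2 := htr q q' _ _ _ (τ1 q') (τ q * g) (τ3 q') ⟨h1.sec q, hτ q, h3.sec q, k2⟩ (h1.sec _) hpg (h3.sec _)
    (h1.one hC hq) (by rw [hd0]; exact hgC) (h3.one hC hq)
  have t3 := htr q q' _ _ _ (τ2 q') (τ q * g) (τ3 q') ⟨h2.sec q, hτ q, h3.sec q, k3⟩ (h2.sec _) hpg (h3.sec _)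
    (h2.one hC hq) (by rw [hd0]; exact hgC) (h3.one hC hq)
  have hun := cen_unique (s.fm q') (s.fh q') (c := max c c1)
    (Cen.mono (⟨t1.2.2.2, t2.2.2.2, t3.2.2.2⟩ : Cen (s.fd q') c1 _ _ _ _) (le_max_right _ _))
    ((hcen q').mono (le_max_left _ _))
  have h5 := hLip q' _ _ hpg (hτ q')
  have h6 := s.mG.tri (τ q) (τ q * g) (τ q')
  have h7 : L * s.fd q' (τ q * g) (τ q') ≤ L * u := by gcongr
  linarith

end Setup
end CG


namespace CG

theorem pertB {X : Type*} {d : X → X → ℝ} {δ : ℝ} (hd : Met d) (hy : Hyp d δ) {o y y' z z' : X}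
    {e M : ℝ} (hz : d y z ≤ e) (hz' : d y' z' ≤ e) (hp : Btw d M y o y')
    (h1 : M + e + 2 * δ < d o y) (h2 : M + e + 2 * δ < d o y') : Btw d (M + 2 * δ) z o z' := by
  have := pert hd hy (M := M) hz hz' (by unfold gprod; unfold Btw at hp; linarith [hd.symm o y']) h1 h2
  unfold gprod at this; unfold Btw
  linarith [hd.symm o z']

theorem pertC {X : Type*} {d : X → X → ℝ} {δ : ℝ} (hd : Met d) (hy : Hyp d δ) {o a b c a' b' c' : X}
    {e M : ℝ} (ha : d a a' ≤ e) (hb : d b b' ≤ e) (hc : d c c' ≤ e) (hp : Cen d M a b c o)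
    (h1 : M + e + 2 * δ < d o a) (h2 : M + e + 2 * δ < d o b) (h3 : M + e + 2 * δ < d o c) :
    Cen d (M + 2 * δ) a' b' c' o :=
  ⟨pertB hd hy ha hb hp.1 h1 h2, pertB hd hy ha hc hp.2.1 h1 h3, pertB hd hy hb hc hp.2.2 h2 h3⟩

theorem wd_btw {Γ : Type*} [Group Γ] {S : Set Γ} (g : Γ) {c : ℝ} {x m y : Γ} :
    Btw (wordDist S) c (g * x) (g * m) (g * y) ↔ Btw (wordDist S) c x m y := by
  unfold Btw; rw [wd_left, wd_left, wd_left]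

theorem wd_cen {Γ : Type*} [Group Γ] {S : Set Γ} (g : Γ) {c : ℝ} {x y z m : Γ} :
    Cen (wordDist S) c (g * x) (g * y) (g * z) (g * m) ↔ Cen (wordDist S) c x y z m := by
  unfold Cen; rw [wd_btw, wd_btw, wd_btw]

theorem wd_right {Γ : Type*} [Group Γ] {S : Set Γ} (x g : Γ) : wordDist S x (x * g) = wordLength S g := by
  unfold wordDist; rw [inv_mul_cancel_left]

namespace Setup
variable {K G Q : Type*} [Group K] [Group G] [Group Q] (s : Setup K G Q)

theorem ex_sec0 : ∃ (C : ℝ) (σ : Q → G), 0 ≤ C ∧ s.Sec C σ := by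
  obtain ⟨c0, hc0, htri⟩ := s.triples
  choose a b e ha hb he hab hae hbe using htri
  have hδ := s.hyK.nn
  let U : Ultrafilter ℕ := Filter.hyperfilter ℕ
  have hU : (U : Filter ℕ) ≤ Filter.atTop := Nat.hyperfilter_le_atTop
  let Z : ℝ → G → Prop := fun c m => ∀ᶠ n in (U : Filter ℕ), Cen s.dK c (s.conj m (a n)) (s.conj m (b n)) (s.conj m (e n)) 1
  -- growth
  have grow : ∀ (m : G) (R : ℝ), ∀ᶠ n in (U : Filter ℕ), R < s.dK 1 (s.conj m (a n)) ∧ R < s.dK 1 (s.conj m (b n)) ∧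
      R < s.dK 1 (s.conj m (e n)) := by
    intro m R
    obtain ⟨l, hl, hh⟩ := s.ex_conj (s.lG m⁻¹)
    obtain ⟨N, hN⟩ := exists_nat_gt (l * R)
    refine ((Filter.eventually_ge_atTop N).filter_mono hU).mono fun n hn => ?_
    have key : ∀ x : K, (n : ℝ) ≤ s.lK x → R < s.dK 1 (s.conj m x) := by
      intro x hx
      have h1 := hh m⁻¹ le_rfl (s.conj m x)
      rw [conj_inv] at h1
      rw [dK, wd_one]
      by_contra! hcon
      have h2 : l * s.lK (s.conj m x) ≤ l * R := by gcongr
      have h3 : (N : ℝ) ≤ n := by exact_mod_cast hn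
      linarith
    exact ⟨key _ (ha n), key _ (hb n), key _ (he n)⟩
  have toB : ∀ x y, gprod s.dK 1 x y ≤ c0 → Btw s.dK c0 x 1 y := by
    intro x y h
    unfold gprod at h; unfold Btw; linarith [s.mK.symm 1 y]
  -- change of basepoint
  have chg : ∀ (c : ℝ) (m : G) (k : K), (∀ᶠ n in (U : Filter ℕ), Cen s.dK c (s.conj m (a n)) (s.conj m (b n)) (s.conj m (e n)) k) →
      Z (c + 2 * s.δ) (m * s.ι k) := by
    intro c m k h
    filter_upwards [h, grow m (c + s.lK k + 2 * s.δ + s.lK k)] with n hn hg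
    have h1 := (wd_cen k⁻¹).2 hn
    rw [inv_mul_cancel] at h1
    simp only [s.conj_mul, s.conj_ι]
    have far : ∀ x, c + s.lK k + 2 * s.δ + s.lK k < s.dK 1 x → c + s.lK k + 2 * s.δ < s.dK 1 (k⁻¹ * x) := by
      intro x hx
      have t1 := wd_left (S := s.SK) k⁻¹ k x
      rw [inv_mul_cancel] at t1
      have t2 := s.mK.tri 1 k x
      have t3 := wd_one (S := s.SK) k
      unfold dK at *
      linarith
    have nr : ∀ x, s.dK (k⁻¹ * x) (k⁻¹ * x * k) ≤ s.lK k := fun x => by rw [dK, wd_right]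
    exact pertC s.mK s.hyK (nr _) (nr _) (nr _) h1 (far _ hg.1) (far _ hg.2.1) (far _ hg.2.2)
  have chg' : ∀ (c : ℝ) (m : G) (k : K), Z c (m * s.ι k) → 
      ∀ᶠ n in (U : Filter ℕ), Cen s.dK (c + 2 * s.δ) (s.conj m (a n)) (s.conj m (b n)) (s.conj m (e n)) k := by
    intro c m k h
    filter_upwards [h, grow (m * s.ι k) (c + s.lK k + 2 * s.δ)] with n hn hg
    simp only [s.conj_mul, s.conj_ι] at hn hg
    have nr : ∀ x, s.dK (k⁻¹ * x * k) (k⁻¹ * x) ≤ s.lK k := fun x => by rw [s.mK.symm, dK, wd_right]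
    have := pertC s.mK s.hyK (nr _) (nr _) (nr _) hn hg.1 hg.2.1 hg.2.2
    have h2 := (wd_cen k).2 this
    simpa using h2
  have exist : ∀ q : Q, ∃ m, s.π m = q ∧ Z (s.δ + 1 + 2 * s.δ) m := by
    intro q
    obtain ⟨g, rfl⟩ := s.hπ q
    obtain ⟨c', hc', hcb⟩ := s.ex_conj_btw c0 (s.lG g) hc0
    have h1 : ∀ n, Cen s.dK c' (s.conj g (a n)) (s.conj g (b n)) (s.conj g (e n)) 1 := by
      intro n
      have h := fun x y hxy => hcb g le_rfl x 1 y (toB x y hxy)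
      simp only [map_one] at h
      exact ⟨h _ _ (hab n), h _ _ (hae n), h _ _ (hbe n)⟩
    choose k hk using fun n => cen_exists s.gK s.hyK (s.conj g (a n)) (s.conj g (b n)) (s.conj g (e n))
    have hbd : ∀ n, s.lK (k n) ≤ 5 * max c' (s.δ + 1) + 2 * s.δ := by
      intro n
      have := cen_unique s.mK s.hyK ((h1 n).mono (le_max_left c' (s.δ + 1))) ((hk n).mono (le_max_right _ _))
      rwa [dK, wd_one] at this
    have hfin := wd_ball_finite s.hSK (5 * max c' (s.δ + 1) + 2 * s.δ)
    have hev : (⋃ x ∈ {x : K | s.lK x ≤ 5 * max c' (s.δ + 1) + 2 * s.δ}, {n | k n = x}) ∈ U := by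
      apply Filter.mem_of_superset Filter.univ_mem
      intro n _
      simp only [Set.mem_iUnion]
      exact ⟨k n, hbd n, rfl⟩
    rw [Ultrafilter.finite_biUnion_mem_iff hfin] at hev
    obtain ⟨x, -, hx⟩ := hev
    refine ⟨g * s.ι x, by simp [s.πι], chg _ g x ?_⟩
    filter_upwards [hx] with n hn
    have := hk n

    rwa [hn] at this
  choose σ hσ hZ using exist
  set c := s.δ + 1 + 2 * s.δ with hc
  have hcn : 0 ≤ c := by linarith
  obtain ⟨r, hr⟩ := ((wd_ball_finite s.hSQ 1).image (fun q => s.lG (σ q))).bddAbove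
  obtain ⟨c2, hc2, hcb⟩ := s.ex_conj_btw c r hcn
  obtain ⟨L, hL, hLip⟩ := hom_lip s.hSK s.hSG s.ι
  set B := 5 * max c2 (c + 2 * s.δ) + 2 * s.δ with hB
  have hB0 : 0 ≤ B := by have := le_max_left c2 (c + 2 * s.δ); linarith
  refine ⟨|r| + L * B, σ, by positivity, hσ, lip_of_step s.gQ s.mG σ ?_⟩
  intro q q' hq
  set s0 := σ (q⁻¹ * q') with hs0
  have hs0r : s.lG s0 ≤ r := hr ⟨q⁻¹ * q', hq, rfl⟩
  obtain ⟨k, hk⟩ := s.ex_fib (g := σ q * s0) (h := σ q') (by simp [hs0, hσ])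
  have e1 : ∀ᶠ n in (U : Filter ℕ), Cen s.dK c2 (s.conj (σ q * s0) (a n)) (s.conj (σ q * s0) (b n)) (s.conj (σ q * s0) (e n)) 1 := by
    filter_upwards [hZ q] with n hn
    simp only [s.conj_mul]
    have h := fun x y hxy => hcb s0 hs0r x 1 y hxy
    simp only [map_one] at h
    exact ⟨h _ _ hn.1, h _ _ hn.2.1, h _ _ hn.2.2⟩
  have e2 := chg' c (σ q * s0) k (by rw [← hk]; exact hZ q')
  obtain ⟨n, h1, h2⟩ := (e1.and e2).exists
  have := cen_unique s.mK s.hyK (h1.mono (le_max_left c2 (c + 2 * s.δ))) (h2.mono (le_max_right _ _))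
  rw [dK, wd_one] at this
  have t1 : s.dG (σ q) (σ q * s0) = s.lG s0 := wd_right _ _
  have t2 : s.dG (σ q * s0) (σ q') = s.lG (s.ι k) := by rw [hk]; exact wd_right _ _
  have t3 := s.mG.tri (σ q) (σ q * s0) (σ q')
  have t4 := hLip k
  have t5 : L * (wordLength s.SK k : ℝ) ≤ L * B := by gcongr
  have := le_abs_self r
  linarith

theorem ex_sec : ∃ (C : ℝ) (σ : Q → G), 0 ≤ C ∧ s.Sec C σ ∧ σ 1 = 1 := by
  obtain ⟨C, σ, hC, h⟩ := s.ex_sec0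
  have h1 : s.π (σ 1) = 1 := h.sec 1
  refine ⟨C, fun q => (σ 1)⁻¹ * σ q, hC, ⟨fun q => by simp [h1, h.sec], fun q q' => ?_⟩, by simp⟩
  rw [dG, wd_left]; exact h.lip q q'

noncomputable def Cσ : ℝ := s.ex_sec.choose
noncomputable def σ0 : Q → G := s.ex_sec.choose_spec.choose
theorem Cσ_nn : 0 ≤ s.Cσ := s.ex_sec.choose_spec.choose_spec.1
theorem σ0_sec : s.Sec s.Cσ s.σ0 := s.ex_sec.choose_spec.choose_spec.2.1
theorem σ0_one : s.σ0 1 = 1 := s.ex_sec.choose_spec.choose_spec.2.2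

/-- the section through `g` -/
noncomputable def σ (g : G) (q : Q) : G := g * s.σ0 ((s.π g)⁻¹ * q)

theorem σ_self (g : G) : s.σ g (s.π g) = g := by
  unfold σ; rw [inv_mul_cancel, σ0_one, mul_one]

theorem σ_self' {g : G} {q : Q} (h : s.π g = q) : s.σ g q = g := by
  rw [← h, σ_self]

theorem σ_sec (g : G) : s.Sec s.Cσ (s.σ g) := by
  refine ⟨fun q => ?_, fun q q' => ?_⟩
  · unfold σ; rw [map_mul, s.σ0_sec.sec]; group
  · unfold σ; rw [dG, wd_left]
    refine (s.σ0_sec.lip _ _).trans ?_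
    rw [dQ, wd_left]

theorem π_σ (g : G) (q : Q) : s.π (s.σ g q) = q := (s.σ_sec g).sec q

/-- moving the starting point of sections: nearby points give nearby values along the fibre, only pointwise -/
theorem σ_left (g h : G) (q : Q) : s.σ (g * h) (s.π g * q) = g * s.σ h q := by
  unfold σ; rw [map_mul, mul_inv_rev, mul_assoc, mul_assoc, inv_mul_cancel_left]

/-- a section through a given point, lying between two sections. -/
theorem through (C c : ℝ) (hC : 0 ≤ C) (hc : 0 ≤ c) : ∃ C', 0 ≤ C' ∧ ∀ τ1 τ2 m, s.Sec C τ1 → s.Sec C τ2 →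
    s.VB (s.π m) c (τ1 (s.π m)) m (τ2 (s.π m)) →
    ∃ τ, s.Sec C' τ ∧ τ (s.π m) = m ∧ ∀ q, s.VB q (max c (s.δ + 1)) (τ1 q) (τ q) (τ2 q) := by
  have hδ := s.hyK.nn
  obtain ⟨C', hC', h⟩ := s.cen_sec (max C s.Cσ) (max c (s.δ + 1)) (le_max_of_le_left hC) (le_max_of_le_left hc)
  refine ⟨C', hC', fun τ1 τ2 m h1 h2 hm => ?_⟩
  have ex : ∀ q, ∃ x, s.π x = q ∧ (q = s.π m → x = m) ∧ Cen (s.fd q) (max c (s.δ + 1)) (τ1 q) (τ2 q) (s.σ m q) x := by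
    intro q
    by_cases hq : q = s.π m
    · subst hq
      refine ⟨m, rfl, fun _ => rfl, hm.2.2.2.mono (le_max_left _ _), ?_, ?_⟩
      · rw [σ_self]; exact Btw.right (s.fm _) (le_max_of_le_left hc)
      · rw [σ_self]; exact Btw.right (s.fm _) (le_max_of_le_left hc)
    · obtain ⟨x, hx, hcen⟩ := s.f_cen (h1.sec q) (h2.sec q) (s.π_σ m q)
      exact ⟨x, hx, fun h => absurd h hq, hcen.mono (le_max_right _ _)⟩
  choose τ hτ hτm hcen using ex
  refine ⟨τ, h τ1 τ2 (s.σ m) τ (h1.mono (le_max_left _ _)) (h2.mono (le_max_left _ _))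
    ((s.σ_sec m).mono (le_max_right _ _)) hτ hcen, hτm _ rfl, fun q => ⟨h1.sec q, hτ q, h2.sec q, (hcen q).1⟩⟩

end Setup
end CG


namespace CG

theorem btw_order {X : Type*} {d : X → X → ℝ} {δ c : ℝ} (hd : Met d) (hy : Hyp d δ) {a b m t : X}
    (h : Btw d c a m b) (h' : Btw d c a t b) : Btw d (2 * c + δ) a m t ∨ Btw d (2 * c + δ) t m b := by
  have hc := h.nonneg hd
  have hδ := hy.nn
  have h1 := btw_dist hd hy h h'
  unfold Btw at *
  rcases le_total (d a m) (d a t) with hh | hh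
  · left
    rw [abs_of_nonpos (by linarith)] at h1
    linarith
  · right
    rw [abs_of_nonneg (by linarith)] at h1
    linarith [hd.symm m t, hd.tri a t b]

theorem btw_convex {X : Type*} {d : X → X → ℝ} {δ c D : ℝ} (hd : Met d) (hy : Hyp d δ) {x y a b p : X}
    (h : Btw d c x a y) (h' : Btw d c x b y) (hp : Btw d D a p b) : Btw d (3 * c + δ + D) x p y := by
  have h1 := btw_order hd hy h h'
  unfold Btw at *
  rcases h1 with h1 | h1
  · linarith [hd.tri x a p, hd.tri p b y]
  · linarith [hd.tri x b p, hd.tri p a y, hd.symm a b, hd.symm a p, hd.symm b p]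

theorem btw_split {X : Type*} {d : X → X → ℝ} {δ c : ℝ} (hd : Met d) (hy : Hyp d δ) {x y p : X} (z : X)
    (h : Btw d c x p y) : Btw d (c + δ) x p z ∨ Btw d (c + δ) z p y := by
  unfold Btw at *
  rcases hy.four p x z y with h1 | h1
  · left; linarith [hd.symm p z, hd.symm p y]
  · right; linarith [hd.symm p z, hd.symm p y]

/-- `p` between `x` and `a`, `a` between `x` and `y`. -/
theorem btw_left {X : Type*} {d : X → X → ℝ} {c D : ℝ} (hd : Met d) {x y a p : X}
    (h : Btw d c x a y) (hp : Btw d D x p a) : Btw d (c + D) x p y := by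
  unfold Btw at *
  linarith [hd.tri p a y]

theorem btw_right {X : Type*} {d : X → X → ℝ} {c D : ℝ} (hd : Met d) {x y a p : X}
    (h : Btw d c x a y) (hp : Btw d D a p y) : Btw d (c + D) x p y := by
  unfold Btw at *
  linarith [hd.tri x a p]

namespace Setup
variable {K G Q : Type*} [Group K] [Group G] [Group Q] (s : Setup K G Q)

/-- coarse centers in nearby fibres are close -/
theorem cen_transp (c r : ℝ) (hc : 0 ≤ c) : ∃ D, 0 ≤ D ∧ ∀ q q' a b e m a' b' e' m',
    s.π a = q → s.π b = q → s.π e = q → s.π m = q → s.π a' = q' → s.π b' = q' → s.π e' = q' → s.π m' = q' →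
    Cen (s.fd q) c a b e m → Cen (s.fd q') c a' b' e' m' → s.dG a a' ≤ r → s.dG b b' ≤ r → s.dG e e' ≤ r →
    s.dG m m' ≤ D := by
  obtain ⟨c1, hc1, htr⟩ := s.transp c r hc
  obtain ⟨L, hL, hLip⟩ := s.ex_dG_le
  set u := 5 * max c c1 + 2 * s.δ with hu
  have hu0 : 0 ≤ u := by have := s.hyK.nn; have := le_max_left c c1; linarith
  refine ⟨|r| + L * u, by positivity, ?_⟩
  intro q q' a b e m a' b' e' m' ha hb he hm ha' hb' he' hm' h h' da db de
  set g := a⁻¹ * a' with hg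
  have hgC : s.lG g ≤ r := da
  have hd0 : s.dG m (m * g) = s.lG g := wd_right _ _
  have hpg : s.π (m * g) = q' := by rw [hg]; simp [hm, ha, ha']
  obtain ⟨k1, k2, k3⟩ := h
  have dm : s.dG m (m * g) ≤ r := by rw [hd0]; exact hgC
  have t1 := htr q q' _ _ _ a' (m * g) b' ⟨ha, hm, hb, k1⟩ ha' hpg hb' da dm db
  have t2 := htr q q' _ _ _ a' (m * g) e' ⟨ha, hm, he, k2⟩ ha' hpg he' da dm de
  have t3 := htr q q' _ _ _ b' (m * g) e' ⟨hb, hm, he, k3⟩ hb' hpg he' db dm de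
  have hun := cen_unique (s.fm q') (s.fh q') (c := max c c1)
    (Cen.mono (⟨t1.2.2.2, t2.2.2.2, t3.2.2.2⟩ : Cen (s.fd q') c1 _ _ _ _) (le_max_right _ _))
    (h'.mono (le_max_left _ _))
  have h5 := hLip q' _ _ hpg hm'
  have h6 := s.mG.tri m (m * g) m'
  have h7 : L * s.fd q' (m * g) m' ≤ L * u := by gcongr
  have := le_abs_self r
  linarith

/-- ladder projection -/
noncomputable def P (x y z : G) : G := (s.f_cen (s.π_σ x (s.π z)) (s.π_σ y (s.π z)) (rfl : s.π z = s.π z)).choose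

theorem π_P (x y z : G) : s.π (s.P x y z) = s.π z :=
  (s.f_cen (s.π_σ x (s.π z)) (s.π_σ y (s.π z)) (rfl : s.π z = s.π z)).choose_spec.1

theorem P_cen (x y z : G) : Cen (s.fd (s.π z)) (s.δ + 1) (s.σ x (s.π z)) (s.σ y (s.π z)) z (s.P x y z) :=
  (s.f_cen (s.π_σ x (s.π z)) (s.π_σ y (s.π z)) (rfl : s.π z = s.π z)).choose_spec.2

theorem P_vb (x y z : G) : s.VB (s.π z) (s.δ + 1) (s.σ x (s.π z)) (s.P x y z) (s.σ y (s.π z)) :=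
  ⟨s.π_σ _ _, s.π_P _ _ _, s.π_σ _ _, (s.P_cen x y z).1⟩

theorem P_near (x y : G) {c : ℝ} {m : G} (h : s.VB (s.π m) c (s.σ x (s.π m)) m (s.σ y (s.π m))) :
    s.fd (s.π m) m (s.P x y m) ≤ 5 * max c (s.δ + 1) + 2 * s.δ := by
  have hc := h.2.2.2.nonneg (s.fm _)
  have hc' : 0 ≤ max c (s.δ + 1) := le_max_of_le_left hc
  exact cen_unique (s.fm _) (s.fh _) (a := s.σ x (s.π m)) (b := s.σ y (s.π m)) (e := m)
    ⟨h.2.2.2.mono (le_max_left _ _), Btw.right (s.fm _) hc', Btw.right (s.fm _) hc'⟩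
    ((s.P_cen x y m).mono (le_max_right _ _))

theorem P_nearG (c : ℝ) (hc : 0 ≤ c) : ∃ D, 0 ≤ D ∧ ∀ x y m, s.VB (s.π m) c (s.σ x (s.π m)) m (s.σ y (s.π m)) →
    s.dG m (s.P x y m) ≤ D := by
  obtain ⟨L, hL, hLip⟩ := s.ex_dG_le
  have hδ := s.hyK.nn
  have h0 : 0 ≤ max c (s.δ + 1) := le_max_of_le_left hc
  refine ⟨L * (5 * max c (s.δ + 1) + 2 * s.δ), by positivity, fun x y m h => ?_⟩
  refine (hLip _ m _ rfl (s.π_P x y m)).trans ?_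
  have := s.P_near x y h
  gcongr

theorem P_lip : ∃ C, 0 ≤ C ∧ ∀ x y z w, s.dG (s.P x y z) (s.P x y w) ≤ C * s.dG z w := by
  obtain ⟨Cl, hCl, hl⟩ := s.ex_lip
  have hδ := s.hyK.nn
  obtain ⟨D, hD, h⟩ := s.cen_transp (s.δ + 1) (max (s.Cσ * Cl) 1) (by linarith)
  refine ⟨D, hD, fun x y => lip_of_step s.gG s.mG (s.P x y) ?_⟩
  intro z w hzw
  have hq : s.dQ (s.π z) (s.π w) ≤ Cl := by
    refine (hl z w).trans ?_
    nlinarith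
  have hs : ∀ x, s.dG (s.σ x (s.π z)) (s.σ x (s.π w)) ≤ max (s.Cσ * Cl) 1 := by
    intro x
    refine ((s.σ_sec x).lip _ _).trans (le_max_of_le_left ?_)
    have := s.Cσ_nn
    gcongr
  exact h _ _ _ _ _ _ _ _ _ _ (s.π_σ x _) (s.π_σ y _) rfl (s.π_P _ _ _) (s.π_σ x _) (s.π_σ y _) rfl (s.π_P _ _ _)
    (s.P_cen x y z) (s.P_cen x y w) (hs x) (hs y) (le_max_of_le_right hzw)

theorem vb_left (x y : G) {c : ℝ} (hc : 0 ≤ c) : s.VB (s.π x) c (s.σ x (s.π x)) x (s.σ y (s.π x)) :=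
  ⟨s.π_σ _ _, rfl, s.π_σ _ _, by rw [s.σ_self]; exact Btw.left (s.fm _) hc⟩

theorem vb_right (x y : G) {c : ℝ} (hc : 0 ≤ c) : s.VB (s.π y) c (s.σ x (s.π y)) y (s.σ y (s.π y)) :=
  ⟨s.π_σ _ _, rfl, s.π_σ _ _, by rw [s.σ_self]; exact Btw.right (s.fm _) hc⟩

/-- ladders are quasiconvex -/
theorem lad_qc (R : ℝ) (hR : 0 ≤ R) : ∃ D, 0 ≤ D ∧ ∀ x y p, Btw s.dG R x p y → s.dG p (s.P x y p) ≤ D := by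
  have hδ := s.hyK.nn
  obtain ⟨C1, hC1, h1⟩ := s.P_lip
  obtain ⟨C2, hC2, h2⟩ := s.P_nearG (s.δ + 1) (by linarith)
  obtain ⟨D, hD, h⟩ := quasi_retract (δ := s.δ) (C := max C1 C2) (c := R) hδ (le_max_of_le_left hC1) hR
  refine ⟨D, hD, fun x y p hp => ?_⟩
  refine h s.dG s.gG s.hyG (s.P x y) ?_ ?_ x y ?_ ?_ p hp
  · intro z w
    refine (h1 x y z w).trans ?_
    have := s.mG.nonneg z w
    have := le_max_left C1 C2
    nlinarith
  · intro z
    refine le_trans ?_ (le_max_right _ _)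
    rw [s.mG.symm]
    refine h2 x y _ ?_
    rw [s.π_P]; exact s.P_vb x y z
  · exact (h2 x y x (s.vb_left x y (by linarith))).trans (le_max_right _ _)
  · exact (h2 x y y (s.vb_right x y (by linarith))).trans (le_max_right _ _)

/-- sections inside a ladder -/
structure LadSec (C c : ℝ) (x y : G) (τ : Q → G) : Prop where
  sec : s.Sec C τ
  lad : ∀ q, s.VB q c (s.σ x q) (τ q) (s.σ y q)

theorem LadSec.symm {s : Setup K G Q} {C c : ℝ} {x y : G} {τ : Q → G} (h : s.LadSec C c x y τ) : s.LadSec C c y x τ :=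
  ⟨h.sec, fun q => (h.lad q).symm⟩

theorem LadSec.mono {s : Setup K G Q} {C c C' c' : ℝ} {x y : G} {τ : Q → G} (h : s.LadSec C c x y τ) (hC : C ≤ C')
    (hc : c ≤ c') : s.LadSec C' c' x y τ :=
  ⟨h.sec.mono hC, fun q => (h.lad q).mono hc⟩

/-- a section in the ladder passes near the geodesic -/
theorem crossing (C c : ℝ) (hC : 0 ≤ C) (hc : 0 ≤ c) : ∃ R, 0 ≤ R ∧ ∀ x y τ, s.LadSec C c x y τ →
    ∃ v, Btw s.dG R x (τ v) y := by
  have hδ := s.hyK.nn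
  obtain ⟨D1, hD1, hqc⟩ := s.lad_qc 0 le_rfl
  obtain ⟨Cl, hCl, hl⟩ := s.ex_lip
  obtain ⟨CP, hCP, hP⟩ := s.P_lip
  obtain ⟨L, hL, hLip⟩ := s.ex_dG_le
  set c0 := max c (s.δ + 1) with hc0
  have hc00 : 0 ≤ c0 := le_max_of_le_left hc
  set c1 := 2 * c0 + s.δ + (5 * c0 + 2 * s.δ) with hc1
  have hCσ := s.Cσ_nn
  obtain ⟨c2, hc2, htr⟩ := s.transp c1 (s.Cσ * Cl + CP + C * Cl) (by positivity)
  set B := c + c1 + max c1 c2 with hB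
  have hm0 : 0 ≤ max c1 c2 := le_max_of_le_right hc2
  have hB0 : 0 ≤ B := by positivity
  refine ⟨0 + (D1 + L * B), by positivity, fun x y τ hτ => ?_⟩
  obtain ⟨N, b, hb0, hbN, hb⟩ := s.gG.geo x y
  let m : ℕ → G := fun i => s.P x y (b i)
  let q : ℕ → Q := fun i => s.π (b i)
  have hmv : ∀ i, s.VB (q i) c0 (s.σ x (q i)) (m i) (s.σ y (q i)) := fun i => (s.P_vb x y (b i)).mono (le_max_right _ _)
  have htv : ∀ i, s.VB (q i) c0 (s.σ x (q i)) (τ (q i)) (s.σ y (q i)) := fun i => (hτ.lad _).mono (le_max_left _ _)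
  have dich : ∀ i, s.VB (q i) c1 (s.σ x (q i)) (m i) (τ (q i)) ∨ s.VB (q i) c1 (τ (q i)) (m i) (s.σ y (q i)) := by
    intro i
    obtain ⟨e1, e2, e3, e4⟩ := hmv i
    obtain ⟨f1, f2, f3, f4⟩ := htv i
    rcases btw_order (s.fm _) (s.fh _) e4 f4 with h | h
    · left; exact ⟨e1, e2, f2, h.mono (by linarith)⟩
    · right; exact ⟨f2, e2, e3, h.mono (by linarith)⟩
  have right_N : s.VB (q N) c1 (τ (q N)) (m N) (s.σ y (q N)) := by
    refine ⟨(htv N).2.1, (hmv N).2.1, (hmv N).2.2.1, ?_⟩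
    have e : s.σ y (q N) = b N := by show s.σ y (s.π (b N)) = b N; rw [hbN]; exact s.σ_self y
    rw [e]
    have hn := s.P_near x y (c := s.δ + 1) (m := b N) (by rw [hbN]; exact s.vb_right x y (by linarith))
    rw [max_self] at hn
    refine ((Btw.right (s.fm _) (le_refl (0:ℝ)) : Btw (s.fd (q N)) 0 (τ (q N)) (b N) (b N)).mid (s.fm _) hn).mono ?_
    have := le_max_right c (s.δ + 1)
    linarith
  have left_0 : s.VB (q 0) c1 (s.σ x (q 0)) (m 0) (τ (q 0)) := by
    refine ⟨(hmv 0).1, (hmv 0).2.1, (htv 0).2.1, ?_⟩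
    have e : s.σ x (q 0) = b 0 := by show s.σ x (s.π (b 0)) = b 0; rw [hb0]; exact s.σ_self x
    rw [e]
    have hn := s.P_near x y (c := s.δ + 1) (m := b 0) (by rw [hb0]; exact s.vb_left x y (by linarith))
    rw [max_self] at hn
    refine ((Btw.left (s.fm _) (le_refl (0:ℝ)) : Btw (s.fd (q 0)) 0 (b 0) (b 0) (τ (q 0))).mid (s.fm _) hn).mono ?_
    have := le_max_right c (s.δ + 1)
    linarith
  have hex : ∃ j, j ≤ N ∧ s.VB (q j) c1 (τ (q j)) (m j) (s.σ y (q j)) ∧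
      s.VB (q j) (max c1 c2) (s.σ x (q j)) (m j) (τ (q j)) := by
    classical
    have hne : ∃ j, s.VB (q j) c1 (τ (q j)) (m j) (s.σ y (q j)) := ⟨N, right_N⟩
    refine ⟨Nat.find hne, Nat.find_min' hne right_N, Nat.find_spec hne, ?_⟩
    rcases hj : Nat.find hne with _ | i
    · exact left_0.mono (le_max_left _ _)
    · have hi := Nat.find_min hne (m := i) (by omega)
      have hjN : i + 1 ≤ N := by rw [← hj]; exact Nat.find_min' hne right_N
      have hL := (dich i).resolve_right hi
      have hstep : s.dG (b i) (b (i + 1)) = 1 := by rw [hb i (i+1) (by omega) hjN]; push_cast; ring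
      have hqq : s.dQ (q i) (q (i+1)) ≤ Cl := by
        have := hl (b i) (b (i+1)); rw [hstep] at this; linarith
      refine (htr _ (q (i+1)) _ _ _ (s.σ x (q (i+1))) (m (i+1)) (τ (q (i+1))) hL (hmv _).1 (hmv _).2.1 (htv _).2.1 ?_ ?_ ?_).mono
        (le_max_right _ _)
      · have h1 := (s.σ_sec x).lip (q i) (q (i+1))
        have h2 : s.Cσ * s.dQ (q i) (q (i+1)) ≤ s.Cσ * Cl := by gcongr
        have h3 : 0 ≤ C * Cl := by positivity
        linarith
      · have h1 := hP x y (b i) (b (i+1))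
        rw [hstep] at h1
        have h3 : 0 ≤ C * Cl := by positivity
        have h4 : 0 ≤ s.Cσ * Cl := by positivity
        linarith
      · have h1 := hτ.sec.lip (q i) (q (i+1))
        have h2 : C * s.dQ (q i) (q (i+1)) ≤ C * Cl := by gcongr
        have h4 : 0 ≤ s.Cσ * Cl := by positivity
        linarith
  obtain ⟨j, hjN, hR, hLf⟩ := hex
  refine ⟨q j, ?_⟩
  have hfd : s.fd (q j) (m j) (τ (q j)) ≤ B := by
    have h1 := hR.2.2.2
    have h2 := hLf.2.2.2
    have h3 := (hτ.lad (q j)).2.2.2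
    unfold Btw at h1 h2 h3
    have := (s.fm (q j)).tri (s.σ x (q j)) (m j) (s.σ y (q j))
    linarith [(s.fm (q j)).symm (m j) (τ (q j))]
  have hbb : Btw s.dG 0 x (b j) y := by
    unfold Btw
    have e1 := hb 0 j (by omega) hjN
    have e2 := hb j N hjN le_rfl
    have e3 := hb 0 N (by omega) le_rfl
    rw [hb0] at e1 e3; rw [hbN] at e2 e3
    rw [e1, e2, e3]; push_cast; linarith
  refine hbb.mid s.mG ?_
  have h1 := hqc x y (b j) hbb
  have h2 := hLip _ _ _ (hmv j).2.1 (htv j).2.1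
  have h3 : L * s.fd (q j) (m j) (τ (q j)) ≤ L * B := by gcongr
  have h4 := s.mG.tri (b j) (m j) (τ (q j))
  linarith

/-- concatenated lifts are quasigeodesics -/
theorem lift (C r e : ℝ) (hC : 0 ≤ C) (hr : 0 ≤ r) (he : 0 ≤ e) : ∃ D, 0 ≤ D ∧ ∀ τ τ' v1 q v, s.Sec C τ → s.Sec C τ' →
    s.dG (τ' q) (τ q) ≤ r → Btw s.dQ e v1 q v → Btw s.dG D (τ' v1) (τ q) (τ v) := by
  obtain ⟨Cl, hCl, hl⟩ := s.ex_lip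
  obtain ⟨D, hD, hM⟩ := morse (δ := s.δ) (k := C + r) (A := Cl + 2 * e) s.hyG.nn (by positivity) (by positivity)
  refine ⟨D + r, by positivity, fun τ τ' v1 q v hτ hτ' hq hb => ?_⟩
  obtain ⟨n, a, γ, han, h0, ha, hn, hγ⟩ := concat s.gQ hb
  let Γ : ℕ → G := fun i => if i < a then τ' (γ i) else τ (γ i)
  have hπ : ∀ i, s.π (Γ i) = γ i := by
    intro i; simp only [Γ]; split_ifs
    · exact hτ'.sec _
    · exact hτ.sec _
  have hQG : QG s.dG (C + r) (Cl + 2 * e) Γ n := by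
    constructor
    · intro i hi
      have h1 := (hγ i (i+1) (by omega) hi).1
      push_cast at h1
      have h2 : s.dQ (γ i) (γ (i+1)) ≤ 1 := by linarith
      simp only [Γ]
      split_ifs with k1 k2 k2
      · linarith [hτ'.one hC h2]
      · have : i + 1 = a := by omega
        rw [this, ha] at h2 ⊢
        linarith [hτ'.one hC h2, s.mG.tri (τ' (γ i)) (τ' q) (τ q)]
      · omega
      · linarith [hτ.one hC h2]
    · intro i j hij hj
      have h1 := (hγ i j hij hj).2
      have h2 := hl (Γ i) (Γ j)
      rw [hπ, hπ] at h2
      set t := s.dG (Γ i) (Γ j) with ht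
      have ht0 : 0 ≤ t := s.mG.nonneg _ _
      have h3 : t + 1 ≤ (t + 1) ^ 3 := by nlinarith [sq_nonneg t]
      have h4 : (Cl + 2 * e) * (t + 1) ≤ (Cl + 2 * e) * (t + 1) ^ 3 := by gcongr
      have : 0 ≤ e * t := by positivity
      nlinarith
  have h1 := (hM s.dG s.gG s.hyG Γ n hQG).1 a han
  have ea : Γ a = τ q := by simp only [Γ]; rw [if_neg (lt_irrefl _), ha]
  have en : Γ n = τ v := by simp only [Γ]; rw [if_neg (by omega), hn]
  have e0 : s.dG (Γ 0) (τ' v1) ≤ r := by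
    simp only [Γ]
    split_ifs with h
    · rw [h0, s.mG.self]; exact hr
    · have : a = 0 := by omega
      subst this
      rw [ha] at h0 ⊢
      rw [← h0, s.mG.symm]; exact hq
  rw [ea, en] at h1
  exact h1.end_left s.mG e0

end Setup
end CG


namespace CG
namespace Setup
variable {K G Q : Type*} [Group K] [Group G] [Group Q] (s : Setup K G Q)

/-- `q` is a gate of `v` in `Q1` -/
def Pr (Q1 : Subgroup Q) (E : ℝ) (v q : Q) : Prop := q ∈ Q1 ∧ ∀ q' ∈ Q1, Btw s.dQ E v q q'

theorem Pr.mono {s : Setup K G Q} {Q1 : Subgroup Q} {E E' : ℝ} {v q : Q} (h : s.Pr Q1 E v q) (hE : E ≤ E') : s.Pr Q1 E' v q :=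
  ⟨h.1, fun q' hq' => (h.2 q' hq').mono hE⟩

theorem Pr.self {s : Setup K G Q} {Q1 : Subgroup Q} {E : ℝ} {q : Q} (hE : 0 ≤ E) (h : q ∈ Q1) : s.Pr Q1 E q q :=
  ⟨h, fun _ _ => Btw.left s.mQ hE⟩

theorem Pr.move {s : Setup K G Q} {Q1 : Subgroup Q} {E e : ℝ} {v v' q : Q} (h : s.Pr Q1 E v q) (hv : s.dQ v v' ≤ e) :
    s.Pr Q1 (E + e) v' q :=
  ⟨h.1, fun q' hq' => (h.2 q' hq').end_left s.mQ hv⟩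

theorem Pr.near {s : Setup K G Q} {Q1 : Subgroup Q} {E : ℝ} {v q q' : Q} (h : s.Pr Q1 E v q) (h' : s.Pr Q1 E v q') :
    s.dQ q q' ≤ 2 * E := by
  have h1 := h.2 q' h'.1
  have h2 := h'.2 q h.1
  unfold Btw at *
  linarith [s.mQ.symm q q']

theorem Pr.far {s : Setup K G Q} {Q1 : Subgroup Q} {E : ℝ} {v q v1 q1 : Q} (h : s.Pr Q1 E v q) (h' : s.Pr Q1 E v1 q1) :
    s.dQ q1 q ≤ 2 * E + s.δ ∨ Btw s.dQ (E + s.δ) v1 q v := by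
  by_cases hh : s.dQ q1 q ≤ 2 * E + s.δ
  · exact Or.inl hh
  right
  have h1 := h.2 q1 h'.1
  have h2 := h'.2 q h.1
  unfold Btw at *
  push Not at hh
  rcases s.hyQ.four q v v1 q1 with h3 | h3 <;>
  linarith [s.mQ.symm q q1, s.mQ.symm q1 v1, s.mQ.symm v1 v, s.mQ.symm q v]

theorem gate_or {Q1 : Subgroup Q} {E0 : ℝ} (hE0 : 0 ≤ E0) (hg : ∀ v, ∃ q, s.Pr Q1 E0 v q) (A : ℝ) (hA : 0 ≤ A) :
    ∃ B, 0 ≤ B ∧ ∀ v q v1, s.Pr Q1 A v q → s.Pr Q1 B v1 q ∨ Btw s.dQ B v1 q v := by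
  have hδ := s.hyK.nn
  set M := max A E0 with hM
  have hM0 : 0 ≤ M := le_max_of_le_left hA
  refine ⟨M + (2 * M + s.δ), by positivity, fun v q v1 h => ?_⟩
  obtain ⟨q1, h1⟩ := hg v1
  have h1' := h1.mono (le_max_right A E0)
  rcases (h.mono (le_max_left A E0)).far h1' with h2 | h2
  · exact Or.inl ⟨h.1, fun q' hq' => (h1'.2 q' hq').mid s.mQ h2⟩
  · exact Or.inr (h2.mono (by linarith))

/-- the coarse lines -/
def Lp (Q1 : Subgroup Q) (A : ℝ) (x y p : G) : Prop :=
  ∃ τ v, s.LadSec A A x y τ ∧ τ (s.π p) = p ∧ s.Pr Q1 A v (s.π p) ∧ Btw s.dG A x (τ v) y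

theorem Lp.mono {s : Setup K G Q} {Q1 : Subgroup Q} {A B : ℝ} {x y p : G} (h : s.Lp Q1 A x y p) (hB : A ≤ B) : s.Lp Q1 B x y p := by
  obtain ⟨τ, v, h1, h2, h3, h4⟩ := h
  exact ⟨τ, v, h1.mono hB hB, h2, h3.mono hB, h4.mono hB⟩

theorem Lp.symm {s : Setup K G Q} {Q1 : Subgroup Q} {A : ℝ} {x y p : G} (h : s.Lp Q1 A x y p) : s.Lp Q1 A y x p := by
  obtain ⟨τ, v, h1, h2, h3, h4⟩ := h
  exact ⟨τ, v, h1.symm, h2, h3, h4.symm s.mG⟩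

theorem change {Q1 : Subgroup Q} {E0 : ℝ} (hE0 : 0 ≤ E0) (hg : ∀ v, ∃ q, s.Pr Q1 E0 v q) (A : ℝ) (hA : 0 ≤ A) :
    ∃ B, 0 ≤ B ∧ ∀ x y p τ', s.Lp Q1 A x y p → s.LadSec A A x y τ' → τ' (s.π p) = p →
      ∃ v', s.Pr Q1 B v' (s.π p) ∧ Btw s.dG B x (τ' v') y := by
  have hδ := s.hyK.nn
  obtain ⟨R, hR, hcr⟩ := s.crossing A A hA hA
  obtain ⟨B1, hB1, hgo⟩ := s.gate_or hE0 hg A hA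
  obtain ⟨D, hD, hl⟩ := s.lift A 0 B1 hA le_rfl hB1
  have hm : 0 ≤ max R A := le_max_of_le_left hR
  refine ⟨B1 + R + (3 * max R A + s.δ + D), by positivity, fun x y p τ' hp hτ' hτp => ?_⟩
  obtain ⟨τ, v, h1, h2, h3, h4⟩ := hp
  obtain ⟨v1, hv1⟩ := hcr x y τ' hτ'
  rcases hgo v (s.π p) v1 h3 with h | h
  · exact ⟨v1, h.mono (by linarith), hv1.mono (by linarith)⟩
  · refine ⟨s.π p, Pr.self (by positivity) h3.1, ?_⟩
    have := hl τ τ' v1 (s.π p) v h1.sec hτ'.sec (by rw [hτp, h2, s.mG.self]) h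
    rw [h2] at this
    rw [hτp]
    exact (btw_convex s.mG s.hyG (hv1.mono (le_max_left R A)) (h4.mono (le_max_right R A)) this).mono (by linarith)

theorem fellow (A : ℝ) (hA : 0 ≤ A) : ∃ B, 0 ≤ B ∧ ∀ R', 0 ≤ R' → ∃ L, 0 ≤ L ∧ ∀ τ x y v' v1, s.Sec A τ →
    Btw s.dG R' x (τ v') y → Btw s.dG A x (τ v1) y → ∃ v2, s.dQ v' v2 ≤ L ∧ Btw s.dG B x (τ v2) y := by
  have hδ := s.hyG.nn
  obtain ⟨D, hD, hl⟩ := s.lift A 0 0 hA le_rfl le_rfl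
  obtain ⟨Cl, hCl, hlip⟩ := s.ex_lip
  refine ⟨A + (D + s.δ), by positivity, fun R' hR' => ?_⟩
  set M := 2 * max R' A + s.δ with hM
  have hmx : 0 ≤ max R' A := le_max_of_le_left hR'
  obtain ⟨L, hL⟩ := exists_nat_gt (Cl * (M + 2 * D + s.δ + 1))
  refine ⟨L, by positivity, fun τ x y v' v1 hτ ha hb => ?_⟩
  by_cases hd : s.dQ v' v1 ≤ L
  · exact ⟨v1, hd, hb.mono (by linarith)⟩
  push Not at hd
  obtain ⟨N, g, hg0, hgN, hg⟩ := s.gQ.geo v' v1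
  have hN : s.dQ v' v1 = N := by
    have := hg 0 N (by omega) le_rfl
    rw [hg0, hgN] at this; simpa using this
  have hLN : L ≤ N := by rw [hN] at hd; exact_mod_cast hd.le
  have e1 := hg 0 L (by omega) hLN
  have e2 := hg L N hLN le_rfl
  rw [hg0] at e1; rw [hgN] at e2
  push_cast at e1
  refine ⟨g L, by linarith, ?_⟩
  have hp := hl τ τ v' (g L) v1 hτ hτ (by rw [s.mG.self]) (by unfold Btw; linarith)
  have hfar : M + 2 * D + s.δ < s.dG (τ v') (τ (g L)) := by
    have h1 := hlip (τ v') (τ (g L))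
    rw [hτ.sec, hτ.sec, e1] at h1
    by_contra! hcon
    have : Cl * s.dG (τ v') (τ (g L)) ≤ Cl * (M + 2 * D + s.δ) := by gcongr
    linarith
  set a := τ v'
  set b := τ v1
  set p := τ (g L)
  -- one-sided statement
  have key : ∀ x, Btw s.dG M x a b → Btw s.dG (D + s.δ) x p b := by
    intro x hx
    rcases btw_split s.mG s.hyG x hp with h | h
    · exfalso
      unfold Btw at *
      linarith [s.mG.symm x a, s.mG.symm p x, s.mG.tri x p b]
    · exact h
  rcases btw_order s.mG s.hyG (ha.mono (le_max_left R' A)) (hb.mono (le_max_right R' A)) with h | h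
  · exact btw_left s.mG hb (key x h)
  · exact btw_right s.mG hb ((key y (h.symm s.mG)).symm s.mG)

/-- base constants -/
theorem reduce {Q1 : Subgroup Q} {E0 : ℝ} (hE0 : 0 ≤ E0) (hg : ∀ v, ∃ q, s.Pr Q1 E0 v q) :
    ∃ A0, 0 ≤ A0 ∧ ∀ A, 0 ≤ A → ∃ D, 0 ≤ D ∧ ∀ x y p, s.Lp Q1 A x y p → ∃ p', s.dG p p' ≤ D ∧ s.Lp Q1 A0 x y p' := by
  have hδ := s.hyK.nn
  obtain ⟨C0, hC0, hth⟩ := s.through s.Cσ (s.δ + 1) s.Cσ_nn (by linarith)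
  set a0 := max C0 (s.δ + 1) with ha0
  have ha00 : 0 ≤ a0 := le_max_of_le_left hC0
  obtain ⟨R0, hR0, hcr⟩ := s.crossing a0 a0 ha00 ha00
  have hA1 : 0 ≤ max a0 R0 := le_max_of_le_left ha00
  obtain ⟨B1, hB1, hfe⟩ := s.fellow (max a0 R0) hA1
  refine ⟨a0 + E0 + B1, by positivity, fun A hA => ?_⟩
  obtain ⟨D1, hD1, hPn⟩ := s.P_nearG A hA
  set A2 := A + 2 * D1 + (s.δ + 1) + a0 with hA2
  obtain ⟨B, hB, hch⟩ := s.change hE0 hg A2 (by positivity)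
  obtain ⟨L, hL, hfe2⟩ := hfe B hB
  refine ⟨D1 + a0 * (2 * (B + L + E0)), by positivity, fun x y p hp => ?_⟩
  obtain ⟨τ, v, h1, h2, h3, h4⟩ := hp
  set q := s.π p with hq
  have hvb := h1.lad q
  rw [h2] at hvb
  have hpn := hPn x y p hvb
  set p' := s.P x y p with hp'
  have hπp' : s.π p' = q := s.π_P _ _ _
  classical
  let τ3 : Q → G := Function.update τ q p'
  have hτ3q : τ3 q = p' := Function.update_self _ _ _
  have hnear : ∀ w, s.dG (τ w) (τ3 w) ≤ D1 := by
    intro w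
    by_cases hw : w = q
    · subst hw; rw [hτ3q, h2]; exact hpn
    · have : τ3 w = τ w := Function.update_of_ne hw _ _
      rw [this, s.mG.self]; exact hD1
  have hlad3 : s.LadSec A2 A2 x y τ3 := by
    refine ⟨⟨fun w => ?_, ?_⟩, fun w => ?_⟩
    · by_cases hw : w = q
      · subst hw; rw [hτ3q]; exact hπp'
      · have : τ3 w = τ w := Function.update_of_ne hw _ _
        rw [this]; exact h1.sec.sec w
    · refine lip_of_step s.gQ s.mG τ3 fun w w' hw => ?_
      have e1 := hnear w
      have e2 := hnear w'
      have e3 := h1.sec.one hA hw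
      have e4 := s.mG.tri (τ3 w) (τ w) (τ3 w')
      have e5 := s.mG.tri (τ w) (τ w') (τ3 w')
      linarith [s.mG.symm (τ3 w) (τ w)]
    · by_cases hw : w = q
      · subst hw; rw [hτ3q]; exact (s.P_vb x y p).mono (by linarith)
      · have : τ3 w = τ w := Function.update_of_ne hw _ _
        rw [this]; exact (h1.lad w).mono (by linarith)
  have hLp3 : s.Lp Q1 A2 x y p' := by
    refine ⟨τ3, v, hlad3, by rw [hπp', hτ3q], ?_, ?_⟩
    · rw [hπp']; exact h3.mono (by linarith)
    · exact (h4.mid s.mG (hnear v)).mono (by linarith)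
  obtain ⟨τ2, hs2, hm2, hl2⟩ := hth (s.σ x) (s.σ y) p' (s.σ_sec x) (s.σ_sec y) (by rw [hπp']; exact s.P_vb x y p)
  have hlad2 : s.LadSec a0 a0 x y τ2 := by
    refine ⟨hs2.mono (le_max_left _ _), fun w => (hl2 w).mono ?_⟩
    rw [max_self]; exact le_max_right _ _
  obtain ⟨v', hv1, hv2⟩ := hch x y p' τ2 hLp3 (hlad2.mono (by linarith) (by linarith)) hm2
  obtain ⟨v1, hc1⟩ := hcr x y τ2 hlad2
  obtain ⟨v2, hd2, hb2⟩ := hfe2 τ2 x y v' v1 (hlad2.sec.mono (le_max_left _ _)) hv2 (hc1.mono (le_max_right _ _))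
  obtain ⟨q2, hq2⟩ := hg v2
  rw [hπp'] at hv1 hm2
  have hqq := ((hv1.move hd2).mono (by linarith : B + L ≤ B + L + E0)).near (hq2.mono (by linarith : E0 ≤ B + L + E0))
  refine ⟨τ2 q2, ?_, τ2, v2, hlad2.mono (by linarith) (by linarith), ?_, ?_, hb2.mono (by linarith)⟩
  · have e1 := hlad2.sec.lip q q2
    rw [hm2] at e1
    have e2 : a0 * s.dQ q q2 ≤ a0 * (2 * (B + L + E0)) := by gcongr
    linarith [s.mG.tri p p' (τ2 q2)]
  · rw [hlad2.sec.sec]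
  · rw [hlad2.sec.sec]; exact hq2.mono (by linarith)

/-- lines between nearby points are small -/
theorem adj {Q1 : Subgroup Q} (A r : ℝ) (hA : 0 ≤ A) (hr : 0 ≤ r) : ∃ D, 0 ≤ D ∧ ∀ x y p, s.π x ∈ Q1 → s.dG x y ≤ r →
    s.Lp Q1 A x y p → s.dG p x ≤ D := by
  obtain ⟨Cl, hCl, hl⟩ := s.ex_lip
  refine ⟨A * (Cl * (r + 2 * A) + 2 * A) + (r + 2 * A), by positivity, fun x y p hx hxy hp => ?_⟩
  obtain ⟨τ, v, h1, h2, h3, h4⟩ := hp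
  have e1 : s.dG x (τ v) ≤ r + 2 * A := by
    unfold Btw at h4; linarith [s.mG.nonneg (τ v) y]
  have e2 := hl x (τ v)
  rw [h1.sec.sec] at e2
  have e3 := h3.2 _ hx
  unfold Btw at e3
  have e4 : Cl * s.dG x (τ v) ≤ Cl * (r + 2 * A) := by gcongr
  have e5 : s.dQ (s.π p) v ≤ Cl * (r + 2 * A) + 2 * A := by
    linarith [s.mQ.nonneg (s.π p) (s.π x), s.mQ.symm (s.π p) v, s.mQ.symm v (s.π x)]
  have e6 := h1.sec.lip (s.π p) v
  rw [h2] at e6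
  have e7 : A * s.dQ (s.π p) v ≤ A * (Cl * (r + 2 * A) + 2 * A) := by gcongr
  linarith [s.mG.tri p (τ v) x, s.mG.symm x (τ v)]

end Setup
end CG


namespace CG
namespace Setup
variable {K G Q : Type*} [Group K] [Group G] [Group Q] (s : Setup K G Q)

theorem thin1 {Q1 : Subgroup Q} {E0 : ℝ} (hE0 : 0 ≤ E0) (hg : ∀ v, ∃ q, s.Pr Q1 E0 v q) (A : ℝ) (hA : 0 ≤ A) :
    ∃ B, 0 ≤ B ∧ ∀ x y z p sc, s.Lp Q1 A x y p → s.Sec A sc →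
      (∀ q, Cen (s.fd q) A (s.σ x q) (s.σ y q) (s.σ z q) (sc q)) →
      s.VB (s.π p) A (s.σ x (s.π p)) p (sc (s.π p)) →
      ∃ p', s.dG p p' ≤ B ∧ (s.Lp Q1 B x z p' ∨ s.Lp Q1 B z y p') := by
  have hδ := s.hyK.nn
  have hCσ := s.Cσ_nn
  obtain ⟨L, hL, hLip⟩ := s.ex_dG_le
  obtain ⟨C1, hC1, hth⟩ := s.through (A + s.Cσ) A (by positivity) hA
  set c1 := max A (s.δ + 1) with hc1
  have hc10 : 0 ≤ c1 := le_max_of_le_left hA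
  set A1 := C1 + A + c1 with hA1
  have hA10 : 0 ≤ A1 := by positivity
  obtain ⟨B1, hB1, hch⟩ := s.change hE0 hg A1 hA10
  obtain ⟨R1, hR1, hcr⟩ := s.crossing A1 A1 hA10 hA10
  obtain ⟨B2, hB2, hgo⟩ := s.gate_or hE0 hg B1 hB1
  obtain ⟨D, hD, hl⟩ := s.lift A1 0 B2 hA10 le_rfl hB2
  set R2 := B1 + s.δ + (D + s.δ) with hR2
  have hR20 : 0 ≤ R2 := by positivity
  obtain ⟨D2, hD2, hqc⟩ := s.lad_qc R2 hR20
  obtain ⟨w, hw, hpr⟩ := s.ex_proper D2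
  set A3 := A1 + (s.δ + 1 + w) with hA3
  set u := 5 * A3 + 2 * s.δ with hu
  have hu0 : 0 ≤ u := by positivity
  have hLu : 0 ≤ L * u := by positivity
  refine ⟨A1 + (B1 + s.δ) + (R1 + (D + s.δ)) + B2 + (R2 + L * u), by positivity, ?_⟩
  intro x y z p sc hp hsc hcen hvb
  set q := s.π p with hq
  have hqQ : q ∈ Q1 := by obtain ⟨τ, v, h1, h2, h3, h4⟩ := hp; exact h3.1
  obtain ⟨τ', hτ's, hτ'p, hτ'l⟩ := hth (s.σ x) sc p ((s.σ_sec x).mono (by linarith)) (hsc.mono (by linarith)) hvb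
  have lxy : s.LadSec A1 A1 x y τ' := by
    refine ⟨hτ's.mono (by linarith), fun w => ⟨s.π_σ _ _, hτ's.sec _, s.π_σ _ _, ?_⟩⟩
    exact (btw_left (s.fm _) (hcen w).1 (hτ'l w).2.2.2).mono (by linarith)
  have lxz : s.LadSec A1 A1 x z τ' := by
    refine ⟨hτ's.mono (by linarith), fun w => ⟨s.π_σ _ _, hτ's.sec _, s.π_σ _ _, ?_⟩⟩
    exact (btw_left (s.fm _) (hcen w).2.1 (hτ'l w).2.2.2).mono (by linarith)
  obtain ⟨v', hv1, hv2⟩ := hch x y p τ' (hp.mono (by linarith)) lxy hτ'p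
  have p0 : s.dG p p ≤ A1 + (B1 + s.δ) + (R1 + (D + s.δ)) + B2 + (R2 + L * u) := by
    rw [s.mG.self]; positivity
  rcases btw_split s.mG s.hyG z hv2 with h | hzy
  · exact ⟨p, p0, Or.inl ⟨τ', v', lxz.mono (by linarith) (by linarith), hτ'p, hv1.mono (by linarith), h.mono (by linarith)⟩⟩
  obtain ⟨v1, hv1x⟩ := hcr x z τ' lxz
  rcases hgo v' q v1 hv1 with h | h
  · exact ⟨p, p0, Or.inl ⟨τ', v1, lxz.mono (by linarith) (by linarith), hτ'p, h.mono (by linarith), hv1x.mono (by linarith)⟩⟩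
  have hbp := hl τ' τ' v1 q v' lxz.sec lxz.sec (by rw [s.mG.self]) h
  rw [hτ'p] at hbp
  rcases btw_split s.mG s.hyG z hbp with h | h
  · refine ⟨p, p0, Or.inl ⟨τ', q, lxz.mono (by linarith) (by linarith), hτ'p, Pr.self (by linarith) hqQ, ?_⟩⟩
    rw [hτ'p]
    exact (btw_right s.mG hv1x h).mono (by linarith)
  · have hzpy : Btw s.dG R2 z p y := btw_left s.mG hzy h
    have h1 := hqc z y p hzpy
    have h2 := hpr q p (s.P z y p) rfl (s.π_P _ _ _) h1
    have h3 := (s.P_cen z y p).1.mid (s.fm q) (m' := p) (e := w) (by rw [(s.fm q).symm]; exact h2)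
    have pc : Cen (s.fd q) A3 (s.σ x q) (s.σ y q) (s.σ z q) p := by
      have e1 := (lxy.lad q).2.2.2
      have e2 := (lxz.lad q).2.2.2
      rw [hτ'p] at e1 e2
      exact ⟨e1.mono (by linarith), e2.mono (by linarith), (h3.symm (s.fm q)).mono (by linarith)⟩
    have hfd := cen_unique (s.fm q) (s.fh q) pc ((hcen q).mono (by linarith : A ≤ A3))
    have hdG : s.dG p (sc q) ≤ L * u := by
      refine (hLip q _ _ rfl (hsc.sec q)).trans ?_
      gcongr
    have hπ : s.π (sc q) = q := hsc.sec q
    refine ⟨sc q, by linarith, Or.inr ⟨sc, q, ⟨hsc.mono (by linarith), fun w => ?_⟩, by rw [hπ], ?_, ?_⟩⟩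
    · exact ⟨s.π_σ _ _, hsc.sec _, s.π_σ _ _, ((hcen w).2.2.symm (s.fm _)).mono (by linarith)⟩
    · rw [hπ]; exact Pr.self (by linarith) hqQ
    · exact (hzpy.mid s.mG hdG).mono (by linarith)

theorem thin {Q1 : Subgroup Q} {E0 : ℝ} (hE0 : 0 ≤ E0) (hg : ∀ v, ∃ q, s.Pr Q1 E0 v q) (A : ℝ) (hA : 0 ≤ A) :
    ∃ B, 0 ≤ B ∧ ∀ x y z p, s.Lp Q1 A x y p → 
      ∃ p', s.dG p p' ≤ B ∧ (s.Lp Q1 B x z p' ∨ s.Lp Q1 B z y p') := by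
  have hδ := s.hyK.nn
  obtain ⟨C, hC, hcs⟩ := s.cen_sec s.Cσ (s.δ + 1) s.Cσ_nn (by linarith)
  set A' := C + (s.δ + 1) + A + (2 * (A + (s.δ + 1)) + s.δ) with hA'
  obtain ⟨B, hB, h1⟩ := s.thin1 hE0 hg A' (by positivity)
  refine ⟨B, hB, fun x y z p hp => ?_⟩
  choose sc hsc hcen using fun q => s.f_cen (s.π_σ x q) (s.π_σ y q) (s.π_σ z q)
  have hS := hcs _ _ _ sc (s.σ_sec x) (s.σ_sec y) (s.σ_sec z) hsc hcen
  have hpvb : s.VB (s.π p) A (s.σ x (s.π p)) p (s.σ y (s.π p)) := by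
    obtain ⟨τ, v, h1, h2, h3, h4⟩ := hp
    have := h1.lad (s.π p)
    rwa [h2] at this
  have hcen' := fun q => (hcen q).mono (by linarith : s.δ + 1 ≤ A')
  rcases btw_order (s.fm _) (s.fh _) (hpvb.2.2.2.mono (by linarith : A ≤ A + (s.δ + 1)))
    ((hcen (s.π p)).1.mono (by linarith : s.δ + 1 ≤ A + (s.δ + 1))) with h | h
  · exact h1 x y z p sc (hp.mono (by linarith)) (hS.mono (by linarith)) hcen'
      ⟨s.π_σ _ _, rfl, hsc _, h.mono (by linarith)⟩
  · obtain ⟨p', hp', hh⟩ := h1 y x z p sc (hp.symm.mono (by linarith)) (hS.mono (by linarith))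
      (fun q => ⟨(hcen' q).1.symm (s.fm _), (hcen' q).2.2, (hcen' q).2.1⟩)
      ⟨s.π_σ _ _, rfl, hsc _, (h.symm (s.fm _)).mono (by linarith)⟩
    exact ⟨p', hp', hh.symm.imp Lp.symm Lp.symm⟩

/-- thinness with base constants -/
theorem thin0 {Q1 : Subgroup Q} {E0 : ℝ} (hE0 : 0 ≤ E0) (hg : ∀ v, ∃ q, s.Pr Q1 E0 v q) :
    ∃ A0, 0 ≤ A0 ∧ (∀ A, 0 ≤ A → ∃ D, 0 ≤ D ∧ ∀ x y p, s.Lp Q1 A x y p → ∃ p', s.dG p p' ≤ D ∧ s.Lp Q1 A0 x y p') ∧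
    ∃ B, 0 ≤ B ∧ ∀ x y z p, s.Lp Q1 A0 x y p → 
      ∃ p', s.dG p p' ≤ B ∧ (s.Lp Q1 A0 x z p' ∨ s.Lp Q1 A0 z y p') := by
  obtain ⟨A0, hA0, hr⟩ := s.reduce hE0 hg
  refine ⟨A0, hA0, hr, ?_⟩
  obtain ⟨B, hB, ht⟩ := s.thin hE0 hg A0 hA0
  obtain ⟨D, hD, hrB⟩ := hr B hB
  refine ⟨B + D, by positivity, fun x y z p hp => ?_⟩
  obtain ⟨p1, h1, h2⟩ := ht x y z p hp
  rcases h2 with h2 | h2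
  · obtain ⟨p2, h3, h4⟩ := hrB _ _ _ h2
    exact ⟨p2, by linarith [s.mG.tri p p1 p2], Or.inl h4⟩
  · obtain ⟨p2, h3, h4⟩ := hrB _ _ _ h2
    exact ⟨p2, by linarith [s.mG.tri p p1 p2], Or.inr h4⟩

/-- connecting chains -/
theorem conn {Q1 : Subgroup Q} {E0 : ℝ} (hE0 : 0 ≤ E0) (hg : ∀ v, ∃ q, s.Pr Q1 E0 v q) :
    ∃ A, 0 ≤ A ∧ ∀ x y, s.π x ∈ Q1 → s.π y ∈ Q1 → ∃ (N : ℕ) (u w : ℕ → G), (N : ℝ) = s.dG x y ∧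
      (∀ i, s.π (u i) ∈ Q1) ∧ (∀ i, s.π (w i) = s.π (u i)) ∧
      (∀ i, i < N → ∀ m, s.VB (s.π (u i)) 0 (u i) m (w i) → s.Lp Q1 A x y m ∧ s.dG x m ≤ A * (N + 1)) ∧
      (∀ i, i < N → s.dG (w i) (u (i + 1)) ≤ A) ∧ s.dG x (u 0) ≤ A ∧ s.dG (u N) y ≤ A := by
  have hδ := s.hyK.nn
  have hCσ := s.Cσ_nn
  obtain ⟨L, hL, hLip⟩ := s.ex_dG_le
  obtain ⟨Cl, hCl, hl⟩ := s.ex_lip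
  obtain ⟨CP, hCP, hP⟩ := s.P_lip
  obtain ⟨D0, hD0, hqc⟩ := s.lad_qc 0 le_rfl
  obtain ⟨C0, hC0, hth⟩ := s.through s.Cσ (s.δ + 1) hCσ (by linarith)
  obtain ⟨C1, hC1, hth1⟩ := s.through C0 0 hC0 le_rfl
  obtain ⟨w0, hw0, hpr⟩ := s.ex_proper (CP + C0 * Cl)
  set D1 := D0 + L * (w0 + 2 * (s.δ + 1)) with hD1
  have hD10 : 0 ≤ D1 := by positivity
  set c2 := 3 * (s.δ + 1) + s.δ + (s.δ + 1) with hc2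
  have k1 : 0 ≤ C1 * (Cl + 2 * E0) := by positivity
  have k2 : 0 ≤ C0 * (2 * (E0 + Cl)) := by positivity
  set A := C1 + c2 + D1 + E0 + (C1 * (Cl + 2 * E0) + 1) + C0 * (2 * (E0 + Cl)) with hA
  refine ⟨A, by positivity, fun x y hx hy => ?_⟩
  obtain ⟨N, b, hb0, hbN, hb⟩ := s.gG.geo x y
  have hN : s.dG x y = N := by
    have := hb 0 N (by omega) le_rfl
    rw [hb0, hbN] at this; simpa using this
  have hbb : ∀ i, i ≤ N → Btw s.dG 0 x (b i) y ∧ s.dG x (b i) ≤ N := by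
    intro i hi
    have e1 := hb 0 i (by omega) hi
    have e2 := hb i N hi le_rfl
    rw [hb0] at e1; rw [hbN] at e2
    push_cast at e1
    have : (i : ℝ) ≤ N := by exact_mod_cast hi
    constructor
    · unfold Btw; rw [e1, e2, hN]; linarith
    · linarith
  let c : ℕ → G := fun i => s.P x y (b i)
  have hπc : ∀ i, s.π (c i) = s.π (b i) := fun i => s.π_P _ _ _
  have hcb : ∀ i, i ≤ N → s.dG (b i) (c i) ≤ D0 := fun i hi => hqc x y _ (hbb i hi).1
  choose τ hτs hτc hτl using fun i => hth (s.σ x) (s.σ y) (c i) (s.σ_sec x) (s.σ_sec y)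
    (by rw [hπc]; exact s.P_vb x y (b i))
  simp only [max_self] at hτl
  choose q hq using fun i => hg (s.π (c i))
  have hstep : ∀ i, i < N → s.dG (b i) (b (i+1)) = 1 := by
    intro i hi; rw [hb i (i+1) (by omega) hi]; push_cast; ring
  have hqstep : ∀ i, i < N → s.dQ (s.π (c i)) (s.π (c (i+1))) ≤ Cl := by
    intro i hi
    rw [hπc, hπc]
    have := hl (b i) (b (i+1)); rw [hstep i hi] at this; linarith
  have hends : ∀ i, i ≤ N → s.π (b i) ∈ Q1 → s.dG (b i) (τ i (q i)) ≤ A := by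
    intro i hi hQ
    have h1 := (Pr.self (s := s) hE0 hQ).near (by have := hq i; rwa [hπc] at this)
    have h2 := (hτs i).lip (s.π (c i)) (q i)
    rw [hτc, hπc] at h2
    have h3 : C0 * s.dQ (s.π (b i)) (q i) ≤ C0 * (2 * (E0 + Cl)) := by gcongr; linarith
    have h4 := s.mG.tri (b i) (c i) (τ i (q i))
    have h5 : 0 ≤ L * (w0 + 2 * (s.δ + 1)) := by positivity
    linarith [hcb i hi]
  refine ⟨N, fun i => τ i (q i), fun i => τ (i+1) (q i), hN.symm, fun i => ?_, fun i => ?_, ?_, ?_, ?_, ?_⟩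
  · rw [(hτs i).sec]; exact (hq i).1
  · rw [(hτs i).sec, (hτs _).sec]
  · intro i hi m hm
    rw [(hτs i).sec] at hm
    have hπm : s.π m = q i := hm.2.1
    obtain ⟨τ', ht1, ht2, ht3⟩ := hth1 (τ i) (τ (i+1)) m (hτs i) (hτs (i+1)) (by rw [hπm]; exact hm)
    rw [max_eq_right (by linarith : (0:ℝ) ≤ s.δ + 1)] at ht3
    set v := s.π (c i) with hv
    have hlad : s.LadSec C1 c2 x y τ' := by
      refine ⟨ht1, fun w => ⟨s.π_σ _ _, ht1.sec _, s.π_σ _ _, ?_⟩⟩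
      exact btw_convex (s.fm w) (s.fh w) (hτl i w).2.2.2 (hτl (i+1) w).2.2.2 (ht3 w).2.2.2
    have e1 : s.dG (c i) (τ (i+1) v) ≤ CP + C0 * Cl := by
      have h1 := hP x y (b i) (b (i+1))
      rw [hstep i hi] at h1
      have h2 := (hτs (i+1)).lip (s.π (c (i+1))) v
      rw [hτc] at h2
      have h3 : C0 * s.dQ (s.π (c (i+1))) v ≤ C0 * Cl := by
        rw [s.mQ.symm]; have := hqstep i hi; gcongr
      have h4 := s.mG.tri (c i) (c (i+1)) (τ (i+1) v)
      change s.dG (c i) (c (i+1)) ≤ _ at h1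
      linarith
    have e2 := hpr v _ _ rfl ((hτs (i+1)).sec v) e1
    have e3 : s.fd v (c i) (τ' v) ≤ w0 + 2 * (s.δ + 1) := by
      have h1 := (ht3 v).2.2.2
      rw [hτc] at h1
      unfold Btw at h1
      linarith [(s.fm v).nonneg (τ' v) (τ (i+1) v)]
    have e4 : s.dG (c i) (τ' v) ≤ L * (w0 + 2 * (s.δ + 1)) := by
      refine (hLip v _ _ rfl (ht1.sec v)).trans ?_
      gcongr
    have e5 : s.dG (b i) (τ' v) ≤ D1 := by
      linarith [s.mG.tri (b i) (c i) (τ' v), hcb i hi.le]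
    refine ⟨⟨τ', v, hlad.mono (by linarith) (by linarith), ht2, ?_, ?_⟩, ?_⟩
    · rw [hπm]; exact (hq i).mono (by linarith)
    · exact ((hbb i hi.le).1.mid s.mG e5).mono (by linarith)
    · have f1 := (hq i).2 _ hx
      unfold Btw at f1
      have f2 := hl x (b i)
      rw [← hπc i] at f2
      have f2' : Cl * s.dG x (b i) ≤ Cl * N := by have := (hbb i hi.le).2; gcongr
      have f3 : s.dQ v (q i) ≤ (Cl + 2 * E0) * (N + 1) := by
        have : 0 ≤ E0 * N := by positivity
        linarith [s.mQ.nonneg (q i) (s.π x), s.mQ.symm (s.π x) v]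
      have f4 := ht1.lip v (q i)
      have f5 : τ' (q i) = m := by rw [← hπm]; exact ht2
      rw [f5] at f4
      have f6 : C1 * s.dQ v (q i) ≤ C1 * ((Cl + 2 * E0) * (N + 1)) := by gcongr
      have f7 := s.mG.tri x (b i) m
      have f8 := s.mG.tri (b i) (τ' v) m
      have f9 := (hbb i hi.le).2
      have g1 : (D1 + (C1 * (Cl + 2 * E0) + 1)) * ((N:ℝ) + 1) ≤ A * (N + 1) := by
        gcongr; linarith
      have : 0 ≤ D1 * (N:ℝ) := by positivity
      linarith
  · intro i hi
    have h1 := ((hq i).move (hqstep i hi)).near ((hq (i+1)).mono (by linarith : E0 ≤ E0 + Cl))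
    have h2 := (hτs (i+1)).lip (q i) (q (i+1))
    have h3 : C0 * s.dQ (q i) (q (i+1)) ≤ C0 * (2 * (E0 + Cl)) := by gcongr
    linarith
  · have := hends 0 (by omega) (by rw [hb0]; exact hx)
    rwa [hb0] at this
  · have := hends N le_rfl (by rw [hbN]; exact hy)
    rw [hbN] at this
    rw [s.mG.symm]; exact this

end Setup
end CG


namespace CG

section
variable {Γ : Type*} [Group Γ] {S : Set Γ}

theorem qi_out {H : Subgroup Γ} (h : QIEmbSubgroup H) (hS : GenSet S) :
    ∃ T : Set H, GenSet T ∧ ∃ k : ℝ, 0 ≤ k ∧ ∀ x : H, (wordLength T x : ℝ) ≤ k * (wordLength S (x : Γ) + 1) := by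
  obtain ⟨S', T, hS', hT, k, hk, hq⟩ := h
  obtain ⟨C, hC, hl⟩ := hom_lip hS hS' (MonoidHom.id Γ)
  refine ⟨T, hT, k * (C + k), by positivity, fun x => ?_⟩
  have h1 := (hq 1 x).1
  rw [wd_one] at h1
  have h2 : wordDist S' ((1 : H) : Γ) (x : Γ) = wordLength S' (x : Γ) := by
    rw [Subgroup.coe_one, wd_one]
  rw [h2] at h1
  have h3 := hl x
  simp only [MonoidHom.id_apply] at h3
  have h4 : (wordLength T x : ℝ) / k ≤ C * wordLength S (x : Γ) + k := by linarith
  rw [div_le_iff₀ (by linarith)] at h4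
  have h5 : (0 : ℝ) ≤ wordLength S (x : Γ) := by positivity
  have : 0 ≤ k * C := by positivity
  nlinarith [mul_nonneg (mul_nonneg (by linarith : 0 ≤ k) (by linarith : 0 ≤ k)) h5]

theorem qi_in {H : Subgroup Γ} (hS : GenSet S) {T : Set H} (hT : GenSet T) {k : ℝ} (hk : 0 ≤ k)
    (h : ∀ x : H, (wordLength T x : ℝ) ≤ k * (wordLength S (x : Γ) + 1)) : QIEmbSubgroup H := by
  obtain ⟨C, hC, hl⟩ := hom_lip hT hS H.subtype
  refine ⟨S, T, hS, hT, k + 1 + C, by linarith, fun y y' => ?_⟩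
  have h1 := h (y⁻¹ * y')
  have h2 := hl (y⁻¹ * y')
  have e : ((y⁻¹ * y' : H) : Γ) = (y : Γ)⁻¹ * (y' : Γ) := by simp
  rw [e] at h1
  rw [Subgroup.subtype_apply, e] at h2
  have e1 : wordDist T y y' = wordLength T (y⁻¹ * y') := rfl
  have e2 : wordDist S (y : Γ) (y' : Γ) = wordLength S ((y : Γ)⁻¹ * (y' : Γ)) := rfl
  rw [e1, e2]
  have h5 : (0 : ℝ) ≤ wordLength S ((y : Γ)⁻¹ * (y' : Γ)) := by positivity
  have h6 : (0 : ℝ) ≤ wordLength T (y⁻¹ * y') := by positivity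
  constructor
  · have : (wordLength T (y⁻¹ * y') : ℝ) / (k + 1 + C) ≤ wordLength S ((y : Γ)⁻¹ * (y' : Γ)) + 1 := by
      rw [div_le_iff₀ (by linarith)]
      nlinarith
    linarith
  · nlinarith

/-- geodesics of the subgroup with cubic distortion control -/
theorem sub_path {H : Subgroup Γ} (hS : GenSet S) {T : Set H} (hT : GenSet T) {A : ℝ}
    (h : ∀ x : H, (wordLength T x : ℝ) ≤ A * (wordLength S (x : Γ) + 1) ^ 3) :
    ∃ C : ℝ, 0 ≤ C ∧ ∀ x y : H, ∃ (n : ℕ) (p : ℕ → H), p 0 = x ∧ p n = y ∧ (n : ℝ) = wordDist T x y ∧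
      QG (wordDist S) C A (fun i => (p i : Γ)) n := by
  obtain ⟨C, hC, hl⟩ := hom_lip hT hS H.subtype
  refine ⟨C, hC, fun x y => ?_⟩
  obtain ⟨n, p, h0, h1, hp⟩ := (wd_geo hT).geo x y
  refine ⟨n, p, h0, h1, ?_, ?_, ?_⟩
  · rw [← h0, ← h1, hp 0 n (by simp) le_rfl]; simp
  · intro i hi
    have h3 := hl ((p i)⁻¹ * p (i + 1))
    have h4 := hp i (i + 1) (by simp) (by omega)
    unfold wordDist at h4 ⊢
    rw [h4] at h3
    push_cast at h3
    simpa using h3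
  · intro i j hij hj
    have h3 := h ((p i)⁻¹ * p j)
    have h4 := hp i j hij hj
    unfold wordDist at h4 ⊢
    rw [h4] at h3
    simpa using h3

theorem qi_of_cubic {δ : ℝ} {H : Subgroup Γ} (hS : GenSet S) (hy : Hyp (wordDist S) δ) {T : Set H} (hT : GenSet T) {A : ℝ}
    (hA : 0 ≤ A)
    (h : ∀ x : H, (wordLength T x : ℝ) ≤ A * (wordLength S (x : Γ) + 1) ^ 3) : QIEmbSubgroup H := by
  obtain ⟨C, hC, hp⟩ := sub_path hS hT h
  obtain ⟨D, hD, hm⟩ := morse hy.nn hC hA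
  refine qi_in hS hT hD fun x => ?_
  obtain ⟨n, p, h0, h1, h2, h3⟩ := hp 1 x
  obtain ⟨-, -, h4⟩ := hm (wordDist S) (wd_geo hS) hy _ _ h3
  rw [wd_one] at h2
  simp only [h0, h1, Subgroup.coe_one, wd_one] at h4
  rw [← h2]; exact h4

theorem lin_cubic {k x : ℝ} (hk : 0 ≤ k) (hx : 0 ≤ x) : k * (x + 1) ≤ k * (x + 1) ^ 3 := by
  apply mul_le_mul_of_nonneg_left _ hk
  nlinarith [mul_nonneg hx hx, mul_nonneg hx (mul_nonneg hx hx)]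

theorem qi_convex {δ : ℝ} {H : Subgroup Γ} (hS : GenSet S) (hy : Hyp (wordDist S) δ) (h : QIEmbSubgroup H) :
    ∃ E : ℝ, 0 ≤ E ∧ ∀ v : Γ, ∃ q ∈ H, ∀ q' ∈ H, Btw (wordDist S) E v q q' := by
  obtain ⟨T, hT, k, hk, hl⟩ := qi_out h hS
  obtain ⟨C, hC, hp⟩ := sub_path hS hT (A := k) fun x => (hl x).trans (lin_cubic hk (by positivity))
  obtain ⟨D, hD, hm⟩ := morse hy.nn hC hk
  refine ⟨2 * δ + D + 1, by have := hy.nn; linarith, fun v => ?_⟩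
  obtain ⟨q, hq, hmin⟩ : ∃ q ∈ H, ∀ q' ∈ H, wordLength S (v⁻¹ * q) ≤ wordLength S (v⁻¹ * q') := by
    have hne : ∃ n, ∃ q ∈ H, wordLength S (v⁻¹ * q) = n := ⟨_, 1, H.one_mem, rfl⟩
    classical
    obtain ⟨q, hq, h2⟩ := Nat.find_spec hne
    exact ⟨q, hq, fun q' hq' => h2 ▸ Nat.find_min' hne ⟨q', hq', rfl⟩⟩
  refine ⟨q, hq, fun q' hq' => ?_⟩
  refine nearest_btw (wd_geo hS) hy (H : Set Γ) ?_ v q hq ?_ q' hq'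
  · intro a ha a' ha' m hm'
    obtain ⟨n, p, h0, h1, h2, h3⟩ := hp ⟨a, ha⟩ ⟨a', ha'⟩
    obtain ⟨-, h4, -⟩ := hm (wordDist S) (wd_geo hS) hy _ _ h3
    simp only [h0, h1] at h4
    obtain ⟨i, hi, h5⟩ := h4 0 m hm'
    exact ⟨p i, (p i).2, by linarith⟩
  · intro a ha
    unfold wordDist
    exact_mod_cast hmin a ha

end

namespace Setup
variable {K G Q : Type*} [Group K] [Group G] [Group Q] (s : Setup K G Q)

theorem gates {Q1 : Subgroup Q} (h : QIEmbSubgroup Q1) : ∃ E0 : ℝ, 0 ≤ E0 ∧ ∀ v, ∃ q, s.Pr Q1 E0 v q := by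
  obtain ⟨E, hE, h1⟩ := qi_convex s.hSQ s.hyQ h
  exact ⟨E, hE, fun v => let ⟨q, h2, h3⟩ := h1 v; ⟨q, h2, h3⟩⟩

end Setup
end CG


namespace CG

theorem ball_bound {Γ : Type*} [Group Γ] {S : Set Γ} {H : Subgroup Γ} (hS : GenSet S) (T : Set H) (r : ℝ) :
    ∃ w : ℝ, 0 ≤ w ∧ ∀ x : H, (wordLength S (x : Γ) : ℝ) ≤ r → (wordLength T x : ℝ) ≤ w := by
  have hf : {x : H | (wordLength S (x : Γ) : ℝ) ≤ r}.Finite :=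
    (wd_ball_finite hS r).preimage (f := fun x : H => (x : Γ)) (Subtype.val_injective.injOn)
  obtain ⟨w, hw⟩ := (hf.image fun x => (wordLength T x : ℝ)).bddAbove
  refine ⟨max w 0, le_max_right _ _, fun x hx => le_max_of_le_left (hw ⟨x, hx, rfl⟩)⟩

namespace Setup
variable {K G Q : Type*} [Group K] [Group G] [Group Q] (s : Setup K G Q)

theorem nearH0 {Q1 : Subgroup Q} {E0 : ℝ} (hE0 : 0 ≤ E0) (hg : ∀ v, ∃ q, s.Pr Q1 E0 v q) {H : Subgroup G}
    (hle : H ≤ Q1.comap s.π) (hq : QIEmbSubgroup (H.subgroupOf (Q1.comap s.π))) :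
    ∀ A, 0 ≤ A → ∃ D, 0 ≤ D ∧ ∀ x ∈ H, ∀ y ∈ H, ∀ p, s.Lp Q1 A x y p → ∃ h ∈ H, s.dG p h ≤ D := by
  obtain ⟨S1, -, hS1, -⟩ := id hq
  obtain ⟨T, hT, k, hk, hl⟩ := qi_out hq hS1
  obtain ⟨C, hC, hC1⟩ := hom_lip hS1 s.hSG (Q1.comap s.π).subtype
  obtain ⟨C2, hC2, hC3⟩ := hom_lip hT hS1 (H.subgroupOf (Q1.comap s.π)).subtype
  obtain ⟨A0, hA0, hred, B, hB, hthin⟩ := s.thin0 hE0 hg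
  obtain ⟨D1, hD1, hadj⟩ := s.adj (Q1 := Q1) A0 (C * C2) hA0 (by positivity)
  obtain ⟨w1, hw1, hw1'⟩ := ball_bound s.hSG S1 D1
  obtain ⟨w2, hw2, hw2'⟩ := ball_bound s.hSG S1 B
  have lip : ∀ a b : Q1.comap s.π, s.dG a b ≤ C * wordDist S1 a b := by
    intro a b
    have := hC1 (a⁻¹ * b)
    simpa [dG, wordDist] using this
  obtain ⟨D', hD', hgs⟩ := guess (D := max w1 w2) (r := C2) (k := k) (le_max_of_le_left hw1) hk
  have mem : ∀ x y p, s.Lp Q1 A0 x y p → p ∈ Q1.comap s.π := by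
    rintro x y p ⟨τ, v, h1, h2, h3, h4⟩
    exact h3.1
  have main : ∀ x ∈ H, ∀ y ∈ H, ∀ p, s.Lp Q1 A0 x y p → ∃ h ∈ H, s.dG p h ≤ C * D' := by
    intro x hx y hy p hp
    obtain ⟨n, γ, h0, h1, hγ⟩ := (wd_geo hT).geo
      (⟨⟨x, hle hx⟩, hx⟩ : H.subgroupOf (Q1.comap s.π)) ⟨⟨y, hle hy⟩, hy⟩
    have key : ∃ i, i ≤ n ∧ wordDist S1 ⟨p, mem _ _ _ hp⟩ (γ i : Q1.comap s.π) ≤ D' := by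
     refine hgs (wordDist S1) (wd_met hS1) (fun a b c => s.Lp Q1 A0 (a : G) b c) ?_ ?_
      (fun i => (γ i : Q1.comap s.π)) n ?_ ?_ ?_ ⟨p, mem _ _ _ hp⟩ ?_
     · intro a b c e he
       obtain ⟨p', h2, h3⟩ := hthin a b c e he
       have hp' : p' ∈ Q1.comap s.π := h3.elim (mem _ _ _) (mem _ _ _)
       refine ⟨⟨p', hp'⟩, ?_, h3⟩
       refine le_max_of_le_right ?_
       exact hw2' (e⁻¹ * (⟨p', hp'⟩ : Q1.comap s.π)) h2
     · intro a b c h2 h3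
       have h4 := hadj a b c a.2 ((lip a b).trans (mul_le_mul_of_nonneg_left h2 hC)) h3
       refine le_max_of_le_left ?_
       exact hw1' (c⁻¹ * a) h4
     · intro i _
       simp only [(wd_met hS1).self]; exact hC2
     · intro i hi
       have h3 := hC3 ((γ i)⁻¹ * γ (i + 1))
       have h4 := hγ i (i + 1) (by simp) (by omega)
       unfold wordDist at h4 ⊢
       rw [h4] at h3
       push_cast at h3
       simpa using h3
     · intro i j hij hj
       have h3 := hl ((γ i)⁻¹ * γ j)
       have h4 := hγ i j hij hj
       unfold wordDist at h4 ⊢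
       rw [h4] at h3
       simpa using h3
     · simp only [h0, h1]
       exact hp
    obtain ⟨i, hi, hi'⟩ := key
    refine ⟨((γ i : Q1.comap s.π) : G), (γ i).2, ?_⟩
    exact (lip ⟨p, mem _ _ _ hp⟩ (γ i)).trans (mul_le_mul_of_nonneg_left hi' hC)
  intro A hA
  obtain ⟨D, hD, h⟩ := hred A hA
  refine ⟨D + C * D', by positivity, fun x hx y hy p hp => ?_⟩
  obtain ⟨p', h1, h2⟩ := h x y p hp
  obtain ⟨h', h3, h4⟩ := main x hx y hy p' h2
  exact ⟨h', h3, (s.mG.tri p p' h').trans (add_le_add h1 h4)⟩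

end Setup
end CG


namespace CG

theorem qi_of_finite {Γ : Type*} [Group Γ] {S : Set Γ} {H : Subgroup Γ} (hS : GenSet S) (hf : (H : Set Γ).Finite) :
    QIEmbSubgroup H := by
  have : Finite H := hf
  obtain ⟨w, hw⟩ := (Set.finite_range fun x : H => (wordLength (Set.univ : Set H) x : ℝ)).bddAbove
  refine qi_in hS (T := Set.univ) ⟨Set.finite_univ, by simp⟩ (k := max w 0) (le_max_right _ _) fun x => ?_
  have h1 : (wordLength (Set.univ : Set H) x : ℝ) ≤ max w 0 := le_max_of_le_left (hw ⟨x, rfl⟩)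
  have h2 : (0 : ℝ) ≤ wordLength S (x : Γ) := by positivity
  nlinarith [le_max_right w 0]

namespace Setup
variable {K G Q : Type*} [Group K] [Group G] [Group Q] (s : Setup K G Q)

/-- the subgroup generated by the short elements of `K ∩ H` -/
def K1 (H : Subgroup G) (D : ℝ) : Subgroup G := Subgroup.closure {g | (g ∈ s.ι.range ∧ g ∈ H) ∧ s.lG g ≤ D}

theorem K1_le (H : Subgroup G) (D : ℝ) : s.K1 H D ≤ s.ι.range ⊓ H := by
  refine (Subgroup.closure_le _).2 ?_
  rintro g ⟨h, -⟩
  exact h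

theorem K1_fg (H : Subgroup G) (D : ℝ) : (s.K1 H D).FG := by
  rw [Subgroup.fg_iff]
  exact ⟨_, rfl, (wd_ball_finite s.hSG D).subset fun g hg => hg.2⟩

theorem seg (H : Subgroup G) (D : ℝ) (hD : 0 ≤ D) : ∃ D4 D5, 0 ≤ D5 ∧ ∀ u w, s.π w = s.π u →
    (∀ m, s.VB (s.π u) 0 u m w → ∃ h ∈ H, s.dG m h ≤ D) →
    ∃ a b, a ∈ H ∧ b ∈ H ∧ a⁻¹ * b ∈ s.K1 H D4 ∧ s.dG u a ≤ D5 ∧ s.dG w b ≤ D5 := by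
  have h0 : ∀ z : G × G, ∃ w : ℝ, (∃ t ∈ H, s.π t = (s.π z.1)⁻¹ * s.π z.2) →
      ∃ t ∈ H, s.π t = (s.π z.1)⁻¹ * s.π z.2 ∧ s.lG t ≤ w := by
    intro z
    by_cases hz : ∃ t ∈ H, s.π t = (s.π z.1)⁻¹ * s.π z.2
    · obtain ⟨t, h1, h2⟩ := hz
      exact ⟨s.lG t, fun _ => ⟨t, h1, h2, le_rfl⟩⟩
    · exact ⟨0, fun h => absurd h hz⟩
  choose wt hwt using h0
  have hF := wd_ball_finite s.hSG D
  obtain ⟨Dt, hDt⟩ := ((hF.prod hF).image wt).bddAbove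
  obtain ⟨C, hC, hCl⟩ := s.ex_dG_le
  set D5 := D + max Dt 0 with hD5
  have hD5n : 0 ≤ D5 := add_nonneg hD (le_max_right _ _)
  refine ⟨2 * D5 + C, D5, hD5n, fun u w hw hm => ?_⟩
  obtain ⟨n, e, e0, en, eπ, ed⟩ := s.f_geo (x := u) (y := w) rfl hw
  have near : ∀ j, j ≤ n → ∃ h ∈ H, s.dG (e j) h ≤ D := by
    intro j hj
    refine hm _ ⟨rfl, eπ j, hw, ?_⟩
    have h1 := ed 0 j (by simp) hj
    have h2 := ed j n hj le_rfl
    have h3 := ed 0 n (by simp) le_rfl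
    rw [e0] at h1 h3
    rw [en] at h2 h3
    unfold Btw
    rw [h1, h2, h3]
    linarith
  obtain ⟨h0, h0H, h0d⟩ := near 0 (by simp)
  have ch : ∀ j, ∃ a, j ≤ n → a ∈ H ∧ s.π a = s.π h0 ∧ s.dG (e j) a ≤ D5 := by
    intro j
    by_cases hj : j ≤ n
    swap
    · exact ⟨1, fun h => absurd h hj⟩
    obtain ⟨h, hH, hd⟩ := near j hj
    obtain ⟨t, t1, t2, t3⟩ := hwt ((e j)⁻¹ * h, (e 0)⁻¹ * h0) ⟨h⁻¹ * h0, H.mul_mem (H.inv_mem hH) h0H, by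
      simp only [map_mul, map_inv, eπ]; group⟩
    have t4 : s.lG t ≤ max Dt 0 := t3.trans (le_max_of_le_left (hDt ⟨((e j)⁻¹ * h, (e 0)⁻¹ * h0), ⟨hd, h0d⟩, rfl⟩))
    refine ⟨h * t, fun _ => ⟨H.mul_mem hH t1, ?_, ?_⟩⟩
    · rw [map_mul, t2]
      simp only [map_mul, map_inv, eπ]; group
    · have h3 := s.mG.tri (e j) h (h * t)
      have h4 : s.dG h (h * t) = s.lG t := wd_right h t
      linarith
  choose a ha using ch
  have step : ∀ j, j ≤ n → (a 0)⁻¹ * a j ∈ s.K1 H (2 * D5 + C) := by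
    intro j
    induction j with
    | zero => intro _; simp
    | succ j ih =>
      intro hj
      have h1 := ih (by omega)
      have e1 : (a 0)⁻¹ * a (j + 1) = ((a 0)⁻¹ * a j) * ((a j)⁻¹ * a (j + 1)) := by group
      rw [e1]
      refine (s.K1 H _).mul_mem h1 (Subgroup.subset_closure ⟨⟨?_, ?_⟩, ?_⟩)
      · obtain ⟨k, hk⟩ := s.ex_ι (g := (a j)⁻¹ * a (j + 1)) (by
          rw [map_mul, map_inv, (ha j (by omega)).2.1, (ha (j + 1) hj).2.1]; group)
        exact ⟨k, hk⟩
      · exact H.mul_mem (H.inv_mem (ha j (by omega)).1) (ha (j + 1) hj).1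
      · have h2 := hCl _ _ _ (eπ j) (eπ (j + 1))
        rw [ed j (j + 1) (by simp) hj] at h2
        push_cast at h2
        have h3 := (ha j (by omega)).2.2
        have h4 := (ha (j + 1) hj).2.2
        have h5 := s.mG.tri (a j) (e j) (a (j + 1))
        have h6 := s.mG.tri (e j) (e (j + 1)) (a (j + 1))
        have h7 := s.mG.symm (a j) (e j)
        have h8 : s.dG (a j) (a (j + 1)) = s.lG ((a j)⁻¹ * a (j + 1)) := rfl
        linarith
  refine ⟨a 0, a n, (ha 0 (by simp)).1, (ha n le_rfl).1, step n le_rfl, ?_, ?_⟩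
  · have := (ha 0 (by simp)).2.2
    rwa [e0] at this
  · have := (ha n le_rfl).2.2
    rwa [en] at this

theorem part1 {Q1 : Subgroup Q} {E0 : ℝ} (hE0 : 0 ≤ E0) (hg : ∀ v, ∃ q, s.Pr Q1 E0 v q) {H : Subgroup G}
    (hle : H ≤ Q1.comap s.π) (hq : QIEmbSubgroup (H.subgroupOf (Q1.comap s.π))) (hn : ¬ QIEmbSubgroup H) :
    ∃ D, ¬ QIEmbSubgroup (s.K1 H D) := by
  obtain ⟨A, hA, hconn⟩ := s.conn hE0 hg
  obtain ⟨D, hD, hnear⟩ := s.nearH0 hE0 hg hle hq A hA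
  obtain ⟨D4, D5, hD5, hseg⟩ := s.seg H D hD
  refine ⟨D4, fun hK => hn ?_⟩
  obtain ⟨S1, -, hS1, -⟩ := id hq
  obtain ⟨T, hT, k, hk, hl⟩ := qi_out hq hS1
  obtain ⟨T', hT', k', hk', hl'⟩ := qi_out hK s.hSG
  have hKG : s.K1 H D4 ≤ Q1.comap s.π := ((s.K1_le H D4).trans inf_le_right).trans hle
  obtain ⟨C3, hC3, hC3l⟩ := hom_lip hT' hS1 (Subgroup.inclusion hKG)
  obtain ⟨w5, hw5, hw5'⟩ := ball_bound s.hSG S1 D5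
  obtain ⟨wA, hwA, hwA'⟩ := ball_bound s.hSG S1 A
  have m1 := wd_met hS1
  set B' := 2 * w5 + C3 * (k' * (2 * D5 + 2 * A + 1)) with hB'
  have hB'n : 0 ≤ B' := by positivity
  have quad : ∀ h : Q1.comap s.π, (wordLength S1 h : ℝ) ≤ (B' + 2 * wA) * (s.lG (h : G) + 1) ^ 2 ∨ (h : G) ∉ H := by
    intro h
    by_cases hH : (h : G) ∈ H
    swap
    · exact Or.inr hH
    left
    obtain ⟨N, u, w, hN, hu, hw, hVB, hst, hfst, hlst⟩ := hconn 1 h (by simp) h.2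
    have hN' : (N : ℝ) = s.lG (h : G) := by rw [hN]; exact wd_one _
    rw [← hN']
    have hwm : ∀ i, s.π (w i) ∈ Q1 := fun i => by rw [hw i]; exact hu i
    let u' : ℕ → Q1.comap s.π := fun i => ⟨u i, hu i⟩
    let w' : ℕ → Q1.comap s.π := fun i => ⟨w i, hwm i⟩
    have hNn : (0 : ℝ) ≤ N := by positivity
    have d1 : ∀ i, i < N → wordDist S1 (u' i) (w' i) ≤ B' * (N + 1) := by
      intro i hi
      obtain ⟨a, b, aH, bH, hab, ha, hb⟩ := hseg (u i) (w i) (hw i)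
        fun m hm => hnear 1 H.one_mem h hH m (hVB i hi m hm).1
      have hδ := s.hyK.nn
      have hd1 := (hVB i hi (u i) ⟨rfl, rfl, hw i, Btw.left (s.fm _) le_rfl⟩).2
      have hd2 := (hVB i hi (w i) ⟨rfl, hw i, hw i, Btw.right (s.fm _) le_rfl⟩).2
      let a' : Q1.comap s.π := ⟨a, hle aH⟩
      let b' : Q1.comap s.π := ⟨b, hle bH⟩
      have h1 : wordDist S1 (u' i) a' ≤ w5 := hw5' ((u' i)⁻¹ * a') ha
      have h2 : wordDist S1 (w' i) b' ≤ w5 := hw5' ((w' i)⁻¹ * b') hb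
      have h3 := hC3l ⟨_, hab⟩
      have h4 := hl' ⟨_, hab⟩
      have h5 : wordDist S1 a' b' ≤ C3 * (wordLength T' ⟨_, hab⟩ : ℝ) := h3
      have h6 : s.dG a b ≤ 2 * D5 + 2 * A * (N + 1) := by
        have := s.mG.tri a (u i) b
        have := s.mG.tri (u i) (w i) b
        have := s.mG.tri (u i) 1 (w i)
        linarith [s.mG.symm a (u i), s.mG.symm (u i) 1]
      have h7 : (wordLength T' ⟨_, hab⟩ : ℝ) ≤ k' * (2 * D5 + 2 * A + 1) * (N + 1) := by
        refine h4.trans ?_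
        rw [mul_assoc]
        refine mul_le_mul_of_nonneg_left ?_ hk'
        have : (wordLength s.SG (a⁻¹ * b) : ℝ) ≤ 2 * D5 + 2 * A * (N + 1) := h6
        show (wordLength s.SG (a⁻¹ * b) : ℝ) + 1 ≤ _
        nlinarith
      have h8 := mul_le_mul_of_nonneg_left h7 hC3
      have h9 := m1.tri (u' i) a' (w' i)
      have h10 := m1.tri a' b' (w' i)
      have h11 := m1.symm b' (w' i)
      have : 0 ≤ w5 * N := by positivity
      calc wordDist S1 (u' i) (w' i) ≤ 2 * w5 + C3 * (k' * (2 * D5 + 2 * A + 1) * (N + 1)) := by linarith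
        _ ≤ B' * (N + 1) := by rw [hB']; linarith
    have d2 : ∀ i, i ≤ N → wordDist S1 (u' 0) (u' i) ≤ i * (B' * (N + 1) + wA) := by
      intro i
      induction i with
      | zero => intro _; simp [m1.self]
      | succ i ih =>
        intro hi
        have h1 := ih (by omega)
        have h2 := d1 i (by omega)
        have h3 : wordDist S1 (w' i) (u' (i + 1)) ≤ wA := hwA' ((w' i)⁻¹ * u' (i + 1)) (hst i (by omega))
        have h4 := m1.tri (u' 0) (u' i) (u' (i + 1))
        have h5 := m1.tri (u' i) (w' i) (u' (i + 1))
        push_cast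
        linarith
    have h1 := d2 N le_rfl
    have h2 : wordDist S1 1 (u' 0) ≤ wA := hwA' (1⁻¹ * u' 0) hfst
    have h3 : wordDist S1 (u' N) h ≤ wA := hwA' ((u' N)⁻¹ * h) hlst
    have h4 := m1.tri 1 (u' 0) h
    have h5 := m1.tri (u' 0) (u' N) h
    rw [wd_one] at h4
    have : 0 ≤ B' * N := by positivity
    have : 0 ≤ wA * N := by positivity
    have : 0 ≤ wA * N * N := by positivity
    nlinarith
  let e := Subgroup.subgroupOfEquivOfLe hle
  have hT2 : GenSet (e '' T) := by
    refine ⟨hT.1.image _, ?_⟩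
    have := MonoidHom.map_closure e.toMonoidHom T
    rw [hT.2] at this
    have h2 : Subgroup.map e.toMonoidHom ⊤ = ⊤ := Subgroup.map_top_of_surjective _ e.surjective
    rw [h2] at this
    exact this.symm
  obtain ⟨C, hC, hCl⟩ := hom_lip hT hT2 e.toMonoidHom
  refine qi_of_cubic s.hSG s.hyG hT2 (A := C * (k * (B' + 2 * wA + 1))) (by positivity) fun x => ?_
  have h1 := hCl (e.symm x)
  have h2 := hl (e.symm x)
  have e1 : e.toMonoidHom (e.symm x) = x := e.apply_symm_apply x
  have e2 : (((e.symm x : H.subgroupOf (Q1.comap s.π)) : Q1.comap s.π) : G) = x := rfl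
  rw [e1] at h1
  rcases quad (e.symm x : H.subgroupOf (Q1.comap s.π)) with h3 | h3
  swap
  · exact absurd (e.symm x).2 h3
  rw [e2] at h3
  refine h1.trans ?_
  rw [mul_assoc]
  refine mul_le_mul_of_nonneg_left ?_ hC
  refine h2.trans ?_
  rw [mul_assoc]
  refine mul_le_mul_of_nonneg_left ?_ hk
  have hx : (0 : ℝ) ≤ wordLength s.SG (x : G) := by positivity
  set X : ℝ := (wordLength s.SG (x : G) : ℝ) with hX
  have h4 : (X + 1) ^ 2 ≤ (X + 1) ^ 3 := pow_le_pow_right₀ (by linarith) (by norm_num)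
  have h5 : 1 ≤ (X + 1) ^ 3 := one_le_pow₀ (by linarith)
  have h6 := mul_le_mul_of_nonneg_left h4 (by positivity : 0 ≤ B' + 2 * wA)
  have h7 : (wordLength S1 ((e.symm x : H.subgroupOf (Q1.comap s.π)) : Q1.comap s.π) : ℝ) ≤ (B' + 2 * wA) * (X + 1) ^ 2 := h3
  nlinarith

end Setup
end CG


namespace CG

theorem bilip_rev {X Y : Type*} {d : X → X → ℝ} {d' : Y → Y → ℝ} {δ l c : ℝ} (hl : 0 ≤ l) (hd : Geo d)
    (hd' : Geo d') (hy : Hyp d' δ) (f : X → Y) (h1 : ∀ x y, d' (f x) (f y) ≤ l * d x y)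
    (h2 : ∀ x y, d x y ≤ l * d' (f x) (f y)) :
    ∃ D : ℝ, 0 ≤ D ∧ ∀ x m y : X, Btw d' c (f x) (f m) (f y) → Btw d D x m y := by
  obtain ⟨D, hD, hM⟩ := morse (δ := δ) (k := l) (A := l) hy.nn hl hl
  refine ⟨|0 + l * (D + 2 * c)|, abs_nonneg _, fun x m y hb => Btw.mono ?_ (le_abs_self _)⟩
  obtain ⟨n, γ, e0, en, hγ⟩ := hd.geo x y
  have hqg : QG d' l l (fun i => f (γ i)) n := by
    constructor
    · intro i hi
      have := h1 (γ i) (γ (i + 1))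
      rw [hγ i (i + 1) (by simp) (by omega)] at this
      push_cast at this
      linarith
    · intro i j hij hj
      have := h2 (γ i) (γ j)
      rw [hγ i j hij hj] at this
      have h5 := hd'.nonneg (f (γ i)) (f (γ j))
      refine this.trans (mul_le_mul_of_nonneg_left ?_ hl)
      nlinarith [mul_nonneg h5 h5, mul_nonneg h5 (mul_nonneg h5 h5)]
  obtain ⟨-, h3, -⟩ := hM d' hd' hy (fun i => f (γ i)) n hqg
  simp only [e0, en] at h3
  obtain ⟨i, hi, h4⟩ := h3 c (f m) hb
  have h5 : Btw d 0 x (γ i) y := by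
    have a1 := hγ 0 i (by simp) hi
    have a2 := hγ i n hi le_rfl
    have a3 := hγ 0 n (by simp) le_rfl
    rw [e0] at a1 a3
    rw [en] at a2 a3
    unfold Btw
    rw [a1, a2, a3]
    linarith
  refine h5.mid hd.toMet ?_
  rw [hd.symm]
  exact (h2 _ _).trans (mul_le_mul_of_nonneg_left h4 hl)

theorem gp_transfer {X Y : Type*} {d : X → X → ℝ} {d' : Y → Y → ℝ} {δ l : ℝ} (hl : 0 ≤ l) (hd : Geo d)
    (hd' : Geo d') (hy : Hyp d' δ) (f : X → Y) (hf : Function.Surjective f) (h1 : ∀ x y, d' (f x) (f y) ≤ l * d x y)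
    (h2 : ∀ x y, d x y ≤ l * d' (f x) (f y)) (M : ℝ) :
    ∃ N : ℝ, ∀ o x y : X, N ≤ gprod d o x y → M ≤ gprod d' (f o) (f x) (f y) := by
  obtain ⟨D, hD, hB⟩ := bilip_rev (c := δ + 1) hl hd hd' hy f h1 h2
  refine ⟨l * (M + 2 * (δ + 1)) + D + 1, fun o x y h => ?_⟩
  obtain ⟨m', c1, c2, c3⟩ := cen_exists hd' hy (f o) (f x) (f y)
  obtain ⟨m, rfl⟩ := hf m'
  have h3 := hB x m y c3
  by_contra! hlt
  have h4 := h2 o m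
  have h5 : d' (f o) (f m) ≤ M + 2 * (δ + 1) := by
    unfold gprod at hlt
    unfold Btw at c1 c2
    linarith [hd'.tri (f x) (f m) (f y), hd'.symm (f x) (f o), hd'.symm (f y) (f o), hd'.symm (f x) (f m)]
  have h6 := mul_le_mul_of_nonneg_left h5 hl
  unfold gprod at h
  unfold Btw at h3
  linarith [hd.tri x m o, hd.tri y m o, hd.symm o m, hd.symm y m]

theorem gp_le_left {X : Type*} {d : X → X → ℝ} (hd : Met d) (o x y : X) : gprod d o x y ≤ d o x := by
  unfold gprod
  linarith [hd.tri y x o, hd.symm x o, hd.symm x y]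

theorem gp_pinch {X : Type*} {d : X → X → ℝ} {δ D : ℝ} (hd : Met d) (hy : Hyp d δ) {o x x' u u' : X}
    (h1 : D + 2 * δ + 1 ≤ gprod d o x u) (h2 : D + 2 * δ + 1 ≤ gprod d o x' u') (h3 : gprod d o u u' ≤ D) :
    gprod d o x x' ≤ D + 2 * δ + 1 := by
  by_contra! h
  have h4 := gprod_min hy o u x x' _ (by rw [gprod_symm hd]; exact h1) h.le
  have hδ := hy.nn
  have h5 := gprod_min hy o u x' u' _ h4 (by linarith)
  linarith

theorem gp_btw {X : Type*} {d : X → X → ℝ} (hd : Met d) {o x y : X} {c : ℝ} : gprod d o x y ≤ c ↔ Btw d c x o y := by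
  unfold gprod Btw
  rw [hd.symm o y]
  constructor <;> intro h <;> linarith

theorem gp_base {X : Type*} {d : X → X → ℝ} (hd : Met d) (o o' x y : X) : gprod d o x y - d o o' ≤ gprod d o' x y := by
  unfold gprod
  linarith [hd.tri x o' o, hd.tri y o' o, hd.symm o o']

theorem gp_move {X : Type*} {d : X → X → ℝ} (hd : Met d) (o x y y' : X) : gprod d o x y - d y y' ≤ gprod d o x y' := by
  unfold gprod
  linarith [hd.tri x y y', hd.tri y y' o]

theorem SF_symm {X : Type*} {d : X → X → ℝ} (hd : Met d) {a b : ℕ → X} (h : SeqFellow d a b) : SeqFellow d b a := by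
  intro o M
  obtain ⟨N, hN⟩ := h o M
  exact ⟨N, fun m n hm hn => by rw [gprod_symm hd]; exact hN n m hn hm⟩

theorem SF_trans {X : Type*} {d : X → X → ℝ} {δ : ℝ} (hy : Hyp d δ) {a b c : ℕ → X} (h : SeqFellow d a b)
    (h' : SeqFellow d b c) : SeqFellow d a c := by
  intro o M
  obtain ⟨N, hN⟩ := h o (M + δ)
  obtain ⟨N', hN'⟩ := h' o (M + δ)
  refine ⟨max N N', fun m n hm hn => ?_⟩
  have := gprod_min hy o (a m) (b (max N N')) (c n) (M + δ) (hN _ _ (le_of_max_le_left hm) (le_max_left _ _))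
    (hN' _ _ (le_max_right _ _) (le_of_max_le_right hn))
  linarith

namespace Setup
variable {K G Q : Type*} [Group K] [Group G] [Group Q] (s : Setup K G Q)

theorem bl {SK : Set K} (hSK : GenSet SK) : ∃ l : ℝ, 0 ≤ l ∧ (∀ x y, s.dK x y ≤ l * wordDist SK x y) ∧
    ∀ x y, wordDist SK x y ≤ l * s.dK x y := by
  obtain ⟨C, hC, h⟩ := hom_lip s.hSK hSK (MonoidHom.id K)
  obtain ⟨C', hC', h'⟩ := hom_lip hSK s.hSK (MonoidHom.id K)
  refine ⟨max C C', le_max_of_le_left hC, fun x y => ?_, fun x y => ?_⟩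
  · exact (h' (x⁻¹ * y)).trans (mul_le_mul_of_nonneg_right (le_max_right _ _) (by positivity))
  · exact (h (x⁻¹ * y)).trans (mul_le_mul_of_nonneg_right (le_max_left _ _) (by positivity))

theorem pow_inf {SK : Set K} (hSK : GenSet SK) {k : K} {C : ℝ} (hC : 0 ≤ C) (hk : ∀ n : ℕ, (n : ℝ) ≤ C * s.lK (k ^ n)) :
    SeqToInf (wordDist SK) (fun n => k ^ n) := by
  obtain ⟨l, hl, h1, h2⟩ := s.bl hSK
  obtain ⟨D, hD, hax, -⟩ := axis s.hSK s.hyK k hC hk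
  obtain ⟨D', hD', hB⟩ := bilip_rev (c := D) hl (wd_geo hSK) s.gK s.hyK id h1 h2
  have m := wd_met hSK
  intro o M
  set M' := M + D' + wordDist SK 1 o with hM'
  obtain ⟨N, hN⟩ := exists_nat_ge (C * (l * M'))
  have low : ∀ n, N ≤ n → M' ≤ wordDist SK 1 (k ^ n) := by
    intro n hn
    have a1 := hk n
    have a2 := h1 1 (k ^ n)
    have a3 : s.dK 1 (k ^ n) = s.lK (k ^ n) := wd_one _
    rw [a3] at a2
    by_contra! hlt
    have hn' : (N : ℝ) ≤ n := by exact_mod_cast hn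
    have a4 := mul_le_mul_of_nonneg_left a2 hC
    have a5 : C * (l * wordDist SK 1 (k ^ n)) ≤ C * (l * M') :=
      mul_le_mul_of_nonneg_left (mul_le_mul_of_nonneg_left hlt.le hl) hC
    have hz : C * (l * wordDist SK 1 (k ^ n)) = C * (l * M') := by linarith
    rcases eq_or_lt_of_le (mul_nonneg hC hl) with h0 | h0
    · -- all powers vanish
      have b1 := hk (n + 1)
      have b2 := h1 1 (k ^ (n + 1))
      have b3 : s.dK 1 (k ^ (n + 1)) = s.lK (k ^ (n + 1)) := wd_one _
      rw [b3] at b2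
      have b4 := mul_le_mul_of_nonneg_left b2 hC
      rw [← mul_assoc, ← h0] at b4
      push_cast at b1
      have : (0 : ℝ) ≤ n := by positivity
      linarith
    · rw [← mul_assoc, ← mul_assoc] at hz
      have := mul_left_cancel₀ h0.ne' hz
      linarith
  have main : ∀ m n, N ≤ m → m ≤ n → M ≤ gprod (wordDist SK) o (k ^ m) (k ^ n) := by
    intro a b ha hab
    have e1 := hax 0 a b (by simp) (by exact_mod_cast hab)
    have e2 := hB (k ^ (0 : ℤ)) (k ^ (a : ℤ)) (k ^ (b : ℤ)) e1
    simp only [zpow_zero, zpow_natCast] at e2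
    have e3 := low a ha
    have e4 := gp_base m 1 o (k ^ a) (k ^ b)
    refine le_trans ?_ e4
    unfold gprod
    unfold Btw at e2
    linarith [m.symm 1 (k ^ a), m.symm 1 (k ^ b)]
  refine ⟨N, fun a b ha hb => ?_⟩
  rcases le_total a b with h | h
  · exact main a b ha h
  · rw [gprod_symm m]; exact main b a hb h

theorem lim_key {SK : Set K} (hSK : GenSet SK) {A : Set K} (hlim : limitSetD (wordDist SK) A = Set.univ) {k : K} {C : ℝ}
    (hC : 0 ≤ C) (hk : ∀ n : ℕ, (n : ℝ) ≤ C * s.lK (k ^ n)) (M : ℝ) :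
    ∃ t ∈ A, ∃ N : ℕ, ∀ n, N ≤ n → M ≤ gprod s.dK 1 t (k ^ n) := by
  obtain ⟨l, hl, h1, h2⟩ := s.bl hSK
  have tr : ∀ a b : ℕ → K, SeqFellow (wordDist SK) a b → SeqFellow s.dK a b := by
    intro a b h o M
    obtain ⟨N, hN⟩ := gp_transfer hl (wd_geo hSK) s.gK s.hyK id Function.surjective_id h1 h2 M
    obtain ⟨n, hn⟩ := h o N
    exact ⟨n, fun i j hi hj => hN _ _ _ (hn i j hi hj)⟩
  have gen : ∀ a b : BdryPre (wordDist SK),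
      Relation.EqvGen (fun s t : BdryPre (wordDist SK) => SeqFellow (wordDist SK) s.1 t.1) a b →
      SeqFellow s.dK a.1 b.1 := by
    intro a b h
    induction h with
    | rel a b h => exact tr _ _ h
    | refl a => exact tr _ _ a.2
    | symm a b _ ih => exact SF_symm s.mK ih
    | trans a b c _ _ ih ih' => exact SF_trans s.hyK ih ih'
  have hs := s.pow_inf hSK hC hk
  have hmem : Bdry.mk ⟨_, hs⟩ ∈ limitSetD (wordDist SK) A := by rw [hlim]; trivial
  obtain ⟨t, htA, ht, hteq⟩ := hmem
  have hf := gen _ _ (Quot.eqvGen_exact hteq)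
  obtain ⟨N, hN⟩ := hf 1 M
  exact ⟨t N, htA N, N, fun n hn => hN N n le_rfl hn⟩

end Setup
end CG


namespace CG
namespace Setup
variable {K G Q : Type*} [Group K] [Group G] [Group Q] (s : Setup K G Q)

theorem fd_K (a b : K) : s.fd 1 (s.ι a) (s.ι b) = s.dK a b := by
  rw [s.fd_eq (s.πι a) (s.πι b), ← map_inv, ← map_mul, s.κι]; rfl

/-- existence of the Cannon–Thurston map, quantitatively -/
theorem ct (M : ℝ) : ∃ N : ℝ, ∀ y y' : K, N ≤ gprod s.dK 1 y y' → M ≤ gprod s.dG 1 (s.ι y) (s.ι y') := by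
  obtain ⟨D, hD, h⟩ := s.lad_qc (max M 0) (le_max_right _ _)
  obtain ⟨w, hw, hw'⟩ := s.ex_proper D
  refine ⟨s.δ + 1 + w + 1, fun y y' hN => ?_⟩
  by_contra! hlt
  have h1 := (gp_btw s.mG).1 (hlt.le.trans (le_max_left M 0))
  have h2 := h _ _ _ h1
  have h3 := s.P_vb (s.ι y) (s.ι y') 1
  rw [map_one, s.σ_self' (s.πι y), s.σ_self' (s.πι y')] at h3
  have h4 := hw' 1 1 _ (map_one _) h3.2.1 h2
  have h5 := h3.2.2.2.mid (s.fm 1) (((s.fm 1).symm _ _).trans_le h4)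
  have e1 := s.fd_K y 1
  have e2 := s.fd_K 1 y'
  rw [map_one] at e1 e2
  unfold Btw at h5
  rw [e1, e2, s.fd_K] at h5
  have h6 := (gp_btw s.mK).2 h5
  linarith

theorem far1 {SK : Set K} (hSK : GenSet SK) {A : Set K} (hlim : limitSetD (wordDist SK) A = Set.univ) {k : K} {C : ℝ}
    (hC : 0 ≤ C) (hk : ∀ n : ℕ, (n : ℝ) ≤ C * s.lK (k ^ n)) (p : G) (M : ℝ) :
    ∃ t ∈ A, ∃ N : ℕ, ∀ n, N ≤ n → M ≤ gprod s.dK 1 (s.conj p t) (k ^ n) := by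
  obtain ⟨l1, hl1, h1⟩ := hom_lip s.hSK s.hSK (s.conj p)
  obtain ⟨l2, hl2, h2⟩ := hom_lip s.hSK s.hSK (s.conj p⁻¹)
  have inv1 : ∀ x, s.conj p⁻¹ (s.conj p x) = x := s.conj_inv p
  have inv2 : ∀ x, s.conj p (s.conj p⁻¹ x) = x := fun x => by
    have := s.conj_inv p⁻¹ x
    rwa [inv_inv] at this
  obtain ⟨N, hN⟩ := gp_transfer (d := s.dK) (d' := s.dK) (l := max l1 l2) (le_max_of_le_left hl1) s.gK s.gK s.hyK (s.conj p)
    (fun x => ⟨_, inv2 x⟩) (fun x y => by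
      rw [s.dK_hom]
      exact (h1 _).trans (mul_le_mul_of_nonneg_right (le_max_left _ _) (by positivity))) (fun x y => by
      rw [s.dK_hom]
      have := h2 (s.conj p (x⁻¹ * y))
      rw [inv1] at this
      exact this.trans (mul_le_mul_of_nonneg_right (le_max_right _ _) (by positivity))) M
  have hk' : ∀ n : ℕ, (n : ℝ) ≤ (C * l1) * s.lK (s.conj p⁻¹ k ^ n) := by
    intro n
    have a1 := h1 (s.conj p⁻¹ k ^ n)
    rw [map_pow, inv2] at a1
    have := mul_le_mul_of_nonneg_left a1 hC
    have := hk n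
    unfold lK at *
    linarith
  obtain ⟨t, htA, n0, hn0⟩ := s.lim_key hSK hlim (by positivity) hk' N
  refine ⟨t, htA, n0, fun n hn => ?_⟩
  have := hN _ _ _ (hn0 n hn)
  rwa [map_one, map_pow, inv2] at this

theorem far2 {SK : Set K} (hSK : GenSet SK) {A : Set K} (hlim : limitSetD (wordDist SK) A = Set.univ) :
    ∃ R, 0 ≤ R ∧ ∀ (p : G) (e : ℝ), ∃ t ∈ A, ∃ t' ∈ A,
      Btw s.dK R (s.conj p t) 1 (s.conj p t') ∧ Btw s.dG R (s.ι (s.conj p t)) 1 (s.ι (s.conj p t')) ∧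
      e ≤ s.dK 1 (s.conj p t) ∧ e ≤ s.dK 1 (s.conj p t') ∧ e ≤ s.dG 1 (s.ι (s.conj p t)) ∧
      e ≤ s.dG 1 (s.ι (s.conj p t')) := by
  obtain ⟨k, C, hC, hkG, hkK⟩ := s.ex_lox
  obtain ⟨DK, hDK, axK, -⟩ := axis s.hSK s.hyK k hC hkK
  obtain ⟨DG, hDG, axG, -⟩ := axis s.hSG s.hyG (s.ι k) (C := 1) zero_le_one (by simpa using hkG)
  have hkK' : ∀ n : ℕ, (n : ℝ) ≤ C * s.lK (k⁻¹ ^ n) := by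
    intro n
    rw [inv_pow, lK, wl_inv s.hSK]
    exact hkK n
  have hδ := s.hyK.nn
  set R := max DK DG + 2 * s.δ + 1 with hR
  have hm : 0 ≤ max DK DG := le_max_of_le_left hDK
  refine ⟨R, by positivity, fun p e => ?_⟩
  obtain ⟨N, hN⟩ := s.ct (max R e)
  obtain ⟨t, htA, n1, h1⟩ := s.far1 hSK hlim hC hkK p (max (max R e) N)
  obtain ⟨t', htA', n2, h2⟩ := s.far1 hSK hlim hC hkK' p (max (max R e) N)
  set n := max n1 n2
  have a1 := h1 n (le_max_left _ _)
  have a2 := h2 n (le_max_right _ _)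
  have b1 := hN _ _ (le_trans (le_max_right _ _) a1)
  have b2 := hN _ _ (le_trans (le_max_right _ _) a2)
  have a1' := le_trans (le_max_left _ _) a1
  have a2' := le_trans (le_max_left _ _) a2
  have eK : gprod s.dK 1 (k ^ n) (k⁻¹ ^ n) ≤ max DK DG := by
    rw [gp_btw s.mK]
    have := axK (-(n : ℤ)) 0 n (by simp) (by simp)
    simp only [zpow_neg, zpow_zero, zpow_natCast] at this
    rw [inv_pow]
    exact (this.symm s.mK).mono (le_max_left _ _)
  have eG : gprod s.dG 1 (s.ι (k ^ n)) (s.ι (k⁻¹ ^ n)) ≤ max DK DG := by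
    rw [gp_btw s.mG]
    have := axG (-(n : ℤ)) 0 n (by simp) (by simp)
    simp only [zpow_neg, zpow_zero, zpow_natCast] at this
    rw [inv_pow, map_inv, map_pow]
    exact (this.symm s.mG).mono (le_max_right _ _)
  refine ⟨t, htA, t', htA', ?_, ?_, ?_, ?_, ?_, ?_⟩
  · exact (gp_btw s.mK).1 (gp_pinch s.mK s.hyK (le_trans (le_max_left _ _) a1') (le_trans (le_max_left _ _) a2') eK)
  · exact (gp_btw s.mG).1 (gp_pinch s.mG s.hyG (le_trans (le_max_left _ _) b1) (le_trans (le_max_left _ _) b2) eG)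
  · exact (le_trans (le_max_right _ _) a1').trans (gp_le_left s.mK _ _ _)
  · exact (le_trans (le_max_right _ _) a2').trans (gp_le_left s.mK _ _ _)
  · exact (le_trans (le_max_right _ _) b1).trans (gp_le_left s.mG _ _ _)
  · exact (le_trans (le_max_right _ _) b2).trans (gp_le_left s.mG _ _ _)

theorem near_all {Q1 : Subgroup Q} {E0 : ℝ} (hE0 : 0 ≤ E0) (hg : ∀ v, ∃ q, s.Pr Q1 E0 v q) {H : Subgroup G}
    (hle : H ≤ Q1.comap s.π) (hq : QIEmbSubgroup (H.subgroupOf (Q1.comap s.π)))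
    {SK : Set K} (hSK : GenSet SK) {A : Set K} (hlim : limitSetD (wordDist SK) A = Set.univ) (hA : ∀ t ∈ A, s.ι t ∈ H) :
    ∃ D, ∀ p, s.π p ∈ Q1 → ∃ h ∈ H, s.dG p h ≤ D := by
  obtain ⟨R, hR, hfar⟩ := s.far2 hSK hlim
  have hδ := s.hyK.nn
  set R' := R + 2 * s.δ with hR'
  have hR'n : 0 ≤ R' := by positivity
  obtain ⟨C', hC', hth⟩ := s.through s.Cσ R' s.Cσ_nn hR'n
  set B := max (max C' (max R' (s.δ + 1))) R' with hB
  have hBn : 0 ≤ B := le_max_of_le_right hR'n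
  obtain ⟨D, hD, hn⟩ := s.nearH0 hE0 hg hle hq B hBn
  refine ⟨D, fun p hp => ?_⟩
  set f := p⁻¹ * s.σ0 (s.π p) with hf
  have hfπ : s.π f = 1 := by rw [hf, map_mul, s.σ0_sec.sec, map_inv, inv_mul_cancel]
  set e1 := s.lK (s.κ f) with he1
  set e2 := s.lG p with he2
  obtain ⟨t, ht, t', ht', b1, b2, b3, b4, b5, b6⟩ := hfar p (R + max e1 e2 + 2 * s.δ + 1)
  have l1 := le_max_left e1 e2
  have l2 := le_max_right e1 e2
  have σe : ∀ t, s.σ (s.ι t) (s.π p) = p * s.ι (s.conj p t * s.κ f) := by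
    intro t
    unfold σ
    rw [map_mul, s.ι_conj, s.ικ hfπ, s.πι, hf, inv_one, one_mul]
    group
  have mv : ∀ t, s.dK (s.conj p t) (s.conj p t * s.κ f) ≤ e1 := fun t => (wd_right _ _).le
  have c1 := pertB s.mK s.hyK (mv t) (mv t') b1 (by linarith) (by linarith)
  have vb : s.VB (s.π p) R' (s.σ (s.ι t) (s.π p)) p (s.σ (s.ι t') (s.π p)) := by
    refine ⟨s.π_σ _ _, rfl, s.π_σ _ _, ?_⟩
    have k1 : ∀ a b : K, s.fd (s.π p) (p * s.ι a) (p * s.ι b) = s.dK a b := by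
      intro a b
      rw [s.fd_eq (by simp [s.πι]) (by simp [s.πι])]
      have : (p * s.ι a)⁻¹ * (p * s.ι b) = s.ι (a⁻¹ * b) := by rw [map_mul, map_inv]; group
      rw [this, s.κι]; rfl
    have k2 := k1 (s.conj p t * s.κ f) 1
    have k3 := k1 1 (s.conj p t' * s.κ f)
    rw [map_one, mul_one] at k2 k3
    rw [σe, σe]
    unfold Btw
    rw [k2, k3, k1]
    exact c1
  have mvG : ∀ t, s.dG (s.ι (s.conj p t)) (p⁻¹ * s.ι t) ≤ e2 := by
    intro t
    rw [s.ι_conj, s.mG.symm]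
    exact (wd_right _ _).le
  have c2 := pertB s.mG s.hyG (mvG t) (mvG t') b2 (by linarith) (by linarith)
  have bG : Btw s.dG R' (s.ι t) p (s.ι t') := by
    have := (wd_btw (S := s.SG) p).2 c2
    rwa [mul_inv_cancel_left, mul_inv_cancel_left, mul_one] at this
  obtain ⟨τ, τ1, τ2, τ3⟩ := hth _ _ p (s.σ_sec (s.ι t)) (s.σ_sec (s.ι t')) vb
  refine hn (s.ι t) (hA t ht) (s.ι t') (hA t' ht') p ⟨τ, s.π p, ⟨τ1.mono ?_, fun q => (τ3 q).mono ?_⟩, τ2, Pr.self hBn hp, ?_⟩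
  · exact le_max_of_le_left (le_max_left _ _)
  · exact le_max_of_le_left (le_max_right _ _)
  · rw [τ2]
    exact bG.mono (le_max_right _ _)

theorem fin_index {Q1 : Subgroup Q} {H : Subgroup G} (hle : H ≤ Q1.comap s.π) {D : ℝ}
    (h : ∀ p, s.π p ∈ Q1 → ∃ h ∈ H, s.dG p h ≤ D) : (H.subgroupOf (Q1.comap s.π)).index ≠ 0 := by
  have hf : {x : Q1.comap s.π | s.lG (x : G) ≤ D}.Finite :=
    (wd_ball_finite s.hSG D).preimage (f := fun x : Q1.comap s.π => (x : G)) (Subtype.val_injective.injOn)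
  have : Finite {x : Q1.comap s.π | s.lG (x : G) ≤ D} := hf
  have hfin : Finite ((Q1.comap s.π) ⧸ (H.subgroupOf (Q1.comap s.π))) := by
    refine Finite.of_surjective
      (fun x : {x : Q1.comap s.π | s.lG (x : G) ≤ D} => (QuotientGroup.mk (x : Q1.comap s.π) : _ ⧸ (H.subgroupOf (Q1.comap s.π)))) ?_
    intro z
    induction z using QuotientGroup.induction_on with
    | H z =>
      obtain ⟨h', hh, hd⟩ := h ((z⁻¹ : Q1.comap s.π) : G) (z⁻¹).2
      let hb : Q1.comap s.π := ⟨h', hle hh⟩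
      refine ⟨⟨z * hb, ?_⟩, ?_⟩
      · have : s.dG ((z⁻¹ : Q1.comap s.π) : G) h' = s.lG ((z * hb : Q1.comap s.π) : G) := by
          unfold dG wordDist lG
          simp [hb]
        rw [this] at hd
        exact hd
      · show (QuotientGroup.mk (z * hb) : _ ⧸ (H.subgroupOf (Q1.comap s.π))) = QuotientGroup.mk z
        rw [QuotientGroup.mk_mul_of_mem]
        exact hh
  exact Subgroup.index_ne_zero_of_finite

theorem lim_univ {SK : Set K} (hSK : GenSet SK) (L : Subgroup K) (hL : L.index ≠ 0) :
    limitSetD (wordDist SK) (L : Set K) = Set.univ := by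
  have hfi : L.FiniteIndex := ⟨hL⟩
  have hfin : Finite (K ⧸ L) := inferInstance
  have m := wd_met hSK
  obtain ⟨w, hw⟩ := (Set.finite_range fun x : K ⧸ L => (wordLength SK (Quotient.out x) : ℝ)).bddAbove
  refine Set.eq_univ_of_forall fun ξ => ?_
  induction ξ using Quot.ind with
  | mk a =>
    let t : ℕ → K := fun n => a.1 n * Quotient.out (QuotientGroup.mk (a.1 n)⁻¹ : K ⧸ L)
    have hd : ∀ n, wordDist SK (a.1 n) (t n) ≤ w := by
      intro n
      show wordDist SK (a.1 n) (a.1 n * _) ≤ w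
      rw [wd_right]
      exact hw ⟨_, rfl⟩
    have hfel : ∀ o M, ∃ N : ℕ, ∀ i j : ℕ, N ≤ i → N ≤ j → M ≤ gprod (wordDist SK) o (t i) (a.1 j) := by
      intro o M
      obtain ⟨N, hN⟩ := a.2 o (M + w)
      refine ⟨N, fun i j hi hj => ?_⟩
      have h1 := hN j i hj hi
      have h2 := gp_move m o (a.1 j) (a.1 i) (t i)
      rw [gprod_symm m]
      linarith [hd i]
    have hinf : SeqToInf (wordDist SK) t := by
      intro o M
      obtain ⟨N, hN⟩ := hfel o (M + w)
      refine ⟨N, fun i j hi hj => ?_⟩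
      have h1 := hN i j hi hj
      have h2 := gp_move m o (t i) (a.1 j) (t j)
      linarith [hd j]
    refine ⟨t, fun n => ?_, hinf, Quot.sound hfel⟩
    have h1 : (QuotientGroup.mk (Quotient.out (QuotientGroup.mk (a.1 n)⁻¹ : K ⧸ L)) : K ⧸ L) = (QuotientGroup.mk (a.1 n)⁻¹ : K ⧸ L) := Quotient.out_eq _
    have h2 := QuotientGroup.eq.1 h1.symm
    rw [inv_inv] at h2
    exact h2

end Setup
end CG


/-- Theorem 4.1. Let `1 → K → G → Q → 1` be an exact sequence of
infinite hyperbolic groups, `Q₁ < Q` a qi embedded subgroup, `G₁ = π⁻¹(Q₁)`. If `H`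
is a qi embedded subgroup of `G₁` of infinite index which is not qi embedded in `G`,
then there is a finitely generated infinite subgroup `K₁` of `K ∩ H` such that
`Λ_K(K₁) ≠ ∂K`, `[K : K₁] = ∞`, and `K₁` is distorted in `G`. -/
theorem stmt_13 {K G Q : Type*} [Group K] [Group G] [Group Q]
    [Infinite K] [Infinite G] [Infinite Q]
    (hK : IsHypGroup K) (hG : IsHypGroup G) (hQ : IsHypGroup Q)
    (ι : K →* G) (π : G →* Q)
    (hι : Function.Injective ι) (hπ : Function.Surjective π)
    (hexact : ι.range = π.ker)
    (Q₁ : Subgroup Q) (hQ₁ : QIEmbSubgroup Q₁)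
    (H : Subgroup G) (hHle : H ≤ Q₁.comap π)
    (hHqiG₁ : QIEmbSubgroup (H.subgroupOf (Q₁.comap π)))
    (hHinf : (H.subgroupOf (Q₁.comap π)).index = 0)
    (hHnotqi : ¬ QIEmbSubgroup H) :
    ∃ K₁ : Subgroup G, K₁ ≤ ι.range ⊓ H ∧ K₁.FG ∧ (K₁ : Set G).Infinite ∧
      -- Λ_K(K₁) ≠ ∂K (for any word metric on K):
      (∀ SK : Set K, GenSet SK →
        limitSetD (wordDist SK) { k : K | ι k ∈ K₁ } ≠ Set.univ) ∧
      -- [K : K₁] = ∞: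
      (K₁.comap ι).index = 0 ∧
      -- K₁ is distorted in G:
      ¬ QIEmbSubgroup K₁ := by
  obtain ⟨SK, hSK, δK, hδK, hyK⟩ := hK
  obtain ⟨SG, hSG, δG, hδG, hyG⟩ := hG
  obtain ⟨SQ, hSQ, δQ, hδQ, hyQ⟩ := hQ
  let s : CG.Setup K G Q :=
    { SK := SK, SG := SG, SQ := SQ, hSK := hSK, hSG := hSG, hSQ := hSQ,
      δ := max δK (max δG δQ),
      hyK := (CG.hyp_of hδK hyK).mono (le_max_left _ _),
      hyG := (CG.hyp_of hδG hyG).mono (le_max_of_le_right (le_max_left _ _)),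
      hyQ := (CG.hyp_of hδQ hyQ).mono (le_max_of_le_right (le_max_right _ _)),
      ι := ι, π := π, hι := hι, hπ := hπ, hex := hexact, infK := inferInstance, infQ := inferInstance }
  obtain ⟨E0, hE0, hg⟩ := s.gates hQ₁
  obtain ⟨D, hD⟩ := s.part1 hE0 hg hHle hHqiG₁ hHnotqi
  have hlim : ∀ SK : Set K, GenSet SK →
      limitSetD (wordDist SK) { k : K | ι k ∈ s.K1 H D } ≠ Set.univ := by
    intro SK' hSK' hl
    obtain ⟨D', h'⟩ := s.near_all hE0 hg hHle hHqiG₁ hSK' hl fun t ht => (s.K1_le H D ht).2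
    exact s.fin_index hHle h' hHinf
  refine ⟨s.K1 H D, s.K1_le H D, s.K1_fg H D, ?_, hlim, ?_, hD⟩
  · intro hf
    exact hD (CG.qi_of_finite hSG hf)
  · by_contra hne
    exact hlim SK hSK (CG.Setup.lim_univ hSK _ hne)
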